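/- arXiv:2401.10427 — 2 statements merged into one kernel-verified Lean document; each statement's English description precedes it below -/
import Mathlib

section
/- The natural densities δ_k of the level sets L_k = {n ∈ ℕ : ω*(n) = k} satisfy Σ_{k ≥ 1} δ_k = 1. -/
open Filter Real

/-- `ω*(n)`: the number of divisors `d` of `n` such that `d + 1` is prime. -/
def omegaStar (n : ℕ) : ℕ := (n.divisors.filter (fun d => Nat.Prime (d + 1))).card


lemma om_euler_le (f : ℕ →* ℝ) (h0 : ∀ n, 0 ≤ f n) (h1 : ∀ p : ℕ, p.Prime → f p < 1) (N : ℕ) :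
    ∑ n ∈ Finset.Ico 1 N, f n ≤ ∏ p ∈ N.primesBelow, (1 - f p)⁻¹ := by
  have h := EulerProduct.summable_and_hasSum_smoothNumbers_prod_primesBelow_geometric (f := f)
    (fun {p} hp => by rw [Real.norm_of_nonneg (h0 p)]; exact h1 p hp) N
  have h2 : HasSum (Set.indicator (N.smoothNumbers) f) (∏ p ∈ N.primesBelow, (1 - f p)⁻¹) :=
    hasSum_subtype_iff_indicator.mp h.2
  have h3 := sum_le_hasSum (Finset.Ico 1 N)
    (fun i _ => Set.indicator_nonneg (fun x _ => h0 x) i) h2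
  refine le_trans (le_of_eq ?_) h3
  apply Finset.sum_congr rfl
  intro n hn
  rw [Finset.mem_Ico] at hn
  rw [Set.indicator_of_mem (Nat.mem_smoothNumbers_of_lt (by omega) hn.2)]

lemma om_euler_le_tsum (f : ℕ →* ℝ) (h0 : ∀ n, 0 ≤ f n) (hs : Summable f) (N : ℕ) :
    ∏ p ∈ N.primesBelow, (1 - f p)⁻¹ ≤ ∑' n, f n := by
  rw [EulerProduct.prod_primesBelow_geometric_eq_tsum_smoothNumbers hs]
  exact hs.tsum_subtype_le _ _ h0

noncomputable def omV (N : ℕ) : ℝ := ∏ p ∈ N.primesBelow, (1 - (1 : ℝ) / p)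

noncomputable def invHom : ℕ →* ℝ where
  toFun n := (n : ℝ)⁻¹
  map_one' := by simp
  map_mul' a b := by simp [mul_comm]

lemma omV_factor {p : ℕ} (hp : p.Prime) : (1:ℝ)/2 ≤ 1 - (1 : ℝ) / p ∧ 1 - (1 : ℝ) / p ≤ 1 := by
  have : (2:ℝ) ≤ p := by exact_mod_cast hp.two_le
  have h : (1:ℝ)/p ≤ 1/2 := one_div_le_one_div_of_le (by norm_num) this
  constructor
  · linarith
  · have : (0:ℝ) ≤ 1/p := by positivity
    linarith

lemma omV_pos (N : ℕ) : 0 < omV N := by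
  apply Finset.prod_pos
  intro p hp
  have := omV_factor (Nat.prime_of_mem_primesBelow hp)
  linarith [this.1]

lemma log_le_inv_omV (N : ℕ) (hN : 1 ≤ N) : Real.log N ≤ (omV N)⁻¹ := by
  have h := om_euler_le invHom (fun n => by simp [invHom]) (fun p hp => by
    have : (1:ℝ) < p := by exact_mod_cast hp.one_lt
    simpa [invHom] using inv_lt_one_of_one_lt₀ this) N
  have h2 : (∏ p ∈ N.primesBelow, (1 - invHom p)⁻¹) = (omV N)⁻¹ := by
    rw [omV, ← Finset.prod_inv_distrib]
    simp [invHom]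
  rw [h2] at h
  refine le_trans ?_ h
  obtain ⟨m, rfl⟩ : ∃ m, N = m + 1 := ⟨N - 1, by omega⟩
  refine (log_add_one_le_harmonic m).trans (le_of_eq ?_)
  rw [harmonic_eq_sum_Icc]
  push_cast
  apply Finset.sum_congr _ (fun _ _ => rfl)
  ext; simp

lemma prod_pow_dvd_factorial (n : ℕ) :
    ∏ p ∈ (n+1).primesBelow, p ^ (n / p) ∣ n.factorial := by
  apply Finset.prod_dvd_of_isRelPrime
  · intro p hp q hq hpq
    have hp' := Nat.prime_of_mem_primesBelow hp
    have hq' := Nat.prime_of_mem_primesBelow hq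
    exact (Nat.coprime_iff_isRelPrime).mp
      (Nat.Coprime.pow _ _ ((Nat.coprime_primes hp' hq').mpr hpq))
  · intro p hp
    have hp' := Nat.prime_of_mem_primesBelow hp
    have hlt := Nat.lt_of_mem_primesBelow hp
    rw [hp'.pow_dvd_factorial_iff (b := Nat.log p n + 2) (by omega)]
    have : n / p = n / p ^ 1 := by simp
    rw [this]
    exact Finset.single_le_sum (f := fun i => n / p ^ i) (fun _ _ => Nat.zero_le _) (by simp)

lemma sum_log_div_le (n : ℕ) (hn : 1 ≤ n) :
    ∑ p ∈ (n+1).primesBelow, Real.log p / p ≤ Real.log n + Real.log 4 := by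
  have hn' : (0:ℝ) < n := by exact_mod_cast hn
  have h1 : (∏ p ∈ (n+1).primesBelow, p ^ (n / p)) ≤ n ^ n :=
    (Nat.le_of_dvd (Nat.factorial_pos n) (prod_pow_dvd_factorial n)).trans (Nat.factorial_le_pow n)
  have h2 : ∑ p ∈ (n+1).primesBelow, ((n / p : ℕ) : ℝ) * Real.log p ≤ n * Real.log n := by
    have h3 : ((∏ p ∈ (n+1).primesBelow, p ^ (n / p) : ℕ) : ℝ) ≤ (n:ℝ)^n := by exact_mod_cast h1
    have h4 := Real.log_le_log (by
      exact_mod_cast Finset.prod_pos (fun p hp =>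
        pow_pos (Nat.prime_of_mem_primesBelow hp).pos _)) h3
    rw [Real.log_pow] at h4
    push_cast at h4
    rw [Real.log_prod (fun p hp => by
      have := (Nat.prime_of_mem_primesBelow hp).pos
      positivity)] at h4
    simpa [Real.log_pow] using h4
  have h5 : ∑ p ∈ (n+1).primesBelow, Real.log p ≤ Real.log 4 * n := by
    have h := Chebyshev.theta_le_log4_mul_x hn'.le
    rw [Chebyshev.theta_eq_sum_primesLE_log] at h
    exact h
  have h6 : ∀ p ∈ (n+1).primesBelow, (n:ℝ) * (Real.log p / p) ≤
      ((n / p : ℕ) : ℝ) * Real.log p + Real.log p := by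
    intro p hp
    have hp' := Nat.prime_of_mem_primesBelow hp
    have hl : 0 ≤ Real.log p := Real.log_natCast_nonneg p
    have : (n:ℝ)/p ≤ ((n / p : ℕ) : ℝ) + 1 := by
      have := Nat.lt_floor_add_one ((n:ℝ)/p)
      rw [Nat.floor_div_eq_div] at this
      exact this.le
    calc (n:ℝ) * (Real.log p / p) = (n:ℝ)/p * Real.log p := by ring
      _ ≤ (((n / p : ℕ) : ℝ) + 1) * Real.log p := by gcongr
      _ = _ := by ring
  have h7 := Finset.sum_le_sum h6
  rw [← Finset.mul_sum, Finset.sum_add_distrib] at h7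
  have : (n:ℝ) * ∑ p ∈ (n+1).primesBelow, Real.log p / p ≤ n * (Real.log n + Real.log 4) := by
    linarith
  exact le_of_mul_le_mul_left this hn'

noncomputable def rpowHom (s : ℝ) : ℕ →* ℝ where
  toFun n := (n : ℝ) ^ (-s)
  map_one' := by simp
  map_mul' a b := by
    push_cast
    exact Real.mul_rpow (by positivity) (by positivity)

lemma tsum_rpow_le (σ : ℝ) (hσ : 0 < σ) :
    Summable (fun n : ℕ => (n:ℝ) ^ (-(1+σ))) ∧ ∑' n : ℕ, (n:ℝ) ^ (-(1+σ)) ≤ 1 + 1 / σ := by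
  have hs : Summable (fun n : ℕ => (n:ℝ) ^ (-(1+σ))) := by
    rw [Real.summable_nat_rpow]; linarith
  refine ⟨hs, ?_⟩
  have anti : AntitoneOn (fun t : ℝ => t ^ (-(1+σ))) (Set.Ici ((1:ℕ) : ℝ)) := by
    intro a ha b hb hab
    simp only [Nat.cast_one, Set.mem_Ici] at ha hb
    exact Real.rpow_le_rpow_of_nonpos (by linarith) hab (by linarith)
  have hintg : MeasureTheory.IntegrableOn (fun t : ℝ => t ^ (-(1+σ))) (Set.Ioi ((1:ℕ):ℝ)) :=
    integrableOn_Ioi_rpow_of_lt (by linarith) (by norm_num)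
  have h := AntitoneOn.tsum_comp_add_le_integral 1 anti hintg (fun t ht => by
    have : (0:ℝ) ≤ t := by
      have : (1:ℝ) < t := by simpa using ht
      linarith
    positivity)
  rw [integral_Ioi_rpow_of_lt (by linarith) (by norm_num)] at h
  rw [hs.tsum_eq_zero_add, ((summable_nat_add_iff 1).mpr hs).tsum_eq_zero_add]
  have e1 : ((0:ℕ):ℝ) ^ (-(1+σ)) = 0 := by
    rw [Nat.cast_zero, Real.zero_rpow (by linarith)]
  have e2 : -((1:ℕ):ℝ) ^ (-(1+σ) + 1) / (-(1+σ)+1) = 1/σ := by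
    simp [neg_div]
  rw [e2] at h
  rw [e1]
  have e3 : ((0 + 1 : ℕ):ℝ) ^ (-(1+σ)) = 1 := by simp
  rw [e3, zero_add]
  gcongr

lemma inv_omV_le : ∃ C : ℝ, 0 < C ∧ ∀ N : ℕ, 2 ≤ N → (omV N)⁻¹ ≤ C * Real.log N := by
  refine ⟨3 * Real.exp 8, by positivity, ?_⟩
  intro N hN
  have hN' : (2:ℝ) ≤ N := by exact_mod_cast hN
  have hl2 : 0.69 < Real.log 2 := by linarith [Real.log_two_gt_d9]
  have hlN : Real.log 2 ≤ Real.log N := Real.log_le_log (by norm_num) hN'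
  have hlpos : 0 < Real.log N := by linarith
  set σ := 1 / Real.log N with hσ
  have hσpos : 0 < σ := by positivity
  obtain ⟨hs, ht⟩ := tsum_rpow_le σ hσpos
  have h1 : ∏ p ∈ N.primesBelow, (1 - (p:ℝ) ^ (-(1+σ)))⁻¹ ≤ 1 + 1 / σ :=
    (om_euler_le_tsum (rpowHom (1+σ)) (fun n => by simp only [rpowHom, MonoidHom.coe_mk, OneHom.coe_mk]; positivity) hs N).trans ht
  have key : ∀ p ∈ N.primesBelow, (1 - (1:ℝ)/p)⁻¹ ≤
      (1 - (p:ℝ) ^ (-(1+σ)))⁻¹ * Real.exp (2 * σ * (Real.log p / p)) := by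
    intro p hp
    have hp' := Nat.prime_of_mem_primesBelow hp
    have hf := omV_factor hp'
    have hp2 : (2:ℝ) ≤ p := by exact_mod_cast hp'.two_le
    have hp0 : (0:ℝ) < p := by linarith
    have e : (p:ℝ) ^ (-(1+σ)) = 1/p * Real.exp (-(σ * Real.log p)) := by
      rw [neg_add, Real.rpow_add hp0, Real.rpow_neg_one, Real.rpow_def_of_pos hp0, one_div]
      ring_nf
    have hlp : 0 ≤ Real.log p := Real.log_natCast_nonneg p
    set a := (1:ℝ)/p with ha
    have hapos : 0 < a := by positivity
    have hx : 1 - σ * Real.log p ≤ Real.exp (-(σ * Real.log p)) := by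
      have := Real.add_one_le_exp (-(σ * Real.log p)); linarith
    have hx1 : Real.exp (-(σ * Real.log p)) ≤ 1 := by
      apply Real.exp_le_one_iff.mpr
      have : 0 ≤ σ * Real.log p := by positivity
      linarith
    set E := Real.exp (-(σ * Real.log p)) with hE
    have hden : 0 < 1 - a * E := by nlinarith
    rw [e]
    have h2 : 1 + 2 * σ * (Real.log p / p) ≤ Real.exp (2 * σ * (Real.log p / p)) := by
      have := Real.add_one_le_exp (2 * σ * (Real.log p / p)); linarith
    have h3 : 1 - a * E ≤ (1 - a) * (1 + 2 * σ * (Real.log p / p)) := by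
      have e4 : Real.log p / p = a * Real.log p := by rw [ha]; ring
      rw [e4]
      have : 0 ≤ a * (σ * Real.log p) := by positivity
      nlinarith
    rw [inv_le_iff_one_le_mul₀ (by linarith), ← div_eq_inv_mul, div_mul_eq_mul_div, le_div_iff₀ hden]
    have h4 := mul_le_mul_of_nonneg_left h2 (by linarith : 0 ≤ 1 - a)
    linarith
  have h2 : (omV N)⁻¹ ≤ (∏ p ∈ N.primesBelow, (1 - (p:ℝ) ^ (-(1+σ)))⁻¹) *
      Real.exp (2 * σ * ∑ p ∈ N.primesBelow, (Real.log p / p)) := by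
    rw [omV, ← Finset.prod_inv_distrib, Finset.mul_sum, Real.exp_sum, ← Finset.prod_mul_distrib]
    apply Finset.prod_le_prod
    · intro p hp
      have hf := omV_factor (Nat.prime_of_mem_primesBelow hp)
      exact inv_nonneg.mpr (by linarith)
    · exact key
  have h3 : ∑ p ∈ N.primesBelow, (Real.log p / p) ≤ Real.log N + Real.log 4 := by
    refine le_trans ?_ (sum_log_div_le N (by omega))
    apply Finset.sum_le_sum_of_subset_of_nonneg
    · intro p hp
      simp only [Nat.mem_primesBelow] at hp ⊢
      exact ⟨by omega, hp.2⟩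
    · intro p _ _
      have : 0 ≤ Real.log p := Real.log_natCast_nonneg p
      positivity
  have h4 : 2 * σ * ∑ p ∈ N.primesBelow, (Real.log p / p) ≤ 8 := by
    have l4 : Real.log 4 = 2 * Real.log 2 := by
      rw [show (4:ℝ) = 2^2 by norm_num, Real.log_pow]; norm_num
    calc 2 * σ * ∑ p ∈ N.primesBelow, (Real.log p / p) ≤ 2 * σ * (4 * Real.log N) := by
          gcongr
          linarith
      _ = 8 := by rw [hσ]; field_simp; norm_num
  calc (omV N)⁻¹ ≤ _ := h2
    _ ≤ (1 + 1/σ) * Real.exp 8 := by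
        gcongr
    _ ≤ (3 * Real.log N) * Real.exp 8 := by
        gcongr
        rw [hσ, one_div_one_div]
        linarith
    _ = _ := by ring

/-- number of prime factors below `w`, with multiplicity -/
noncomputable def Om (w n : ℕ) : ℕ := ∑ p ∈ w.primesBelow, n.factorization p

lemma Om_mul (w : ℕ) {a b : ℕ} (ha : a ≠ 0) (hb : b ≠ 0) : Om w (a * b) = Om w a + Om w b := by
  simp [Om, Nat.factorization_mul ha hb, Finset.sum_add_distrib]

noncomputable def omHom (v : ℝ) (w : ℕ) : ℕ →* ℝ where
  toFun n := v ^ (Om w n) / n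
  map_one' := by simp [Om]
  map_mul' a b := by
    rcases eq_or_ne a 0 with rfl | ha
    · simp
    rcases eq_or_ne b 0 with rfl | hb
    · simp
    rw [Om_mul w ha hb, pow_add]
    push_cast
    rw [mul_div_mul_comm]

lemma omHom_apply (v : ℝ) (w n : ℕ) : omHom v w n = v ^ (Om w n) / n := rfl

lemma Om_prime (w : ℕ) {p : ℕ} (hp : p.Prime) : Om w p = if p < w then 1 else 0 := by
  rw [Om, Finset.sum_congr rfl (fun q _ => by
    rw [hp.factorization, Finsupp.single_apply])]
  rw [Finset.sum_ite_eq]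
  simp [Nat.mem_primesBelow, hp]

lemma omHom_prime (v : ℝ) (w : ℕ) {p : ℕ} (hp : p.Prime) :
    omHom v w p = if p < w then v / p else 1 / p := by
  rw [omHom_apply, Om_prime w hp]
  split_ifs <;> simp

lemma moment_le (v : ℝ) (hv : 0 < v) (hv' : v ≤ 5/4) (w x : ℕ) (hwx : w ≤ x) :
    ∑ n ∈ Finset.Ico 1 x, v ^ (Om w n) / n ≤
      (omV x)⁻¹ * ∏ p ∈ w.primesBelow, ((1 - (1:ℝ)/p) / (1 - v / p)) := by
  have h := om_euler_le (omHom v w) (fun n => by rw [omHom_apply]; positivity) (fun p hp => by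
    have : (2:ℝ) ≤ p := by exact_mod_cast hp.two_le
    rw [omHom_prime v w hp]
    split_ifs
    · rw [div_lt_one (by linarith)]; linarith
    · rw [div_lt_one (by linarith)]; linarith) x
  refine h.trans (le_of_eq ?_)
  have hsub : w.primesBelow ⊆ x.primesBelow := by
    intro p hp
    simp only [Nat.mem_primesBelow] at hp ⊢
    exact ⟨by omega, hp.2⟩
  have e1 : ∏ p ∈ w.primesBelow, ((1 - (1:ℝ)/p) / (1 - v / p)) =
      ∏ p ∈ x.primesBelow, (if p < w then ((1 - (1:ℝ)/p) / (1 - v / p)) else 1) := by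
    rw [← Finset.prod_filter]
    apply Finset.prod_congr _ (fun _ _ => rfl)
    ext p
    simp only [Nat.mem_primesBelow, Finset.mem_filter]
    constructor
    · intro h; exact ⟨⟨by omega, h.2⟩, h.1⟩
    · intro h; exact ⟨h.2, h.1.2⟩
  rw [e1, omV, ← Finset.prod_inv_distrib, ← Finset.prod_mul_distrib]
  apply Finset.prod_congr rfl
  intro p hp
  have hp' := Nat.prime_of_mem_primesBelow hp
  have hf := omV_factor hp'
  rw [omHom_prime v w hp']
  split_ifs
  · rw [← mul_div_assoc, inv_mul_cancel₀ (by linarith), one_div]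
  · rw [mul_one]

lemma moment_half : ∃ C : ℝ, 0 < C ∧ ∀ w x : ℕ, 2 ≤ w → w ≤ x →
    ∑ n ∈ Finset.Ico 1 x, (1/2 : ℝ) ^ (Om w n) / n ≤ C * Real.log x * (1 / √(Real.log w)) := by
  obtain ⟨C, hC, h⟩ := inv_omV_le
  refine ⟨C, hC, fun w x hw hwx => ?_⟩
  refine (moment_le (1/2) (by norm_num) (by norm_num) w x hwx).trans ?_
  have hl : 0 < Real.log w := Real.log_pos (by exact_mod_cast hw)
  have hlx : 0 < Real.log x := Real.log_pos (by exact_mod_cast (by omega : 1 < x))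
  have h1 : ∏ p ∈ w.primesBelow, ((1 - (1:ℝ)/p) / (1 - (1/2) / p)) ≤ 1 / √(Real.log w) := by
    have h2 : ∏ p ∈ w.primesBelow, ((1 - (1:ℝ)/p) / (1 - (1/2) / p)) ≤
        ∏ p ∈ w.primesBelow, (1 - (1:ℝ)/p) ^ (1/2 : ℝ) := by
      apply Finset.prod_le_prod
      · intro p hp
        have hf := omV_factor (Nat.prime_of_mem_primesBelow hp)
        have : (1/2 : ℝ) / p = (1/2) * (1/p) := by ring
        rw [this]
        apply div_nonneg <;> linarith
      · intro p hp
        have hf := omV_factor (Nat.prime_of_mem_primesBelow hp)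
        have : (1/2 : ℝ) / p = (1/2) * (1/p) := by ring
        rw [this, ← Real.sqrt_eq_rpow]
        set a := (1:ℝ)/p
        rw [div_le_iff₀ (by linarith)]
        have hs : √(1 - a) * √(1-a) = 1 - a := Real.mul_self_sqrt (by linarith)
        have hs0 := Real.sqrt_nonneg (1 - a)
        nlinarith [sq_nonneg (√(1-a) - 1)]
    refine h2.trans ?_
    rw [Real.finsetProd_rpow _ _ (fun p hp => by
      have hf := omV_factor (Nat.prime_of_mem_primesBelow hp)
      linarith), ← Real.sqrt_eq_rpow, one_div, ← Real.sqrt_inv]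
    apply Real.sqrt_le_sqrt
    have := log_le_inv_omV w (by omega)
    exact (le_inv_comm₀ (omV_pos w) hl).mpr this
  have h3 := h x (by omega)
  gcongr
  apply Finset.prod_nonneg
  intro p hp
  have hf := omV_factor (Nat.prime_of_mem_primesBelow hp)
  have : (1/2 : ℝ) / p = (1/2) * (1/p) := by ring
  rw [this]
  apply div_nonneg <;> linarith

lemma moment_up : ∃ C : ℝ, 0 < C ∧ ∀ w x : ℕ, 2 ≤ w → w ≤ x →
    ∑ n ∈ Finset.Ico 1 x, (5/4 : ℝ) ^ (Om w n) / n ≤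
      C * Real.log x * (Real.log w) ^ (1/4 : ℝ) := by
  obtain ⟨C, hC, h⟩ := inv_omV_le
  refine ⟨C * (C ^ (1/4 : ℝ) * Real.exp 2), by positivity, fun w x hw hwx => ?_⟩
  refine (moment_le (5/4) (by norm_num) (by norm_num) w x hwx).trans ?_
  have hl : 0 < Real.log w := Real.log_pos (by exact_mod_cast hw)
  have hlx : 0 < Real.log x := Real.log_pos (by exact_mod_cast (by omega : 1 < x))
  have hf0 : ∀ p ∈ w.primesBelow, 0 ≤ ((1 - (1:ℝ)/p) / (1 - (5/4) / p)) := by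
    intro p hp
    have hf := omV_factor (Nat.prime_of_mem_primesBelow hp)
    have : (5/4 : ℝ) / p = (5/4) * (1/p) := by ring
    rw [this]
    apply div_nonneg <;> linarith
  have h1 : ∏ p ∈ w.primesBelow, ((1 - (1:ℝ)/p) / (1 - (5/4) / p)) ≤
      (C * Real.log w) ^ (1/4 : ℝ) * Real.exp 2 := by
    have h2 : ∏ p ∈ w.primesBelow, ((1 - (1:ℝ)/p) / (1 - (5/4) / p)) ≤
        ∏ p ∈ w.primesBelow, (((1 - (1:ℝ)/p)⁻¹) ^ (1/4 : ℝ) * Real.exp ((p:ℝ)^(-(1+(1:ℝ))))) := by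
      apply Finset.prod_le_prod hf0
      intro p hp
      have hp' := Nat.prime_of_mem_primesBelow hp
      have hp0 : (0:ℝ) < p := by exact_mod_cast hp'.pos
      have hf := omV_factor hp'
      have : (5/4 : ℝ) / p = (5/4) * (1/p) := by ring
      have e2 : (p:ℝ)^(-(1+(1:ℝ))) = (1/p)^2 := by
        rw [show -(1+(1:ℝ)) = ((-2 : ℤ) : ℝ) by norm_num, Real.rpow_intCast]
        rw [zpow_neg]
        simp [zpow_ofNat]
      rw [this, e2]
      have ha0 : (0:ℝ) < 1/p := by positivity
      set a := (1:ℝ)/p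
      have e3 : Real.exp (a/4) ≤ ((1-a)⁻¹) ^ (1/4 : ℝ) := by
        have : Real.exp a ≤ (1-a)⁻¹ := by
          rw [le_inv_comm₀ (Real.exp_pos _) (by linarith), ← Real.exp_neg]
          have := Real.add_one_le_exp (-a); linarith
        calc Real.exp (a/4) = (Real.exp a) ^ (1/4 : ℝ) := by rw [← Real.exp_mul]; ring_nf
          _ ≤ _ := by gcongr
      calc (1-a)/(1-5/4*a) ≤ 1 + (a/4 + a^2) := by
            rw [div_le_iff₀ (by linarith)]
            nlinarith [mul_pos ha0 ha0]
        _ ≤ Real.exp (a/4 + a^2) := by linarith [Real.add_one_le_exp (a/4+a^2)]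
        _ = Real.exp (a/4) * Real.exp (a^2) := Real.exp_add _ _
        _ ≤ _ := by gcongr
    refine h2.trans ?_
    rw [Finset.prod_mul_distrib, ← Real.exp_sum, Real.finsetProd_rpow _ _ (fun p hp => by
      have hf := omV_factor (Nat.prime_of_mem_primesBelow hp)
      exact inv_nonneg.mpr (by linarith)), Finset.prod_inv_distrib]
    obtain ⟨hs, ht⟩ := tsum_rpow_le 1 one_pos
    have h5 : ∑ p ∈ w.primesBelow, (p:ℝ)^(-(1+(1:ℝ))) ≤ 2 := by
      refine (hs.sum_le_tsum _ (fun n _ => by positivity)).trans (ht.trans (by norm_num))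
    have h6 := h w hw
    have h7 := omV_pos w
    unfold omV at h6 h7
    gcongr
  have h3 := h x (by omega)
  have h4 := Finset.prod_nonneg hf0
  calc _ ≤ (C * Real.log x) * ((C * Real.log w) ^ (1/4 : ℝ) * Real.exp 2) := by gcongr
    _ = _ := by rw [Real.mul_rpow hC.le hl.le]; ring

noncomputable def bonT (g : ℕ → ℝ) (P : Finset ℕ) (k : ℕ) : ℝ :=
  ∑ S ∈ P.powerset, if S.card ≤ k then ∏ p ∈ S, (-g p) else 0

lemma bonT_zero (g : ℕ → ℝ) (P : Finset ℕ) : bonT g P 0 = 1 := by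
  rw [bonT, Finset.sum_eq_single ∅]
  · simp
  · intro S _ hS
    have : S.card ≠ 0 := by simpa using hS
    rw [if_neg (by omega)]
  · simp

lemma bonT_insert (g : ℕ → ℝ) (P : Finset ℕ) (p : ℕ) (hp : p ∉ P) (k : ℕ) :
    bonT g (insert p P) (k+1) = bonT g P (k+1) - g p * bonT g P k := by
  simp only [bonT]
  rw [Finset.sum_powerset_insert hp, sub_eq_add_neg, ← neg_mul, Finset.mul_sum]
  congr 1
  apply Finset.sum_congr rfl
  intro S hS
  have hpS : p ∉ S := fun h => hp (Finset.mem_powerset.mp hS h)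
  rw [Finset.card_insert_of_notMem hpS, Finset.prod_insert hpS]
  simp only [Nat.add_le_add_iff_right]
  split_ifs <;> simp

lemma bonferroni (g : ℕ → ℝ) (P : Finset ℕ) (h : ∀ p ∈ P, 0 ≤ g p ∧ g p ≤ 1) :
    ∀ k, 0 ≤ (-1 : ℝ) ^ k * (bonT g P k - ∏ p ∈ P, (1 - g p)) := by
  induction P using Finset.induction_on with
  | empty => intro k; simp [bonT]
  | insert p P hp ih =>
    have hP : ∀ q ∈ P, 0 ≤ g q ∧ g q ≤ 1 := fun q hq => h q (Finset.mem_insert_of_mem hq)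
    have hpp := h p (Finset.mem_insert_self _ _)
    intro k
    cases k with
    | zero =>
      rw [bonT_zero]
      have : ∏ q ∈ insert p P, (1 - g q) ≤ 1 := Finset.prod_le_one
        (fun q hq => by linarith [h q hq]) (fun q hq => by linarith [h q hq])
      simp only [pow_zero, one_mul]; linarith
    | succ k =>
      have h1 := ih hP (k+1)
      have h2 := ih hP k
      rw [bonT_insert g P p hp, Finset.prod_insert hp]
      rw [pow_succ] at h1 ⊢
      have h3 := mul_nonneg hpp.1 h2
      linarith

lemma sum_periodic_shift (F : ℕ → ℝ) (q : ℕ) (hF : ∀ d, F (d + q) = F d) (a : ℕ) :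
    ∑ i ∈ Finset.range q, F (a + i) = ∑ i ∈ Finset.range q, F i := by
  induction a with
  | zero => simp
  | succ a ih =>
    rw [← ih]
    have h1 := Finset.sum_range_succ (fun i => F (a + i)) q
    have h2 := Finset.sum_range_succ' (fun i => F (a + i)) q
    have h3 := hF a
    simp only [add_zero] at h2
    have h4 : ∑ i ∈ Finset.range q, F (a + 1 + i) = ∑ i ∈ Finset.range q, F (a + (i + 1)) :=
      Finset.sum_congr rfl (fun i _ => by congr 1; ring)
    linarith

lemma sum_periodic_mul (F : ℕ → ℝ) (q : ℕ) (hF : ∀ d, F (d + q) = F d) (a m : ℕ) :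
    ∑ i ∈ Finset.range (q * m), F (a + i) = m * ∑ i ∈ Finset.range q, F i := by
  induction m with
  | zero => simp
  | succ m ih =>
    rw [Nat.mul_succ, Finset.sum_range_add, ih]
    have : ∑ i ∈ Finset.range q, F (a + (q * m + i)) = ∑ i ∈ Finset.range q, F i := by
      rw [← sum_periodic_shift F q hF (a + q * m)]
      exact Finset.sum_congr rfl (fun i _ => by congr 1; ring)
    rw [this]; push_cast; ring

lemma sum_periodic_abs (F : ℕ → ℝ) (q : ℕ) (hq : 0 < q) (hF : ∀ d, F (d + q) = F d)
    (h0 : ∀ d, 0 ≤ F d) (a M : ℕ) :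
    |∑ i ∈ Finset.range M, F (a + i) - (M : ℝ) / q * ∑ i ∈ Finset.range q, F i| ≤
      ∑ i ∈ Finset.range q, F i := by
  set A := ∑ i ∈ Finset.range q, F i with hA
  have hA0 : 0 ≤ A := Finset.sum_nonneg (fun i _ => h0 i)
  have lo : ((M / q : ℕ) : ℝ) * A ≤ ∑ i ∈ Finset.range M, F (a + i) := by
    rw [hA, ← sum_periodic_mul F q hF a]
    apply Finset.sum_le_sum_of_subset_of_nonneg
    · exact Finset.range_mono (Nat.mul_div_le M q)
    · intro i _ _; exact h0 _
  have hi : ∑ i ∈ Finset.range M, F (a + i) ≤ (((M / q : ℕ) : ℝ) + 1) * A := by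
    have : (((M / q : ℕ) : ℝ) + 1) = ((M / q + 1 : ℕ) : ℝ) := by push_cast; rfl
    rw [this, hA, ← sum_periodic_mul F q hF a]
    apply Finset.sum_le_sum_of_subset_of_nonneg
    · exact Finset.range_mono (Nat.lt_mul_div_succ M hq).le
    · intro i _ _; exact h0 _
  have h1 : (M:ℝ)/q ≤ ((M / q : ℕ) : ℝ) + 1 := by
    have := Nat.lt_floor_add_one ((M:ℝ)/q)
    rw [Nat.floor_div_eq_div] at this
    exact this.le
  have h2 : ((M / q : ℕ) : ℝ) ≤ (M:ℝ)/q := Nat.cast_div_le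
  rw [abs_le]
  constructor <;> nlinarith

lemma sum_crt (F G : ℕ → ℝ) (p q : ℕ) (hp : 0 < p) (hq : 0 < q) (hpq : p.Coprime q)
    (hF : ∀ d, F (d + p) = F d) (hG : ∀ d, G (d + q) = G d) :
    ∑ d ∈ Finset.range (p * q), F d * G d =
      (∑ d ∈ Finset.range p, F d) * ∑ d ∈ Finset.range q, G d := by
  have hF' : ∀ d, F (d % p) = F d := fun d => Function.Periodic.map_mod_nat hF d
  have hG' : ∀ d, G (d % q) = G d := fun d => Function.Periodic.map_mod_nat hG d
  rw [Finset.sum_mul_sum, ← Finset.sum_product']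
  refine Finset.sum_nbij (fun d => (d % p, d % q)) ?_ ?_ ?_ ?_
  · intro d _
    simp [Nat.mod_lt _ hp, Nat.mod_lt _ hq]
  · intro a ha b hb hab
    simp only [Finset.coe_range, Set.mem_Iio] at ha hb
    simp only [Prod.mk.injEq] at hab
    have := (Nat.modEq_and_modEq_iff_modEq_mul hpq).mp hab
    exact Nat.ModEq.eq_of_lt_of_lt this ha hb
  · rintro ⟨a, b⟩ hab
    simp only [Finset.coe_product, Finset.coe_range, Set.mem_prod, Set.mem_Iio] at hab
    obtain ⟨c, hc1, hc2⟩ := Nat.chineseRemainder hpq a b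
    refine ⟨c % (p * q), ?_, ?_⟩
    · simp [Nat.mod_lt _ (Nat.mul_pos hp hq)]
    · simp only [Prod.mk.injEq, Nat.mod_mul_right_mod, Nat.mod_mul_left_mod]
      exact ⟨by rw [hc1, Nat.mod_eq_of_lt hab.1], by rw [hc2, Nat.mod_eq_of_lt hab.2]⟩
  · intro d _
    simp only [hF', hG']

noncomputable def sg (p d : ℕ) : ℝ := (if p ∣ d then 1/2 else 0) + (if p ∣ d + 1 then 1 else 0)

lemma sg_bounds {p : ℕ} (hp : p.Prime) (d : ℕ) : 0 ≤ sg p d ∧ sg p d ≤ 1 := by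
  unfold sg
  split_ifs with h1 h2
  · exact absurd (Nat.dvd_one.mp ((Nat.dvd_add_right h1).mp h2)) hp.one_lt.ne'
  all_goals norm_num

lemma sg_periodic (p d : ℕ) : sg p (d + p) = sg p d := by
  unfold sg
  have e : d + p + 1 = d + 1 + p := by ring
  rw [e]
  simp only [Nat.dvd_add_self_right]

lemma sg_sum {p : ℕ} (hp : p.Prime) : ∑ d ∈ Finset.range p, sg p d = 3/2 := by
  unfold sg
  rw [Finset.sum_add_distrib, Finset.sum_eq_single 0, Finset.sum_eq_single (p-1)]
  · rw [Nat.sub_add_cancel hp.one_lt.le]; norm_num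
  · intro b hb hne
    rw [Finset.mem_range] at hb
    rw [if_neg]
    intro h
    have := Nat.le_of_dvd (by omega) h
    omega
  · intro h; have := hp.pos; simp at h; omega
  · intro b hb hne
    rw [Finset.mem_range] at hb
    rw [if_neg]
    intro h
    have := Nat.le_of_dvd (by omega) h
    omega
  · intro h; have := hp.pos; simp at h; omega

lemma sg_prod_periodic (S : Finset ℕ) (d : ℕ) :
    ∏ p ∈ S, sg p (d + ∏ p ∈ S, p) = ∏ p ∈ S, sg p d := by
  apply Finset.prod_congr rfl
  intro p hp
  obtain ⟨m, hm⟩ := Finset.dvd_prod_of_mem (fun p => p) hp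
  rw [hm, mul_comm]
  exact (Function.Periodic.nat_mul (f := sg p) (c := p) (sg_periodic p) m) d

lemma sg_prod_sum (S : Finset ℕ) (hS : ∀ p ∈ S, p.Prime) :
    ∑ d ∈ Finset.range (∏ p ∈ S, p), ∏ p ∈ S, sg p d = (3/2 : ℝ) ^ S.card := by
  induction S using Finset.induction_on with
  | empty => simp
  | insert p S hp ih =>
    have hS' : ∀ q ∈ S, q.Prime := fun q hq => hS q (Finset.mem_insert_of_mem hq)
    have hpp := hS p (Finset.mem_insert_self _ _)
    rw [Finset.prod_insert hp, Finset.card_insert_of_notMem hp, pow_succ', ← ih hS', ← sg_sum hpp,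
      ← sum_crt _ _ _ _ hpp.pos (Finset.prod_pos (fun q hq => (hS' q hq).pos)) _
        (sg_periodic p) (sg_prod_periodic S)]
    · exact Finset.sum_congr rfl (fun d _ => by rw [Finset.prod_insert hp])
    · apply Nat.Coprime.prod_right
      intro q hq
      exact (Nat.coprime_primes hpp (hS' q hq)).mpr (fun h => hp (h ▸ hq))

lemma sieve_basic (P : Finset ℕ) (hP : ∀ p ∈ P, p.Prime) (R : ℕ) (hR : Even R) (Y M : ℕ) :
    ∑ i ∈ Finset.range M, ∏ p ∈ P, (1 - sg p (Y + i)) ≤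
      M * (∏ p ∈ P, (1 - (3/2 : ℝ) / p) + Real.exp (-R) * ∏ p ∈ P, (1 + Real.exp 1 * ((3/2)/p)))
      + ∑ S ∈ P.powerset, if S.card ≤ R then (3/2 : ℝ) ^ S.card else 0 := by
  have h1 : ∀ d, ∏ p ∈ P, (1 - sg p d) ≤ bonT (fun p => sg p d) P R := by
    intro d
    have := bonferroni (fun p => sg p d) P (fun p hp => sg_bounds (hP p hp) d) R
    rw [hR.neg_one_pow, one_mul] at this
    linarith
  refine (Finset.sum_le_sum (fun i _ => h1 (Y + i))).trans ?_
  simp only [bonT]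
  rw [Finset.sum_comm]
  have h2 : ∀ S ∈ P.powerset, (∑ i ∈ Finset.range M,
      if S.card ≤ R then ∏ p ∈ S, (-sg p (Y + i)) else 0) ≤
      M * (∏ p ∈ S, (-((3/2 : ℝ) / p)) + Real.exp (-R) * ∏ p ∈ S, (Real.exp 1 * ((3/2)/p))) +
        if S.card ≤ R then (3/2 : ℝ) ^ S.card else 0 := by
    intro S hS
    have hSP : ∀ p ∈ S, p.Prime := fun p hp => hP p (Finset.mem_powerset.mp hS hp)
    have ha : 0 ≤ ∏ p ∈ S, ((3/2 : ℝ) / p) := Finset.prod_nonneg (fun p _ => by positivity)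
    have e1 : ∏ p ∈ S, (-((3/2 : ℝ) / p)) = (-1) ^ S.card * ∏ p ∈ S, ((3/2 : ℝ) / p) :=
      Finset.prod_neg _
    have e2 : ∏ p ∈ S, (Real.exp 1 * ((3/2 : ℝ)/p)) =
        Real.exp S.card * ∏ p ∈ S, ((3/2 : ℝ) / p) := by
      rw [Finset.prod_mul_distrib, Finset.prod_const, ← Real.exp_nat_mul, mul_one]
    rw [e1, e2]
    by_cases hc : S.card ≤ R
    · simp only [if_pos hc]
      have e3 : ∑ i ∈ Finset.range M, ∏ p ∈ S, (-sg p (Y + i)) =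
          (-1) ^ S.card * ∑ i ∈ Finset.range M, ∏ p ∈ S, sg p (Y + i) := by
        rw [Finset.mul_sum]
        exact Finset.sum_congr rfl (fun i _ => Finset.prod_neg _)
      rw [e3]
      have hq : 0 < ∏ p ∈ S, p := Finset.prod_pos (fun q hq => (hSP q hq).pos)
      have h3 := sum_periodic_abs (fun d => ∏ p ∈ S, sg p d) (∏ p ∈ S, p) hq
        (sg_prod_periodic S) (fun d => Finset.prod_nonneg (fun p hp => (sg_bounds (hSP p hp) d).1))
        Y M
      rw [sg_prod_sum S hSP] at h3
      have e4 : (M : ℝ) / ((∏ p ∈ S, p : ℕ) : ℝ) * (3/2)^S.card = M * ∏ p ∈ S, ((3/2 : ℝ) / p) := by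
        rw [Finset.prod_div_distrib, Finset.prod_const]; push_cast; ring
      rw [e4] at h3
      have h5 : 0 ≤ (M:ℝ) * (Real.exp (-R) * (Real.exp S.card * ∏ p ∈ S, ((3/2 : ℝ) / p))) := by
        positivity
      rw [abs_le] at h3
      rcases neg_one_pow_eq_or ℝ S.card with h | h <;> rw [h] <;> linarith [h3.1, h3.2]
    · simp only [if_neg hc, Finset.sum_const_zero, add_zero]
      have h5 : 1 ≤ Real.exp (-R) * Real.exp S.card := by
        rw [← Real.exp_add]
        apply Real.one_le_exp
        have : (R:ℝ) ≤ S.card := by exact_mod_cast (by omega : R ≤ S.card)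
        linarith
      have h6 := mul_le_mul_of_nonneg_right h5 ha
      apply mul_nonneg (by positivity)
      rcases neg_one_pow_eq_or ℝ S.card with h | h <;> rw [h] <;> linarith
  refine (Finset.sum_le_sum h2).trans (le_of_eq ?_)
  rw [Finset.sum_add_distrib, ← Finset.mul_sum, Finset.sum_add_distrib, ← Finset.mul_sum,
    Finset.prod_one_add]
  congr 4
  rw [← Finset.prod_one_add]
  simp [sub_eq_add_neg]

lemma err_le (P : Finset ℕ) (R : ℕ) (w : ℕ) (hw : 1 ≤ w) (hc : P.card ≤ w) :
    (∑ S ∈ P.powerset, if S.card ≤ R then (3/2 : ℝ) ^ S.card else 0) ≤ 3 * (2 * w : ℝ) ^ R := by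
  have hw' : (1:ℝ) ≤ w := by exact_mod_cast hw
  have hB : (0:ℝ) < 2 * w := by linarith
  have h1 : ∀ S ∈ P.powerset, (if S.card ≤ R then (3/2 : ℝ) ^ S.card else 0) ≤
      (2 * w : ℝ) ^ R * ∏ p ∈ S, ((3/2 : ℝ) / (2 * w)) := by
    intro S _
    rw [Finset.prod_const, div_pow (3/2 : ℝ) (2 * (w:ℝ))]
    split_ifs with h
    · have : (2 * w : ℝ) ^ S.card ≤ (2 * w : ℝ) ^ R := pow_le_pow_right₀ (by linarith) h
      rw [mul_div_assoc', le_div_iff₀ (by positivity), mul_comm]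
      gcongr
    · positivity
  refine (Finset.sum_le_sum h1).trans ?_
  rw [← Finset.mul_sum, ← Finset.prod_one_add, Finset.prod_const, mul_comm]
  gcongr
  have h2 : 1 + (3/2 : ℝ) / (2 * w) ≤ Real.exp ((3/2 : ℝ) / (2 * w)) := by
    linarith [Real.add_one_le_exp ((3/2 : ℝ) / (2 * w))]
  calc (1 + (3/2 : ℝ) / (2 * w)) ^ P.card ≤ (Real.exp ((3/2 : ℝ) / (2 * w))) ^ P.card := by gcongr
    _ = Real.exp (P.card * ((3/2 : ℝ) / (2 * w))) := by rw [← Real.exp_nat_mul]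
    _ ≤ Real.exp 1 := by
        apply Real.exp_le_exp.mpr
        have : (P.card : ℝ) ≤ w := by exact_mod_cast hc
        calc (P.card : ℝ) * ((3/2 : ℝ) / (2 * w)) ≤ w * ((3/2 : ℝ) / (2 * w)) := by gcongr
          _ = 3/4 := by field_simp; norm_num
          _ ≤ 1 := by norm_num
    _ ≤ 3 := by linarith [Real.exp_one_lt_d9]

def omw (k : ℕ) : ℕ := 2 ^ (2 ^ (19 * k))

lemma log_omw (k : ℕ) : Real.log (omw k) = 2 ^ (19 * k) * Real.log 2 := by
  rw [omw]; push_cast; rw [Real.log_pow]; push_cast; rfl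

lemma two_le_omw (k : ℕ) : 2 ≤ omw k := by
  rw [omw]
  calc 2 = 2 ^ 1 := rfl
    _ ≤ _ := Nat.pow_le_pow_right (by norm_num) Nat.one_le_two_pow

lemma two_pow_ge (k : ℕ) (hk : 11 ≤ k) : 150 * k ≤ 2 ^ k := by
  induction k, hk using Nat.le_induction with
  | base => norm_num
  | succ k hk ih => rw [pow_succ]; omega

lemma main_prod_le (w : ℕ) (hw : 2 ≤ w) :
    ∏ p ∈ w.primesBelow, (1 - (3/2 : ℝ) / p) ≤ (1 / √(Real.log w)) ^ 3 := by
  have hl : 0 < Real.log w := Real.log_pos (by exact_mod_cast hw)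
  have h2 : ∏ p ∈ w.primesBelow, (1 - (3/2 : ℝ) / p) ≤
        ∏ p ∈ w.primesBelow, ((1 - (1:ℝ)/p) ^ (1/2 : ℝ)) ^ 3 := by
    apply Finset.prod_le_prod
    · intro p hp
      have hf := omV_factor (Nat.prime_of_mem_primesBelow hp)
      have : (3/2 : ℝ) / p = (3/2) * (1/p) := by ring
      rw [this]
      linarith
    · intro p hp
      have hf := omV_factor (Nat.prime_of_mem_primesBelow hp)
      have : (3/2 : ℝ) / p = (3/2) * (1/p) := by ring
      rw [this, ← Real.sqrt_eq_rpow]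
      set a := (1:ℝ)/p
      have hs : √(1 - a) * √(1-a) = 1 - a := Real.mul_self_sqrt (by linarith)
      have hs0 := Real.sqrt_nonneg (1 - a)
      set s := √(1-a)
      have : a = 1 - s * s := by linarith
      rw [this]
      nlinarith [mul_nonneg (sq_nonneg (s - 1)) (by linarith : 0 ≤ 2 * s + 1)]
  refine h2.trans ?_
  rw [Finset.prod_pow, Real.finsetProd_rpow _ _ (fun p hp => by
      have hf := omV_factor (Nat.prime_of_mem_primesBelow hp)
      linarith), ← Real.sqrt_eq_rpow, one_div, ← Real.sqrt_inv]
  have := log_le_inv_omV w (by omega)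
  have h3 := (le_inv_comm₀ (omV_pos w) hl).mpr this
  unfold omV at h3
  gcongr

lemma tail_prod_le (w : ℕ) :
    ∏ p ∈ w.primesBelow, (1 + Real.exp 1 * ((3/2 : ℝ)/p)) ≤ ((omV w)⁻¹) ^ 5 := by
  rw [omV, ← Finset.prod_inv_distrib, ← Finset.prod_pow]
  apply Finset.prod_le_prod
  · intro p _; positivity
  · intro p hp
    have hp' := Nat.prime_of_mem_primesBelow hp
    have hp0 : (0:ℝ) < p := by exact_mod_cast hp'.pos
    have hf := omV_factor hp'
    have e : (3/2 : ℝ) / p = (3/2) * (1/p) := by ring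
    rw [e]
    have ha0 : (0:ℝ) < 1/p := by positivity
    set a := (1:ℝ)/p
    have h1 : Real.exp a ≤ (1-a)⁻¹ := by
      rw [le_inv_comm₀ (Real.exp_pos _) (by linarith), ← Real.exp_neg]
      have := Real.add_one_le_exp (-a); linarith
    calc 1 + Real.exp 1 * (3/2 * a) ≤ 1 + 3 * (3/2 * a) := by
          have := Real.exp_one_lt_d9
          gcongr; linarith
      _ ≤ 5 * a + 1 := by linarith
      _ ≤ Real.exp (5 * a) := Real.add_one_le_exp _
      _ = (Real.exp a) ^ 5 := by rw [← Real.exp_nat_mul]; norm_num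
      _ ≤ _ := by gcongr

lemma half_pow_Om_le (w d : ℕ) (hwd : w ≤ d) (hd : (d + 1).Prime) :
    (1/2 : ℝ) ^ (Om w d) ≤ ∏ p ∈ w.primesBelow, (1 - sg p d) := by
  rw [Om, ← Finset.prod_pow_eq_pow_sum]
  apply Finset.prod_le_prod
  · intro p _; positivity
  · intro p hp
    have hp' := Nat.prime_of_mem_primesBelow hp
    have hlt := Nat.lt_of_mem_primesBelow hp
    have h1 : ¬ p ∣ d + 1 := by
      intro h
      rcases (Nat.dvd_prime hd).mp h with h | h
      · exact hp'.one_lt.ne' h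
      · omega
    rw [sg, if_neg h1]
    by_cases h : p ∣ d
    · rw [if_pos h]
      have h0 : d ≠ 0 := by have := hp'.pos; omega
      have h2 : 1 ≤ d.factorization p := (hp'.dvd_iff_one_le_factorization h0).mp h
      calc (1/2 : ℝ) ^ (d.factorization p) ≤ (1/2) ^ 1 :=
            pow_le_pow_of_le_one (by norm_num) (by norm_num) h2
        _ = _ := by norm_num
    · rw [if_neg h]
      have : (1/2 : ℝ) ^ (d.factorization p) ≤ 1 := pow_le_one₀ (by norm_num) (by norm_num)
      linarith

lemma sieve_scale : ∃ C : ℝ, 0 < C ∧ ∀ k : ℕ, 11 ≤ k → ∀ i : ℕ, 2 ^ (20 * k) ≤ i →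
    ∑ d ∈ (Finset.Ico (2^i) (2^(i+1))).filter (fun d => (d+1).Prime), (1/2 : ℝ) ^ (Om (omw k) d) ≤
      C * 2 ^ i * (1 / √(Real.log (omw k))) ^ 3 := by
  obtain ⟨C, hC, hV⟩ := inv_omV_le
  refine ⟨1 + C ^ 5 + 1, by positivity, fun k hk i hi => ?_⟩
  have hkk := two_pow_ge k hk
  set w := omw k with hw
  have hw2 : 2 ≤ w := two_le_omw k
  have hprimes : ∀ p ∈ w.primesBelow, p.Prime := fun p hp => Nat.prime_of_mem_primesBelow hp
  have hexp : 2 ^ (20 * k) = 2 ^ k * 2 ^ (19 * k) := by rw [← pow_add]; congr 1; ring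
  have h19 : 2 ^ 19 ≤ 2 ^ (19 * k) := Nat.pow_le_pow_right (by norm_num) (by omega)
  have hbig : 150 * k * 2 ^ (19 * k) ≤ i := by
    calc _ ≤ 2 ^ k * 2 ^ (19 * k) := Nat.mul_le_mul_right _ hkk
      _ ≤ i := by rw [← hexp]; exact hi
  have hwY : w ≤ 2 ^ i := by
    rw [hw, omw]
    apply Nat.pow_le_pow_right (by norm_num)
    nlinarith
  -- reduce to sieve_basic
  have h1 : ∑ d ∈ (Finset.Ico (2^i) (2^(i+1))).filter (fun d => (d+1).Prime),
      (1/2 : ℝ) ^ (Om w d) ≤ ∑ j ∈ Finset.range (2^i), ∏ p ∈ w.primesBelow, (1 - sg p (2^i + j)) := by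
    have e : ∑ j ∈ Finset.range (2^i), ∏ p ∈ w.primesBelow, (1 - sg p (2^i + j)) =
        ∑ d ∈ Finset.Ico (2^i) (2^(i+1)), ∏ p ∈ w.primesBelow, (1 - sg p d) := by
      rw [Finset.sum_Ico_eq_sum_range]
      congr 2
      rw [pow_succ]; omega
    rw [e, Finset.sum_filter]
    apply Finset.sum_le_sum
    intro d hd
    rw [Finset.mem_Ico] at hd
    split_ifs with hp
    · exact half_pow_Om_le w d (by omega) hp
    · exact Finset.prod_nonneg (fun p hp => by linarith [(sg_bounds (hprimes p hp) d).2])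
  have h2 := sieve_basic w.primesBelow hprimes (134 * k) ⟨67 * k, by ring⟩ (2^i) (2^i)
  have h3 := err_le w.primesBelow (134 * k) w (by omega) (by
    calc w.primesBelow.card ≤ (Finset.range w).card := Finset.card_le_card (Finset.filter_subset _ _)
      _ = w := Finset.card_range w)
  have h4 := main_prod_le w hw2
  have h5 := tail_prod_le w
  have h6 := hV w hw2
  have hlog : Real.log w = 2 ^ (19 * k) * Real.log 2 := log_omw k
  have hl2 : 0.69 < Real.log 2 := by linarith [Real.log_two_gt_d9]
  have hl2' : Real.log 2 < 1 := by linarith [Real.log_two_lt_d9]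
  have h19' : (2:ℝ) ^ 19 ≤ 2 ^ (19 * k) := by exact_mod_cast h19
  have hlog1 : 1 ≤ Real.log w := by rw [hlog]; nlinarith
  have hlogu : Real.log w ≤ 2 ^ (19 * k) := by rw [hlog]; nlinarith
  set q := 1 / √(Real.log w) with hq
  -- lower bound for q ^ 3
  have hq3 : 1 / (2:ℝ) ^ (38 * k) ≤ q ^ 3 := by
    have hs1 : 1 ≤ √(Real.log w) := Real.one_le_sqrt.mpr hlog1
    have hs2 : √(Real.log w) ^ 2 = Real.log w := Real.sq_sqrt (by linarith)
    rw [hq, div_pow, one_pow]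
    apply one_div_le_one_div_of_le (by positivity)
    calc √(Real.log w) ^ 3 ≤ √(Real.log w) ^ 4 := pow_le_pow_right₀ hs1 (by norm_num)
      _ = (√(Real.log w) ^ 2) ^ 2 := by ring
      _ = Real.log w ^ 2 := by rw [hs2]
      _ ≤ (2 ^ (19 * k)) ^ 2 := by gcongr
      _ = _ := by rw [← pow_mul]; congr 1; ring
  have h7 : Real.exp (-((134 * k : ℕ) : ℝ)) * ∏ p ∈ w.primesBelow, (1 + Real.exp 1 * ((3/2 : ℝ)/p))
      ≤ C ^ 5 * q ^ 3 := by
    have e1 : Real.exp (-((134 * k : ℕ) : ℝ)) ≤ 1 / 2 ^ (134 * k) := by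
      rw [Real.exp_neg, one_div]
      apply inv_anti₀ (by positivity)
      have : Real.exp ((134 * k : ℕ) : ℝ) = (Real.exp 1) ^ (134 * k) := by
        rw [← Real.exp_nat_mul, mul_one]
      rw [this]
      gcongr
      linarith [Real.exp_one_gt_d9]
    have hVpos : 0 ≤ (omV w)⁻¹ := (inv_pos.mpr (omV_pos w)).le
    calc _ ≤ 1 / 2 ^ (134 * k) * (C * 2 ^ (19 * k)) ^ 5 := by
          have : (omV w)⁻¹ ≤ C * 2 ^ (19 * k) := h6.trans (by gcongr)
          have h8 : ((omV w)⁻¹) ^ 5 ≤ (C * 2 ^ (19 * k)) ^ 5 := by gcongr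
          have h9 := h5.trans h8
          gcongr
      _ = C ^ 5 * (1 / 2 ^ (39 * k)) := by
          have : (2:ℝ) ^ (134 * k) = 2 ^ (39 * k) * (2 ^ (19 * k)) ^ 5 := by
            rw [← pow_mul, ← pow_add]; congr 1; ring
          rw [this]; field_simp
      _ ≤ C ^ 5 * (1 / 2 ^ (38 * k)) := by
          gcongr
          all_goals norm_num
      _ ≤ _ := by gcongr
  have h8 : 3 * (2 * w : ℝ) ^ (134 * k) ≤ 2 ^ i * q ^ 3 := by
    have e1 : (2 * w : ℝ) = 2 ^ (1 + 2 ^ (19 * k)) := by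
      rw [hw, omw]; push_cast; rw [pow_add]; norm_num
    have e2 : (3:ℝ) * (2 * w : ℝ) ^ (134 * k) * 2 ^ (38 * k) ≤ 2 ^ i := by
      rw [e1, ← pow_mul]
      calc (3:ℝ) * 2 ^ ((1 + 2 ^ (19 * k)) * (134 * k)) * 2 ^ (38 * k)
          ≤ 2 ^ 2 * 2 ^ ((1 + 2 ^ (19 * k)) * (134 * k)) * 2 ^ (38 * k) := by gcongr; norm_num
        _ = 2 ^ (2 + (1 + 2 ^ (19 * k)) * (134 * k) + 38 * k) := by rw [← pow_add, ← pow_add]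
        _ ≤ 2 ^ i := by
          apply pow_le_pow_right₀ (by norm_num)
          refine le_trans ?_ hbig
          nlinarith
    calc _ ≤ 2 ^ i * (1 / (2:ℝ) ^ (38 * k)) := by
          rw [mul_one_div, le_div_iff₀ (by positivity)]; exact e2
      _ ≤ _ := by gcongr
  refine h1.trans (h2.trans ?_)
  push_cast at h7 ⊢
  have h9 : (2:ℝ) ^ i * (∏ p ∈ w.primesBelow, (1 - (3/2 : ℝ) / p) +
      Real.exp (-(134 * (k:ℝ))) * ∏ p ∈ w.primesBelow, (1 + Real.exp 1 * ((3/2 : ℝ)/p))) ≤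
      2 ^ i * (q ^ 3 + C ^ 5 * q ^ 3) := by
    gcongr
  linarith

lemma sum_dyadic (f : ℕ → ℝ) (a b : ℕ) (hab : a ≤ b) :
    ∑ d ∈ Finset.Ico (2^a) (2^b), f d =
      ∑ i ∈ Finset.Ico a b, ∑ d ∈ Finset.Ico (2^i) (2^(i+1)), f d := by
  induction b, hab using Nat.le_induction with
  | base => simp
  | succ b hab ih =>
    rw [Finset.sum_Ico_succ_top hab, ← ih, Finset.sum_Ico_consecutive]
    · exact Nat.pow_le_pow_right (by norm_num) hab
    · exact Nat.pow_le_pow_right (by norm_num) (by omega)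

def omD (k : ℕ) : Finset ℕ :=
  (Finset.Ico (2 ^ (2 ^ (20 * k))) (2 ^ (2 ^ (20 * (k + 1))))).filter (fun d => (d+1).Prime)

lemma sum_omD : ∃ C : ℝ, 0 < C ∧ ∀ k : ℕ, 11 ≤ k →
    ∑ d ∈ omD k, (1/2 : ℝ) ^ (Om (omw k) d) / d ≤
      C * 2 ^ (20 * k) * (1 / √(Real.log (omw k))) ^ 3 := by
  obtain ⟨C, hC, h⟩ := sieve_scale
  refine ⟨C * 2 ^ 20, by positivity, fun k hk => ?_⟩
  set q := 1 / √(Real.log (omw k)) with hq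
  have hq0 : 0 ≤ q := by positivity
  rw [omD, Finset.sum_filter, sum_dyadic _ _ _ (Nat.pow_le_pow_right (by norm_num) (by omega))]
  have h1 : ∀ i ∈ Finset.Ico (2 ^ (20 * k)) (2 ^ (20 * (k+1))),
      (∑ d ∈ Finset.Ico (2^i) (2^(i+1)),
        if (d+1).Prime then (1/2 : ℝ) ^ (Om (omw k) d) / d else 0) ≤ C * q ^ 3 := by
    intro i hi
    rw [Finset.mem_Ico] at hi
    have h2 := h k hk i hi.1
    rw [← Finset.sum_filter]
    calc ∑ d ∈ (Finset.Ico (2^i) (2^(i+1))).filter (fun d => (d+1).Prime),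
          (1/2 : ℝ) ^ (Om (omw k) d) / d ≤
        ∑ d ∈ (Finset.Ico (2^i) (2^(i+1))).filter (fun d => (d+1).Prime),
          (1/2 : ℝ) ^ (Om (omw k) d) / 2 ^ i := by
          apply Finset.sum_le_sum
          intro d hd
          rw [Finset.mem_filter, Finset.mem_Ico] at hd
          have : (2:ℝ) ^ i ≤ d := by exact_mod_cast hd.1.1
          gcongr
      _ ≤ (C * 2 ^ i * q ^ 3) / 2 ^ i := by
          rw [← Finset.sum_div]
          gcongr
      _ = C * q ^ 3 := by field_simp
  refine (Finset.sum_le_sum h1).trans ?_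
  rw [Finset.sum_const, Nat.card_Ico, nsmul_eq_mul]
  have h3 : ((2 ^ (20 * (k+1)) - 2 ^ (20 * k) : ℕ) : ℝ) ≤ 2 ^ 20 * 2 ^ (20 * k) := by
    have : 2 ^ (20 * (k+1)) - 2 ^ (20 * k) ≤ 2 ^ 20 * 2 ^ (20 * k) := by
      refine (Nat.sub_le _ _).trans (le_of_eq ?_)
      rw [← pow_add]; congr 1; ring
    exact_mod_cast this
  calc _ ≤ (2 ^ 20 * 2 ^ (20 * k)) * (C * q ^ 3) := by gcongr
    _ = _ := by ring

lemma sum_dvd_le (f : ℕ →* ℝ) (h0 : ∀ n, 0 ≤ f n) (d x : ℕ) (hd : 0 < d) :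
    ∑ n ∈ (Finset.Ico 1 x).filter (fun n => d ∣ n), f n ≤ f d * ∑ m ∈ Finset.Ico 1 x, f m := by
  calc _ ≤ ∑ n ∈ (Finset.Ico 1 x).image (fun m => d * m), f n := by
        apply Finset.sum_le_sum_of_subset_of_nonneg
        · intro n hn
          rw [Finset.mem_filter, Finset.mem_Ico] at hn
          obtain ⟨m, rfl⟩ := hn.2
          rw [Finset.mem_image]
          refine ⟨m, ?_, rfl⟩
          rw [Finset.mem_Ico]
          constructor
          · rcases Nat.eq_zero_or_pos m with rfl | h
            · simp at hn
            · exact h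
          · nlinarith
        · intro n _ _; exact h0 n
    _ = ∑ m ∈ Finset.Ico 1 x, f (d * m) := by
        apply Finset.sum_image
        intro a _ b _ hab
        exact Nat.eq_of_mul_eq_mul_left hd hab
    _ = _ := by simp [Finset.mul_sum]

open Classical in
lemma low_part : ∃ C : ℝ, 0 < C ∧ ∀ k x : ℕ, 11 ≤ k → omw k ≤ x →
    ∑ n ∈ (Finset.Ico 1 x).filter (fun n => Om (omw k) n ≤ 17 * k ∧ ∃ d ∈ omD k, d ∣ n), (1:ℝ) / n ≤
      C * (1/2) ^ k * Real.log x := by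
  obtain ⟨C1, hC1, hD⟩ := sum_omD
  obtain ⟨C2, hC2, hM⟩ := moment_half
  refine ⟨C1 * C2 * 4, by positivity, fun k x hk hx => ?_⟩
  have hw2 := two_le_omw k
  have hM' := hM (omw k) x hw2 hx
  have hD' := hD k hk
  have hlog := log_omw k
  set w := omw k with hw
  have hlx : 0 < Real.log x := Real.log_pos (by exact_mod_cast (by omega : 1 < x))
  have hl2 : 0.69 < Real.log 2 := by linarith [Real.log_two_gt_d9]
  have hlw : 0 < Real.log w := Real.log_pos (by exact_mod_cast hw2)
  set q := 1 / √(Real.log w) with hq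
  have hq0 : 0 ≤ q := by positivity
  have hq4 : q ^ 4 ≤ 4 / 2 ^ (38 * k) := by
    have hs2 : √(Real.log w) ^ 2 = Real.log w := Real.sq_sqrt hlw.le
    have e : q ^ 4 = 1 / (Real.log w) ^ 2 := by
      rw [hq, div_pow, one_pow]
      congr 1
      calc √(Real.log w) ^ 4 = (√(Real.log w) ^ 2) ^ 2 := by ring
        _ = _ := by rw [hs2]
    rw [e, hlog, mul_pow, ← pow_mul, div_le_div_iff₀ (by positivity) (by positivity)]
    have e2 : (2:ℝ) ^ (19 * k * 2) = 2 ^ (38 * k) := by congr 1; ring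
    rw [e2]
    have h38 : (0:ℝ) < 2 ^ (38 * k) := by positivity
    have h4l : 1 ≤ 4 * Real.log 2 ^ 2 := by nlinarith
    calc (1:ℝ) * 2 ^ (38 * k) ≤ (4 * Real.log 2 ^ 2) * 2 ^ (38 * k) := by gcongr
      _ = _ := by ring
  have hF0 : ∀ n, 0 ≤ omHom (1/2) w n := fun n => by rw [omHom_apply]; positivity
  calc _ ≤ ∑ n ∈ Finset.Ico 1 x, ∑ d ∈ omD k, 2 ^ (17 * k) *
          (if d ∣ n then omHom (1/2) w n else 0) := by
        rw [Finset.sum_filter]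
        apply Finset.sum_le_sum
        intro n hn
        have hnn : ∀ d ∈ omD k, 0 ≤ (2:ℝ) ^ (17 * k) * (if d ∣ n then omHom (1/2) w n else 0) := by
          intro d _
          split_ifs
          · have := hF0 n; positivity
          · simp
        split_ifs with h
        · obtain ⟨h1, d, hd, hdn⟩ := h
          refine le_trans ?_ (Finset.single_le_sum hnn hd)
          rw [if_pos hdn, omHom_apply, mul_div_assoc']
          gcongr
          calc (1:ℝ) = 2 ^ (Om w n) * (1/2) ^ (Om w n) := by rw [← mul_pow]; norm_num
            _ ≤ _ := by gcongr; norm_num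
        · exact Finset.sum_nonneg hnn
    _ = 2 ^ (17 * k) * ∑ d ∈ omD k, ∑ n ∈ (Finset.Ico 1 x).filter (fun n => d ∣ n),
          omHom (1/2) w n := by
        rw [Finset.sum_comm, Finset.mul_sum]
        apply Finset.sum_congr rfl
        intro d _
        rw [Finset.sum_filter, Finset.mul_sum]
    _ ≤ 2 ^ (17 * k) * ∑ d ∈ omD k, omHom (1/2) w d * ∑ m ∈ Finset.Ico 1 x, omHom (1/2) w m := by
        gcongr with d hd
        apply sum_dvd_le _ hF0
        rw [omD, Finset.mem_filter, Finset.mem_Ico] at hd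
        exact lt_of_lt_of_le (by positivity) hd.1.1
    _ = 2 ^ (17 * k) * ((∑ d ∈ omD k, omHom (1/2) w d) * ∑ m ∈ Finset.Ico 1 x, omHom (1/2) w m) := by
        rw [Finset.sum_mul]
    _ ≤ 2 ^ (17 * k) * ((C1 * 2 ^ (20 * k) * q ^ 3) * (C2 * Real.log x * q)) := by
        simp only [omHom_apply]
        gcongr
    _ = C1 * C2 * Real.log x * (2 ^ (37 * k) * q ^ 4) := by
        have : (2:ℝ) ^ (37 * k) = 2 ^ (17 * k) * 2 ^ (20 * k) := by rw [← pow_add]; congr 1; ring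
        rw [this]; ring
    _ ≤ C1 * C2 * Real.log x * (2 ^ (37 * k) * (4 / 2 ^ (38 * k))) := by gcongr
    _ = _ := by
        have : (2:ℝ) ^ (38 * k) = 2 ^ (37 * k) * 2 ^ k := by rw [← pow_add]; congr 1; ring
        rw [this, one_div, inv_pow]
        field_simp

noncomputable def omRho : ℝ := (2:ℝ) ^ (19/4 : ℝ) * (4/5) ^ 17

lemma omRho_pos : 0 < omRho := by unfold omRho; positivity

lemma omRho_lt : omRho < 1 := by
  have h : omRho ^ 4 < 1 := by
    unfold omRho
    rw [mul_pow, ← Real.rpow_natCast, ← Real.rpow_mul (by norm_num)]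
    norm_num
  by_contra hc
  push Not at hc
  exact absurd (one_le_pow₀ hc : 1 ≤ omRho ^ 4) (by linarith)

lemma high_part : ∃ C : ℝ, 0 < C ∧ ∀ k x : ℕ, omw k ≤ x →
    ∑ n ∈ (Finset.Ico 1 x).filter (fun n => ¬ (Om (omw k) n ≤ 17 * k)), (1:ℝ) / n ≤
      C * omRho ^ k * Real.log x := by
  obtain ⟨C, hC, hM⟩ := moment_up
  refine ⟨C, hC, fun k x hx => ?_⟩
  have hw2 := two_le_omw k
  have hM' := hM (omw k) x hw2 hx
  have hlog := log_omw k
  set w := omw k with hw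
  have hlx : 0 < Real.log x := Real.log_pos (by exact_mod_cast (by omega : 1 < x))
  have hlw : 0 < Real.log w := Real.log_pos (by exact_mod_cast hw2)
  have hl2 : Real.log 2 ≤ 1 := by linarith [Real.log_two_lt_d9]
  calc _ ≤ ∑ n ∈ Finset.Ico 1 x, (4/5 : ℝ) ^ (17 * k) * ((5/4 : ℝ) ^ (Om w n) / n) := by
        rw [Finset.sum_filter]
        apply Finset.sum_le_sum
        intro n hn
        by_cases h : 17 * k < Om w n
        · rw [if_pos (by omega)]
          rw [mul_div_assoc']
          gcongr
          calc (1:ℝ) = (4/5) ^ (17 * k) * (5/4) ^ (17 * k) := by rw [← mul_pow]; norm_num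
            _ ≤ _ := by gcongr; norm_num
        · rw [if_neg (by omega)]
          positivity
    _ = (4/5 : ℝ) ^ (17 * k) * ∑ n ∈ Finset.Ico 1 x, (5/4 : ℝ) ^ (Om w n) / n := by
        rw [Finset.mul_sum]
    _ ≤ (4/5 : ℝ) ^ (17 * k) * (C * Real.log x * (Real.log w) ^ (1/4 : ℝ)) := by gcongr
    _ ≤ (4/5 : ℝ) ^ (17 * k) * (C * Real.log x * ((2:ℝ) ^ (19/4 : ℝ)) ^ k) := by
        gcongr
        have h1 : Real.log w ≤ 2 ^ (19 * k) := by
          rw [hlog]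
          have : (0:ℝ) < 2 ^ (19 * k) := by positivity
          nlinarith
        calc (Real.log w) ^ (1/4 : ℝ) ≤ ((2:ℝ) ^ (19 * k)) ^ (1/4 : ℝ) := by gcongr
          _ = _ := by
            rw [← Real.rpow_natCast, ← Real.rpow_natCast, ← Real.rpow_mul (by norm_num),
              ← Real.rpow_mul (by norm_num)]
            congr 1; push_cast; ring
    _ = _ := by rw [omRho, mul_pow, ← pow_mul]; ring

open Classical in
lemma event_part : ∃ C : ℝ, 0 < C ∧ ∀ k x : ℕ, 11 ≤ k → 2 ≤ x →
    ∑ n ∈ (Finset.Ico 1 x).filter (fun n => ∃ d ∈ omD k, d ∣ n), (1:ℝ) / n ≤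
      C * ((1/2) ^ k + omRho ^ k) * Real.log x := by
  obtain ⟨C1, hC1, h1⟩ := low_part
  obtain ⟨C2, hC2, h2⟩ := high_part
  refine ⟨C1 + C2, by positivity, fun k x hk hx2 => ?_⟩
  have hlx : 0 < Real.log x := Real.log_pos (by exact_mod_cast (by omega : 1 < x))
  have hr := omRho_pos
  by_cases hx : omw k ≤ x
  · have h1' := h1 k x hk hx
    have h2' := h2 k x hx
    have h3 : ∑ n ∈ (Finset.Ico 1 x).filter (fun n => ∃ d ∈ omD k, d ∣ n), (1:ℝ) / n ≤
        ∑ n ∈ (Finset.Ico 1 x).filter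
          (fun n => Om (omw k) n ≤ 17 * k ∧ ∃ d ∈ omD k, d ∣ n), (1:ℝ) / n +
        ∑ n ∈ (Finset.Ico 1 x).filter (fun n => ¬ (Om (omw k) n ≤ 17 * k)), (1:ℝ) / n := by
      rw [Finset.sum_filter, Finset.sum_filter, Finset.sum_filter, ← Finset.sum_add_distrib]
      apply Finset.sum_le_sum
      intro n _
      have : (0:ℝ) ≤ 1 / n := by positivity
      by_cases ha : Om (omw k) n ≤ 17 * k <;> by_cases hb : ∃ d ∈ omD k, d ∣ n <;> simp [ha, hb]
    have h4 : 0 ≤ C1 * omRho ^ k * Real.log x := by positivity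
    have h5 : 0 ≤ C2 * (1/2) ^ k * Real.log x := by positivity
    linarith
  · rw [Finset.filter_false_of_mem]
    · rw [Finset.sum_empty]; positivity
    · rintro n hn ⟨d, hd, hdn⟩
      rw [omD, Finset.mem_filter, Finset.mem_Ico] at hd
      rw [Finset.mem_Ico] at hn
      have h3 := Nat.le_of_dvd (by omega) hdn
      have h4 : omw k ≤ 2 ^ (2 ^ (20 * k)) := by
        rw [omw]
        exact Nat.pow_le_pow_right (by norm_num) (Nat.pow_le_pow_right (by norm_num) (by omega))
      omega

open Classical in
lemma tail_small (ε : ℝ) (hε : 0 < ε) : ∃ T : ℕ, 1 ≤ T ∧ ∀ x : ℕ, 2 ≤ x →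
    ∑ n ∈ (Finset.Ico 1 x).filter (fun n => ∃ d, T ≤ d ∧ (d+1).Prime ∧ d ∣ n), (1:ℝ) / n ≤
      ε * Real.log x := by
  obtain ⟨C, hC, h⟩ := event_part
  have hr := omRho_pos
  set c : ℕ → ℝ := fun k => C * ((1/2) ^ k + omRho ^ k) with hc
  have hc0 : ∀ k, 0 ≤ c k := fun k => by simp only [hc]; positivity
  have hsum : Summable c := by
    apply Summable.mul_left
    exact (summable_geometric_of_lt_one (by norm_num) (by norm_num)).add
      (summable_geometric_of_lt_one hr.le omRho_lt)
  have ht := tendsto_sum_nat_add c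
  obtain ⟨K, hK, hK11⟩ := ((ht.eventually (gt_mem_nhds hε)).and (eventually_ge_atTop 11)).exists
  refine ⟨2 ^ (2 ^ (20 * K)), Nat.one_le_two_pow, fun x hx => ?_⟩
  have hlx : 0 < Real.log x := Real.log_pos (by exact_mod_cast (by omega : 1 < x))
  calc _ ≤ ∑ n ∈ Finset.Ico 1 x, ∑ k ∈ Finset.range x,
        if ∃ d ∈ omD (k + K), d ∣ n then (1:ℝ)/n else 0 := by
        rw [Finset.sum_filter]
        apply Finset.sum_le_sum
        intro n hn
        rw [Finset.mem_Ico] at hn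
        have hnn : ∀ k ∈ Finset.range x,
            0 ≤ (if ∃ d ∈ omD (k + K), d ∣ n then (1:ℝ)/n else 0) := by
          intro k _
          split_ifs <;> positivity
        split_ifs with hd
        · obtain ⟨d, hTd, hdp, hdn⟩ := hd
          have hdn' := Nat.le_of_dvd (by omega) hdn
          have hd0 : d ≠ 0 := by
            have : 0 < 2 ^ (2 ^ (20 * K)) := by positivity
            omega
          set l := Nat.log 2 d with hl
          have hl1 : 2 ^ (20 * K) ≤ l := (Nat.le_log_iff_pow_le (by norm_num) hd0).mpr hTd
          have hl0 : l ≠ 0 := by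
            have : 0 < 2 ^ (20 * K) := by positivity
            omega
          set k := Nat.log (2 ^ 20) l with hk
          have hk1 : K ≤ k := (Nat.le_log_iff_pow_le (by norm_num) hl0).mpr (by
            rw [← pow_mul]; exact hl1)
          have hk2 : (2^20) ^ k ≤ l := Nat.pow_log_le_self _ hl0
          have hk3 : l < (2^20) ^ (k + 1) := Nat.lt_pow_succ_log_self (by norm_num) l
          rw [← pow_mul] at hk2 hk3
          have hd1 : 2 ^ l ≤ d := Nat.pow_log_le_self _ hd0
          have hd2 : d < 2 ^ (l + 1) := Nat.lt_pow_succ_log_self (by norm_num) d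
          have hkx : k - K < x := by
            have := Nat.log_le_self (2^20) l
            have := Nat.log_le_self 2 d
            omega
          refine le_trans ?_ (Finset.single_le_sum hnn (Finset.mem_range.mpr hkx))
          rw [Nat.sub_add_cancel hk1, if_pos]
          refine ⟨d, ?_, hdn⟩
          rw [omD, Finset.mem_filter, Finset.mem_Ico]
          refine ⟨⟨le_trans (Nat.pow_le_pow_right (by norm_num) hk2) hd1, lt_of_lt_of_le hd2
            (Nat.pow_le_pow_right (by norm_num) hk3)⟩, hdp⟩
        · exact Finset.sum_nonneg hnn
    _ = ∑ k ∈ Finset.range x, ∑ n ∈ (Finset.Ico 1 x).filter (fun n => ∃ d ∈ omD (k + K), d ∣ n),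
          (1:ℝ)/n := by
        rw [Finset.sum_comm]
        exact Finset.sum_congr rfl (fun k _ => by rw [Finset.sum_filter])
    _ ≤ ∑ k ∈ Finset.range x, c (k + K) * Real.log x := by
        apply Finset.sum_le_sum
        intro k _
        exact h (k + K) x (by omega) hx
    _ = (∑ k ∈ Finset.range x, c (k + K)) * Real.log x := by rw [Finset.sum_mul]
    _ ≤ ε * Real.log x := by
        gcongr
        exact (((summable_nat_add_iff K).mpr hsum).sum_le_tsum _ (fun k _ => hc0 _)).trans hK.le
lemma log_dens (B : ℕ → Prop) [DecidablePred B] (c : ℝ) (hc : 0 < c) (N0 : ℕ) (hN0 : 1 ≤ N0)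
    (h : ∀ N, N0 ≤ N → c * N ≤ (((Finset.Ico 1 (N+1)).filter B).card : ℝ))
    (hS : ∀ N : ℕ, 1 ≤ N → ∑ n ∈ (Finset.Ico 1 (N+1)).filter B, (1:ℝ) / n ≤
      c / 2 * Real.log ((N:ℝ) + 1)) : False := by
  set cnt : ℕ → ℝ := fun N => (((Finset.Ico 1 (N+1)).filter B).card : ℝ) with hcnt
  set S : ℕ → ℝ := fun N => ∑ n ∈ (Finset.Ico 1 (N+1)).filter B, (1:ℝ) / n with hSdef
  have hc1 : ∀ N, 1 ≤ N → cnt (N+1) = cnt N + if B (N+1) then 1 else 0 := by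
    intro N hN
    simp only [hcnt, Finset.card_filter]
    push_cast
    rw [Finset.sum_Ico_succ_top (by omega)]
  have hs1 : ∀ N, 1 ≤ N → S (N+1) = S N + if B (N+1) then 1 / ((N:ℝ)+1) else 0 := by
    intro N hN
    simp only [hSdef, Finset.sum_filter]
    rw [Finset.sum_Ico_succ_top (by omega)]
    push_cast
    rfl
  set K : ℝ := S N0 - cnt N0 / N0 - c * Real.log ((N0:ℝ) + 1) with hK
  have hU : ∀ N, N0 ≤ N → K ≤ S N - cnt N / N - c * Real.log ((N:ℝ) + 1) := by
    intro N hN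
    induction N, hN using Nat.le_induction with
    | base => exact le_refl _
    | succ N hN ih =>
      refine ih.trans ?_
      have hNpos : (0:ℝ) < N := by exact_mod_cast (by omega : 0 < N)
      rw [hs1 N (by omega), hc1 N (by omega)]
      push_cast
      have e1 : (if B (N+1) then 1 / ((N:ℝ)+1) else 0) = (if B (N+1) then (1:ℝ) else 0) / ((N:ℝ)+1) := by
        split_ifs <;> simp
      have e2 : cnt N / N - cnt N / (N + 1) = cnt N / N * (1 / ((N:ℝ)+1)) := by
        field_simp; ring
      have e3 : c ≤ cnt N / N := by rw [le_div_iff₀ hNpos]; exact h N hN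
      have e4 : c * (1 / ((N:ℝ)+1)) ≤ cnt N / N * (1 / ((N:ℝ)+1)) := by gcongr
      have e5 : Real.log ((N:ℝ) + 1 + 1) - Real.log ((N:ℝ) + 1) ≤ 1 / ((N:ℝ)+1) := by
        rw [← Real.log_div (by positivity) (by positivity)]
        refine (Real.log_le_sub_one_of_pos (by positivity)).trans (le_of_eq ?_)
        field_simp; ring
      have e6 := mul_le_mul_of_nonneg_left e5 hc.le
      rw [e1, add_div]
      linarith
  have hl : Tendsto (fun N : ℕ => Real.log ((N:ℝ) + 1)) atTop atTop :=
    Real.tendsto_log_atTop.comp (tendsto_atTop_add_const_right _ _ tendsto_natCast_atTop_atTop)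
  obtain ⟨N, hN1, hN2⟩ := ((hl.eventually_gt_atTop (-K / (c/2))).and (eventually_ge_atTop N0)).exists
  have a1 := hU N hN2
  have a2 := hS N (by omega)
  have a3 : 0 ≤ cnt N / N := by simp only [hcnt]; positivity
  rw [div_lt_iff₀ (by positivity)] at hN1
  have a4 : S N ≤ c / 2 * Real.log ((N:ℝ) + 1) := a2
  linarith

lemma omegaStar_pos (n : ℕ) (hn : 1 ≤ n) : 1 ≤ omegaStar n := by
  unfold omegaStar
  apply Finset.card_pos.mpr
  refine ⟨1, ?_⟩
  rw [Finset.mem_filter, Nat.mem_divisors]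
  exact ⟨⟨one_dvd _, by omega⟩, by norm_num⟩

lemma omegaStar_le (n T : ℕ) (h : ¬ ∃ d, T ≤ d ∧ (d+1).Prime ∧ d ∣ n) : omegaStar n ≤ T := by
  unfold omegaStar
  calc _ ≤ (Finset.range T).card := by
        apply Finset.card_le_card
        intro d hd
        rw [Finset.mem_filter, Nat.mem_divisors] at hd
        rw [Finset.mem_range]
        by_contra hc
        exact h ⟨d, by omega, hd.2, hd.1.1⟩
    _ = T := by simp

theorem level_set_densities_sum_to_one (δ : ℕ → ℝ)
    (hδ : ∀ k : ℕ, 0 < k →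
      Tendsto (fun x : ℝ =>
          (((Finset.Icc 1 ⌊x⌋₊).filter (fun n => omegaStar n = k)).card : ℝ) / x)
        atTop (nhds (δ k))) :
    HasSum (fun k : ℕ => δ (k + 1)) 1 := by
  classical
  have hnn : ∀ k, 0 ≤ δ (k+1) := by
    intro k
    refine ge_of_tendsto (hδ (k+1) (by omega)) ?_
    filter_upwards [eventually_ge_atTop 0] with x hx
    positivity
  have hnat : ∀ k : ℕ, Tendsto (fun N : ℕ =>
      (((Finset.Icc 1 N).filter (fun n => omegaStar n = k + 1)).card : ℝ) / N) atTop
      (nhds (δ (k+1))) := by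
    intro k
    have := (hδ (k+1) (by omega)).comp (tendsto_natCast_atTop_atTop (R := ℝ))
    refine this.congr (fun N => ?_)
    simp
  have hpart : ∀ K : ℕ, Tendsto (fun N : ℕ =>
      ((∑ k ∈ Finset.range K, ((Finset.Icc 1 N).filter (fun n => omegaStar n = k + 1)).card : ℕ) : ℝ) / N)
      atTop (nhds (∑ k ∈ Finset.range K, δ (k+1))) := by
    intro K
    have := tendsto_finsetSum (Finset.range K) (fun k _ => hnat k)
    refine this.congr (fun N => ?_)
    push_cast
    rw [Finset.sum_div]
  have hle : ∀ K : ℕ, ∑ k ∈ Finset.range K, δ (k+1) ≤ 1 := by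
    intro K
    refine le_of_tendsto (hpart K) ?_
    filter_upwards with N
    apply div_le_one_of_le₀ _ (by positivity)
    have : ∑ k ∈ Finset.range K, ((Finset.Icc 1 N).filter (fun n => omegaStar n = k + 1)).card ≤ N := by
      rw [← Finset.card_biUnion]
      · calc _ ≤ (Finset.Icc 1 N).card := by
              apply Finset.card_le_card
              intro n hn
              rw [Finset.mem_biUnion] at hn
              obtain ⟨k, _, hk⟩ := hn
              exact (Finset.mem_filter.mp hk).1
          _ = N := by simp
      · intro i _ j _ hij
        refine Finset.disjoint_left.mpr ?_
        intro n h1 h2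
        have := (Finset.mem_filter.mp h1).2
        have := (Finset.mem_filter.mp h2).2
        omega
    exact_mod_cast this
  have hmono : Monotone (fun K : ℕ => ∑ k ∈ Finset.range K, δ (k+1)) := by
    apply monotone_nat_of_le_succ
    intro K
    rw [Finset.sum_range_succ]
    linarith [hnn K]
  have hge : ∀ ε : ℝ, 0 < ε → ∃ T : ℕ, 1 - ε ≤ ∑ k ∈ Finset.range T, δ (k+1) := by
    intro ε hε
    obtain ⟨T, hT1, hT⟩ := tail_small (ε/2) (by positivity)
    refine ⟨T, ?_⟩
    by_contra hcon
    push Not at hcon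
    have hev := (hpart T).eventually (gt_mem_nhds hcon)
    obtain ⟨N1, hN1⟩ := eventually_atTop.mp hev
    refine log_dens (fun n => ∃ d, T ≤ d ∧ (d+1).Prime ∧ d ∣ n) ε hε (N1 + 1) (by omega) ?_ ?_
    · intro N hN
      have h1 := hN1 N (by omega)
      have hNpos : (0:ℝ) < N := by exact_mod_cast (by omega : 0 < N)
      rw [div_lt_iff₀ hNpos] at h1
      have h2 : N ≤ ((Finset.Ico 1 (N+1)).filter (fun n => ∃ d, T ≤ d ∧ (d+1).Prime ∧ d ∣ n)).card +
          ∑ k ∈ Finset.range T, ((Finset.Icc 1 N).filter (fun n => omegaStar n = k + 1)).card := by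
        have e := Finset.card_filter_add_card_filter_not (s := Finset.Ico 1 (N+1))
          (fun n => ∃ d, T ≤ d ∧ (d+1).Prime ∧ d ∣ n)
        rw [Nat.card_Ico, Nat.add_sub_cancel] at e
        have e2 : ((Finset.Ico 1 (N+1)).filter (fun n => ¬ ∃ d, T ≤ d ∧ (d+1).Prime ∧ d ∣ n)).card ≤
            ∑ k ∈ Finset.range T, ((Finset.Icc 1 N).filter (fun n => omegaStar n = k + 1)).card := by
          refine le_trans (Finset.card_le_card ?_) Finset.card_biUnion_le
          intro n hn
          rw [Finset.mem_filter, Finset.mem_Ico] at hn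
          have a1 := omegaStar_pos n hn.1.1
          have a2 := omegaStar_le n T hn.2
          rw [Finset.mem_biUnion]
          refine ⟨omegaStar n - 1, Finset.mem_range.mpr (by omega), ?_⟩
          rw [Finset.mem_filter, Finset.mem_Icc]
          omega
        omega
      have h3 : (N:ℝ) ≤ (((Finset.Ico 1 (N+1)).filter
          (fun n => ∃ d, T ≤ d ∧ (d+1).Prime ∧ d ∣ n)).card : ℝ) +
          ((∑ k ∈ Finset.range T, ((Finset.Icc 1 N).filter
            (fun n => omegaStar n = k + 1)).card : ℕ) : ℝ) := by
        exact_mod_cast h2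
      linarith
    · intro N hN
      have := hT (N+1) (by omega)
      push_cast at this
      convert this using 2
  rw [hasSum_iff_tendsto_nat_of_nonneg hnn]
  rw [Metric.tendsto_atTop]
  intro ε hε
  obtain ⟨T, hT⟩ := hge (ε/2) (by positivity)
  refine ⟨T, fun n hn => ?_⟩
  have h1 := hmono hn
  have h2 := hle n
  simp only at h1
  rw [Real.dist_eq, abs_lt]
  constructor <;> linarith
end

section
/- For every positive integer k there exists a positive integer n with ω*(n) = k; that is, the level set L_k = {n ∈ ℕ : ω*(n) = k} is nonempty. -/
open Filter Real

section SelbergPart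
open Finset ArithmeticFunction
open scoped ArithmeticFunction.Moebius

theorem sum_moebius_between {P l m : ℕ} (hP : Squarefree P) (hm : m ∣ P) :
    (∑ d ∈ P.divisors, if l ∣ d ∧ d ∣ m then (μ d : ℝ) else 0) = if l = m then (μ l : ℝ) else 0 := by
  have hP0 : P ≠ 0 := hP.ne_zero
  have hm0 : m ≠ 0 := fun h => hP0 (by simpa [h] using hm)
  have hmsq : Squarefree m := hP.squarefree_of_dvd hm
  have h1 : (∑ d ∈ P.divisors, if l ∣ d ∧ d ∣ m then (μ d : ℝ) else 0)
      = ∑ d ∈ m.divisors with l ∣ d, (μ d : ℝ) := by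
    rw [← sum_filter]
    apply sum_congr _ (fun _ _ => rfl)
    ext d
    simp only [mem_filter, Nat.mem_divisors]
    constructor
    · rintro ⟨_, h1, h2⟩; exact ⟨⟨h2, hm0⟩, h1⟩
    · rintro ⟨⟨h2, _⟩, h1⟩; exact ⟨⟨h2.trans hm, hP0⟩, h1, h2⟩
  rw [h1]
  by_cases hlm : l ∣ m
  · obtain ⟨k, rfl⟩ := hlm
    have hl0 : 0 < l := Nat.pos_of_ne_zero (left_ne_zero_of_mul hm0)
    have hk0 : k ≠ 0 := right_ne_zero_of_mul hm0
    have h2 : ((l * k).divisors.filter (fun d => l ∣ d)) = k.divisors.image (fun e => l * e) := by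
      ext d
      simp only [mem_filter, Nat.mem_divisors, mem_image]
      constructor
      · rintro ⟨⟨h, _⟩, e, rfl⟩
        exact ⟨e, ⟨Nat.dvd_of_mul_dvd_mul_left hl0 h, hk0⟩, rfl⟩
      · rintro ⟨e, ⟨he, _⟩, rfl⟩
        exact ⟨⟨Nat.mul_dvd_mul_left l he, hm0⟩, dvd_mul_right _ _⟩
    rw [h2, sum_image (fun a _ b _ h => Nat.eq_of_mul_eq_mul_left hl0 h)]
    have hcop : Nat.Coprime l k := Nat.coprime_of_squarefree_mul hmsq
    have h3 : ∑ e ∈ k.divisors, (μ (l * e) : ℝ) = μ l * ∑ e ∈ k.divisors, (μ e : ℝ) := by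
      rw [mul_sum]
      apply sum_congr rfl
      intro e he
      have : Nat.Coprime l e := hcop.coprime_dvd_right (Nat.dvd_of_mem_divisors he)
      rw [isMultiplicative_moebius.map_mul_of_coprime this]
      push_cast; ring
    rw [h3]
    have h4 : ∑ e ∈ k.divisors, (μ e : ℝ) = if k = 1 then 1 else 0 := by
      have := congrArg (fun f : ArithmeticFunction ℤ => f k) coe_zeta_mul_moebius
      simp only [coe_zeta_mul_apply, one_apply] at this
      exact_mod_cast this
    rw [h4]
    by_cases hk : k = 1
    · simp [hk]
    · have : l ≠ l * k := fun h => hk (by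
        have := Nat.eq_of_mul_eq_mul_left hl0 (show l * 1 = l * k by simpa using h)
        omega)
      simp [hk, this]
  · rw [if_neg (fun h : l = m => hlm (dvd_of_eq h))]
    apply sum_eq_zero
    intro d hd
    simp only [mem_filter, Nat.mem_divisors] at hd
    exact absurd (hd.2.trans hd.1.1) hlm

theorem exists_selberg_weights (s : BoundingSieve) (R : ℕ) (hR : 1 ≤ R) :
    ∃ w : ℕ → ℝ, w 1 = 1 ∧ (∀ d, R < d → w d = 0) ∧
      (∀ d, d ∣ s.prodPrimes → |w d| ≤ (s.nu d)⁻¹) ∧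
      s.mainSum (BoundingSieve.lambdaSquared w) =
        1 / ∑ l ∈ s.prodPrimes.divisors with l ≤ R, s.selbergTerms l := by
  set D := s.prodPrimes.divisors with hD
  set S := ∑ l ∈ D with l ≤ R, s.selbergTerms l with hS
  have hmem : ∀ l ∈ D, l ∣ s.prodPrimes := fun l hl => Nat.dvd_of_mem_divisors hl
  have hg : ∀ l ∈ D, 0 < s.selbergTerms l := fun l hl => BoundingSieve.selbergTerms_pos (hmem l hl)
  have hP0 : s.prodPrimes ≠ 0 := s.prodPrimes_squarefree.ne_zero
  have h1D : 1 ∈ D := by simp [hD, hP0]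
  have hSpos : 0 < S := by
    apply sum_pos
    · intro l hl; exact hg l (mem_of_mem_filter l hl)
    · exact ⟨1, by simp [h1D, hR]⟩
  let w : ℕ → ℝ := fun d => (s.nu d)⁻¹ * μ d * S⁻¹ *
    ∑ l ∈ D with l ≤ R, if d ∣ l then s.selbergTerms l else 0
  have hle : ∀ d, (∑ l ∈ D with l ≤ R, if d ∣ l then s.selbergTerms l else 0) ≤ S := by
    intro d
    apply sum_le_sum
    intro l hl
    split_ifs
    · exact le_rfl
    · exact (hg l (mem_of_mem_filter l hl)).le
  have hnn : ∀ d, 0 ≤ (∑ l ∈ D with l ≤ R, if d ∣ l then s.selbergTerms l else 0) := by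
    intro d
    apply sum_nonneg
    intro l hl
    split_ifs
    · exact (hg l (mem_of_mem_filter l hl)).le
    · exact le_rfl
  refine ⟨w, ?_, ?_, ?_, ?_⟩
  · simp only [w, one_dvd, if_true, s.nu_mult.map_one]
    rw [← hS]
    simp [hSpos.ne']
  · intro d hd
    have : (∑ l ∈ D with l ≤ R, if d ∣ l then s.selbergTerms l else 0) = 0 := by
      apply sum_eq_zero
      intro l hl
      rw [mem_filter] at hl
      rw [if_neg]
      intro hdl
      have := Nat.le_of_dvd (Nat.pos_of_ne_zero (fun h => hP0 (by
        have := hmem l hl.1; rw [h] at this; simpa using this))) hdl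
      omega
    simp [w, this]
  · intro d hd
    have hnu := BoundingSieve.nu_pos_of_dvd_prodPrimes hd
    have hmu : |(μ d : ℝ)| ≤ 1 := by
      have := @abs_moebius_le_one d
      exact_mod_cast this
    simp only [w, abs_mul, abs_inv, abs_of_pos hnu, abs_of_pos hSpos, abs_of_nonneg (hnn d)]
    have h1 : S⁻¹ * (∑ l ∈ D with l ≤ R, if d ∣ l then s.selbergTerms l else 0) ≤ 1 := by
      rw [inv_mul_le_iff₀ hSpos]; simpa using hle d
    have h0 : 0 ≤ S⁻¹ * (∑ l ∈ D with l ≤ R, if d ∣ l then s.selbergTerms l else 0) :=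
      mul_nonneg (inv_nonneg.2 hSpos.le) (hnn d)
    calc (s.nu d)⁻¹ * |(μ d : ℝ)| * S⁻¹ * _ = (s.nu d)⁻¹ * (|(μ d : ℝ)| * (S⁻¹ *
          (∑ l ∈ D with l ≤ R, if d ∣ l then s.selbergTerms l else 0))) := by ring
      _ ≤ (s.nu d)⁻¹ * 1 := by
        apply mul_le_mul_of_nonneg_left _ (inv_nonneg.2 hnu.le)
        exact mul_le_one₀ hmu h0 h1
      _ = _ := mul_one _
  · rw [BoundingSieve.mainSum_lambdaSquared_eq_sum_mul_sum_sq]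
    have key : ∀ l ∈ D, (∑ d ∈ D, if l ∣ d then s.nu d * w d else 0)
        = if l ≤ R then μ l * s.selbergTerms l * S⁻¹ else 0 := by
      intro l hl
      have h1 : ∀ d ∈ D, (if l ∣ d then s.nu d * w d else 0) =
          ∑ m ∈ D with m ≤ R, (s.selbergTerms m * S⁻¹) *
            (if l ∣ d ∧ d ∣ m then (μ d : ℝ) else 0) := by
        intro d hd
        have hnu := (BoundingSieve.nu_pos_of_dvd_prodPrimes (hmem d hd)).ne'
        split_ifs with hld
        · simp only [w]
          rw [show ∀ x : ℝ, s.nu d * ((s.nu d)⁻¹ * μ d * S⁻¹ * x) = μ d * S⁻¹ * x by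
            intro x; field_simp]
          rw [mul_sum]
          apply sum_congr rfl
          intro m hm
          by_cases hdm : d ∣ m
          · simp [hld, hdm]; ring
          · simp [hdm]
        · simp [hld]
      rw [sum_congr rfl h1, sum_comm]
      have h2 : ∀ m ∈ D.filter (fun m => m ≤ R), (∑ d ∈ D, (s.selbergTerms m * S⁻¹) *
            (if l ∣ d ∧ d ∣ m then (μ d : ℝ) else 0)) =
            if l = m then μ l * s.selbergTerms l * S⁻¹ else 0 := by
        intro m hm
        rw [← mul_sum, sum_moebius_between s.prodPrimes_squarefree (hmem m (mem_of_mem_filter m hm))]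
        split_ifs with h
        · subst h; ring
        · simp
      rw [sum_congr rfl h2, sum_ite_eq]
      simp [hl]
    have key2 : ∀ l ∈ D, (s.selbergTerms l)⁻¹ *
        (∑ d ∈ D, if l ∣ d then s.nu d * w d else 0) ^ 2
        = if l ≤ R then s.selbergTerms l * (S⁻¹)^2 else 0 := by
      intro l hl
      rw [key l hl]
      have hsq : (μ l : ℝ)^2 = 1 := by
        have := moebius_sq_eq_one_of_squarefree (s.prodPrimes_squarefree.squarefree_of_dvd (hmem l hl))
        exact_mod_cast this
      have := (hg l hl).ne'
      split_ifs
      · rw [mul_pow, mul_pow, hsq]; field_simp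
      · simp
    rw [sum_congr rfl key2, ← sum_filter, ← sum_mul, ← hS]
    field_simp

theorem selberg_bound_sieve (s : BoundingSieve) (R : ℕ) (hR : 1 ≤ R)
    (hnu : ∀ d, d ∣ s.prodPrimes → (s.nu d)⁻¹ ≤ d)
    (hrem : ∀ d, d ∣ s.prodPrimes → |s.rem d| ≤ d) :
    s.siftedSum ≤ s.totalMass / (∑ l ∈ s.prodPrimes.divisors with l ≤ R, s.selbergTerms l)
      + (R : ℝ) ^ 6 := by
  obtain ⟨w, hw1, hwR, hwb, hmain⟩ := exists_selberg_weights s R hR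
  have h := BoundingSieve.siftedSum_le_mainSum_errSum_of_upperMoebius (s := s) _
    (BoundingSieve.upperMoebius_lambdaSquared w hw1)
  rw [hmain] at h
  refine h.trans ?_
  rw [mul_one_div]
  gcongr
  have hP0 : s.prodPrimes ≠ 0 := s.prodPrimes_squarefree.ne_zero
  set D := s.prodPrimes.divisors with hD
  have hw : ∀ d ∈ D, |w d| ≤ if d ≤ R then (R : ℝ) else 0 := by
    intro d hd
    have hd' := Nat.dvd_of_mem_divisors hd
    split_ifs with hdR
    · exact (hwb d hd').trans ((hnu d hd').trans (by exact_mod_cast hdR))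
    · rw [hwR d (by omega)]; simp
  unfold BoundingSieve.errSum
  have e1 : ∀ d ∈ D, |BoundingSieve.lambdaSquared w d| * |s.rem d| ≤
      ∑ d1 ∈ D, ∑ d2 ∈ D, if d = Nat.lcm d1 d2 then |w d1| * |w d2| * d else 0 := by
    intro d hd
    have hd' := Nat.dvd_of_mem_divisors hd
    have hsub : d.divisors ⊆ D := Nat.divisors_subset_of_dvd hP0 hd'
    calc |BoundingSieve.lambdaSquared w d| * |s.rem d|
        ≤ |BoundingSieve.lambdaSquared w d| * d := by
          gcongr; exact hrem d hd'
      _ ≤ (∑ d1 ∈ d.divisors, ∑ d2 ∈ d.divisors,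
            if d = Nat.lcm d1 d2 then |w d1| * |w d2| else 0) * d := by
          gcongr
          unfold BoundingSieve.lambdaSquared
          refine (abs_sum_le_sum_abs _ _).trans (sum_le_sum fun d1 _ => ?_)
          refine (abs_sum_le_sum_abs _ _).trans (sum_le_sum fun d2 _ => ?_)
          split_ifs
          · rw [abs_mul]
          · simp
      _ = ∑ d1 ∈ d.divisors, ∑ d2 ∈ d.divisors,
            if d = Nat.lcm d1 d2 then |w d1| * |w d2| * d else 0 := by
          rw [sum_mul]
          refine sum_congr rfl fun d1 _ => ?_
          rw [sum_mul]
          refine sum_congr rfl fun d2 _ => ?_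
          split_ifs <;> simp
      _ ≤ ∑ d1 ∈ D, ∑ d2 ∈ d.divisors,
            if d = Nat.lcm d1 d2 then |w d1| * |w d2| * d else 0 := by
          refine sum_le_sum_of_subset_of_nonneg hsub fun d1 _ _ => sum_nonneg fun d2 _ => ?_
          split_ifs <;> positivity
      _ ≤ _ := by
          refine sum_le_sum fun d1 _ => ?_
          refine sum_le_sum_of_subset_of_nonneg hsub fun d2 _ _ => ?_
          split_ifs <;> positivity
  refine (sum_le_sum e1).trans ?_
  rw [sum_comm]
  have e2 : ∀ d1 ∈ D, (∑ d ∈ D, ∑ d2 ∈ D, if d = Nat.lcm d1 d2 then |w d1| * |w d2| * (d:ℝ) else 0)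
      ≤ ∑ d2 ∈ D, (if d1 ≤ R then (R:ℝ)^2 else 0) * (if d2 ≤ R then (R:ℝ)^2 else 0) := by
    intro d1 hd1
    rw [sum_comm]
    refine sum_le_sum fun d2 hd2 => ?_
    rw [sum_ite_eq_of_mem' _ _ _ (by
      rw [hD, Nat.mem_divisors]
      exact ⟨Nat.lcm_dvd (Nat.dvd_of_mem_divisors hd1) (Nat.dvd_of_mem_divisors hd2), hP0⟩)]
    have a1 := hw d1 hd1
    have a2 := hw d2 hd2
    have hl : ((Nat.lcm d1 d2 : ℕ) : ℝ) ≤ d1 * d2 := by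
      have h1 : 0 < d1 := Nat.pos_of_mem_divisors hd1
      have h2 : 0 < d2 := Nat.pos_of_mem_divisors hd2
      exact_mod_cast Nat.le_of_dvd (Nat.mul_pos h1 h2) (Nat.lcm_dvd_mul d1 d2)
    by_cases h1 : d1 ≤ R
    · by_cases h2 : d2 ≤ R
      · simp only [h1, h2, if_true] at a1 a2 ⊢
        have c1 : (d1 : ℝ) ≤ R := by exact_mod_cast h1
        have c2 : (d2 : ℝ) ≤ R := by exact_mod_cast h2
        calc |w d1| * |w d2| * ((Nat.lcm d1 d2 : ℕ) : ℝ) ≤ R * R * (R * R) := by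
              gcongr
              exact hl.trans (by gcongr)
          _ = _ := by ring
      · simp only [h1, h2, if_true, if_false] at a1 a2 ⊢
        have : |w d2| = 0 := le_antisymm a2 (abs_nonneg _)
        simp [this]
    · simp only [h1, if_false] at a1 ⊢
      have : |w d1| = 0 := le_antisymm a1 (abs_nonneg _)
      simp [this]
  refine (sum_le_sum e2).trans ?_
  simp_rw [← mul_sum]
  rw [← sum_mul]
  have e3 : (∑ d ∈ D, if d ≤ R then (R:ℝ)^2 else 0) ≤ (R:ℝ)^3 := by
    rw [← sum_filter, sum_const, nsmul_eq_mul]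
    have : (D.filter (fun d => d ≤ R)).card ≤ R := by
      calc (D.filter (fun d => d ≤ R)).card ≤ (Finset.Icc 1 R).card := by
            apply card_le_card
            intro d hd
            rw [mem_filter] at hd
            rw [Finset.mem_Icc]
            exact ⟨Nat.pos_of_mem_divisors hd.1, hd.2⟩
        _ = R := by simp
    have : ((D.filter (fun d => d ≤ R)).card : ℝ) ≤ R := by exact_mod_cast this
    calc _ ≤ (R:ℝ) * R^2 := by gcongr
      _ = _ := by ring
  have e0 : 0 ≤ (∑ d ∈ D, if d ≤ R then (R:ℝ)^2 else 0) :=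
    sum_nonneg fun d _ => by split_ifs <;> positivity
  calc _ ≤ (R:ℝ)^3 * (R:ℝ)^3 := by gcongr
    _ = _ := by ring

end SelbergPart

section SievePart
open Finset ArithmeticFunction

/-- the density function of the sieve -/
noncomputable def sieveNu (κ : ℕ) : ArithmeticFunction ℝ :=
  ArithmeticFunction.prodPrimeFactors (fun p => (κ : ℝ) / p)

theorem sieveNu_apply (κ : ℕ) {d : ℕ} (hd : d ≠ 0) :
    sieveNu κ d = ∏ p ∈ d.primeFactors, (κ : ℝ) / p := by
  unfold sieveNu
  rw [ArithmeticFunction.prodPrimeFactors_apply hd]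

theorem sieveNu_prime (κ : ℕ) {p : ℕ} (hp : p.Prime) : sieveNu κ p = (κ : ℝ) / p := by
  rw [sieveNu_apply κ hp.ne_zero, hp.primeFactors]; simp

theorem sieve_count (N R : ℕ) (hR : 1 ≤ R) (F : ℕ → ℕ) (P κ : ℕ) (hP : Squarefree P)
    (hκ : 1 ≤ κ) (hκp : ∀ p : ℕ, p.Prime → p ∣ P → κ < p)
    (hA : ∀ d, d ∣ P → |(((range N).filter (fun j => d ∣ F j)).card : ℝ)
      - (∏ p ∈ d.primeFactors, (κ : ℝ) / p) * N| ≤ d) :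
    (((range N).filter (fun j => Nat.Coprime P (F j))).card : ℝ) ≤
      N / (∑ l ∈ P.divisors with l ≤ R, ∏ p ∈ l.primeFactors, ((κ : ℝ) / p * (1 - (κ : ℝ) / p)⁻¹))
        + (R : ℝ) ^ 6 := by
  have hP0 := hP.ne_zero
  let s : BoundingSieve :=
    { support := (range N).image F
      prodPrimes := P
      prodPrimes_squarefree := hP
      weights := fun n => (((range N).filter (fun j => F j = n)).card : ℝ)
      weights_nonneg := fun n => by positivity
      totalMass := N
      nu := sieveNu κ
      nu_mult := ArithmeticFunction.IsMultiplicative.prodPrimeFactors _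
      nu_pos_of_prime := by
        intro p hp _
        rw [sieveNu_prime κ hp]
        have := hp.pos
        positivity
      nu_lt_one_of_prime := by
        intro p hp hpP
        rw [sieveNu_prime κ hp]
        have h0 : (0:ℝ) < p := by exact_mod_cast hp.pos
        rw [div_lt_one h0]
        exact_mod_cast hκp p hp hpP }
  have hcount : ∀ (q : ℕ → Prop) [DecidablePred q],
      (∑ n ∈ (range N).image F, if q n then (((range N).filter (fun j => F j = n)).card : ℝ) else 0)
      = (((range N).filter (fun j => q (F j))).card : ℝ) := by
    intro q _
    have := Finset.card_eq_sum_card_fiberwise (f := F) (s := (range N).filter (fun j => q (F j)))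
      (t := (range N).image F) (by
        intro j hj
        rw [Finset.mem_coe, mem_filter] at hj
        exact Finset.mem_coe.2 (mem_image_of_mem F hj.1))
    rw [this]
    push_cast
    refine sum_congr rfl fun n _ => ?_
    split_ifs with hq
    · congr 2
      ext j
      simp only [mem_filter]
      constructor
      · rintro ⟨h1, h2⟩; exact ⟨⟨h1, by rw [h2]; exact hq⟩, h2⟩
      · rintro ⟨⟨h1, _⟩, h2⟩; exact ⟨h1, h2⟩
    · symm
      rw [Nat.cast_eq_zero, card_eq_zero, filter_eq_empty_iff]
      intro j hj h2
      rw [mem_filter] at hj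
      exact hq (h2 ▸ hj.2)
  have hs := selberg_bound_sieve s R hR ?_ ?_
  · have h1 : s.siftedSum = (((range N).filter (fun j => Nat.Coprime P (F j))).card : ℝ) :=
      hcount (fun n => Nat.Coprime P n)
    rw [h1] at hs
    have h2 : (∑ l ∈ s.prodPrimes.divisors with l ≤ R, s.selbergTerms l) =
      (∑ l ∈ P.divisors with l ≤ R, ∏ p ∈ l.primeFactors, ((κ : ℝ) / p * (1 - (κ : ℝ) / p)⁻¹)) := by
      refine sum_congr rfl fun l hl => ?_
      have hl0 : l ≠ 0 := (Nat.pos_of_mem_divisors (mem_of_mem_filter l hl)).ne'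
      rw [BoundingSieve.selbergTerms_apply]
      change sieveNu κ l * ∏ p ∈ l.primeFactors, (1 - sieveNu κ p)⁻¹ = _
      rw [sieveNu_apply κ hl0, ← prod_mul_distrib]
      refine prod_congr rfl fun p hp => ?_
      rw [sieveNu_prime κ (Nat.prime_of_mem_primeFactors hp)]
    rw [h2] at hs
    exact hs
  · intro d hd
    change (sieveNu κ d)⁻¹ ≤ d
    have hdP : d ∣ P := hd
    have hd0 : d ≠ 0 := fun h => hP0 (by rw [h] at hdP; simpa using hdP)
    rw [sieveNu_apply κ hd0, ← prod_inv_distrib]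
    have : (d : ℝ) = ∏ p ∈ d.primeFactors, (p : ℝ) := by
      conv_lhs => rw [← Nat.prod_primeFactors_of_squarefree (hP.squarefree_of_dvd hdP)]
      push_cast; rfl
    rw [this]
    apply Finset.prod_le_prod
    · intros; positivity
    · intro p hp
      rw [inv_div]
      have : (1:ℝ) ≤ κ := by exact_mod_cast hκ
      exact div_le_self (by positivity) this
  · intro d hd
    have hdP : d ∣ P := hd
    have hd0 : d ≠ 0 := fun h => hP0 (by rw [h] at hdP; simpa using hdP)
    have h1 : s.rem d = (((range N).filter (fun j => d ∣ F j)).card : ℝ)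
      - (∏ p ∈ d.primeFactors, (κ : ℝ) / p) * N := by
      unfold BoundingSieve.rem BoundingSieve.multSum
      rw [← sieveNu_apply κ hd0, ← hcount (fun n => d ∣ n)]
    rw [h1]
    exact hA d hdP

theorem sum_le_sum_inj {ι κ : Type*} [DecidableEq κ] {s : Finset ι} {t : Finset κ} (i : ι → κ)
    {f : ι → ℝ} {g : κ → ℝ} (hi : ∀ a ∈ s, i a ∈ t)
    (hinj : ∀ a ∈ s, ∀ b ∈ s, i a = i b → a = b)
    (hg : ∀ b ∈ t, 0 ≤ g b) (hfg : ∀ a ∈ s, f a ≤ g (i a)) :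
    ∑ a ∈ s, f a ≤ ∑ b ∈ t, g b := by
  calc ∑ a ∈ s, f a ≤ ∑ a ∈ s, g (i a) := sum_le_sum hfg
    _ = ∑ b ∈ s.image i, g b := (sum_image (fun a ha b hb h => hinj a ha b hb h)).symm
    _ ≤ _ := sum_le_sum_of_subset_of_nonneg (fun b hb => by
        obtain ⟨a, ha, rfl⟩ := mem_image.1 hb
        exact hi a ha) (fun b hb _ => hg b hb)

/-- sum of reciprocals avoiding a finite set of primes -/
theorem sum_inv_avoid (s : Finset ℕ) (hs : ∀ p ∈ s, p.Prime) (R : ℕ) :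
    (∏ p ∈ s, (1 - (p:ℝ)⁻¹)) * (∑ n ∈ Icc 1 R, (n:ℝ)⁻¹) ≤
      ∑ n ∈ Icc 1 R with (∀ p ∈ s, ¬ p ∣ n), (n:ℝ)⁻¹ := by
  induction s using Finset.induction_on with
  | empty => simp
  | insert p s hps ih =>
    have ih' := ih (fun q hq => hs q (mem_insert_of_mem hq))
    have hp : p.Prime := hs p (mem_insert_self p s)
    have hp0 : (0:ℝ) < p := by exact_mod_cast hp.pos
    have hp1 : (p:ℝ)⁻¹ ≤ 1 := inv_le_one_of_one_le₀ (by exact_mod_cast hp.one_lt.le)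
    rw [prod_insert hps, mul_assoc]
    set A := ∑ n ∈ Icc 1 R with (∀ p ∈ s, ¬ p ∣ n), (n:ℝ)⁻¹ with hA
    have h1 : A = (∑ n ∈ Icc 1 R with (∀ q ∈ insert p s, ¬ q ∣ n), (n:ℝ)⁻¹) +
        ∑ n ∈ Icc 1 R with ((∀ q ∈ s, ¬ q ∣ n) ∧ p ∣ n), (n:ℝ)⁻¹ := by
      rw [hA, ← sum_filter_not_add_sum_filter _ (fun n => p ∣ n), filter_filter, filter_filter]
      congr 2
      ext n
      simp only [mem_filter, mem_insert, forall_eq_or_imp]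
      tauto
    have h2 : (∑ n ∈ Icc 1 R with ((∀ q ∈ s, ¬ q ∣ n) ∧ p ∣ n), (n:ℝ)⁻¹) ≤ (p:ℝ)⁻¹ * A := by
      rw [hA, mul_sum]
      apply sum_le_sum_inj (fun n => n / p)
      · intro n hn
        simp only [mem_filter, Finset.mem_Icc] at hn ⊢
        obtain ⟨⟨hn1, hn2⟩, h3, m, rfl⟩ := hn
        rw [Nat.mul_div_cancel_left _ hp.pos]
        refine ⟨⟨Nat.pos_of_ne_zero (by rintro rfl; simp at hn1), ?_⟩, ?_⟩
        · exact (Nat.le_mul_of_pos_left m hp.pos).trans hn2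
        · intro q hq hqm
          exact h3 q hq (hqm.mul_left p)
      · intro a ha b hb hab
        simp only [mem_filter] at ha hb
        obtain ⟨_, _, a, rfl⟩ := ha
        obtain ⟨_, _, b, rfl⟩ := hb
        rw [Nat.mul_div_cancel_left _ hp.pos, Nat.mul_div_cancel_left _ hp.pos] at hab
        rw [hab]
      · intros; positivity
      · intro a ha
        simp only [mem_filter] at ha
        obtain ⟨_, _, a, rfl⟩ := ha
        rw [Nat.mul_div_cancel_left _ hp.pos]
        push_cast
        rw [mul_inv]
    nlinarith [mul_le_mul_of_nonneg_left ih' (sub_nonneg.2 hp1)]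


theorem totient_div_eq (H : ℕ) (hH : H ≠ 0) :
    (∏ p ∈ H.primeFactors, (1 - (p:ℝ)⁻¹)) = (H.totient : ℝ) / H := by
  have h := Nat.totient_eq_mul_prod_factors H
  have h2 : (H.totient : ℝ) = H * ∏ p ∈ H.primeFactors, (1 - (p:ℝ)⁻¹) := by
    have := congrArg (fun x : ℚ => (x : ℝ)) h
    push_cast at this
    exact this
  rw [h2]
  have : (H:ℝ) ≠ 0 := by exact_mod_cast hH
  field_simp

theorem sum_inv_coprime (H : ℕ) (hH : H ≠ 0) (R : ℕ) (hR : 1 ≤ R) :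
    (H.totient : ℝ) / H * Real.log R ≤ ∑ n ∈ Icc 1 R with Nat.Coprime n H, (n:ℝ)⁻¹ := by
  have h1 := sum_inv_avoid H.primeFactors (fun p hp => Nat.prime_of_mem_primeFactors hp) R
  rw [totient_div_eq H hH] at h1
  have h2 : Real.log R ≤ ∑ n ∈ Icc 1 R, (n:ℝ)⁻¹ := by
    have := log_add_one_le_harmonic R
    rw [harmonic_eq_sum_Icc] at this
    push_cast at this
    refine le_trans (Real.log_le_log (by exact_mod_cast hR) (by linarith)) this
  calc _ ≤ (H.totient : ℝ) / H * ∑ n ∈ Icc 1 R, (n:ℝ)⁻¹ := by gcongr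
    _ ≤ _ := h1
    _ = _ := by
      congr 1
      ext n
      simp only [mem_filter, Finset.mem_Icc, Nat.mem_primeFactors]
      refine and_congr_right fun hn => ?_
      constructor
      · intro h
        by_contra hc
        obtain ⟨p, hp, h1, h2⟩ := Nat.Prime.not_coprime_iff_dvd.1 hc
        exact h p ⟨hp, h2, hH⟩ h1
      · rintro h p ⟨hp, h2, _⟩ h1
        exact Nat.Prime.not_coprime_iff_dvd.2 ⟨p, hp, h1, h2⟩ h

/-- completely multiplicative comparison function -/
noncomputable def cmf (κ H : ℕ) : ℕ →* ℝ where
  toFun n := if Nat.Coprime n H then (κ:ℝ) ^ (cardFactors n) / n else 0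
  map_one' := by simp
  map_mul' a b := by
    by_cases ha : a = 0
    · subst ha; simp
    by_cases hb : b = 0
    · subst hb; simp
    by_cases h1 : Nat.Coprime a H
    · by_cases h2 : Nat.Coprime b H
      · rw [if_pos h1, if_pos h2, if_pos (Nat.coprime_mul_iff_left.2 ⟨h1, h2⟩),
          cardFactors_mul ha hb, pow_add]
        push_cast
        rw [mul_div_mul_comm]
      · rw [if_neg h2, if_neg (fun h => h2 (Nat.coprime_mul_iff_left.1 h).2), mul_zero]
    · rw [if_neg h1, if_neg (fun h => h1 (Nat.coprime_mul_iff_left.1 h).1), zero_mul]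

theorem cmf_apply (κ H n : ℕ) :
    cmf κ H n = if Nat.Coprime n H then (κ:ℝ) ^ (cardFactors n) / n else 0 := rfl

theorem cmf_nonneg (κ H n : ℕ) : 0 ≤ cmf κ H n := by
  rw [cmf_apply]; split_ifs <;> positivity

theorem cmf_prime (κ H p : ℕ) (hp : p.Prime) :
    cmf κ H p = if p ∣ H then 0 else (κ:ℝ) / p := by
  rw [cmf_apply, cardFactors_apply_prime hp]
  by_cases h : p ∣ H
  · rw [if_pos h, if_neg (fun hc => (hp.coprime_iff_not_dvd.1 hc) h)]
  · rw [if_neg h, if_pos (hp.coprime_iff_not_dvd.2 h), pow_one]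

theorem selberg_sum_ge (κ H R : ℕ) (hH : ∀ p : ℕ, p.Prime → ¬ p ∣ H → κ < p) (P : ℕ)
    (hP : P = ∏ p ∈ Icc 1 R with (p.Prime ∧ ¬ p ∣ H), p) :
    ∑ n ∈ Icc 1 R, cmf κ H n ≤
      ∑ l ∈ P.divisors with l ≤ R, ∏ p ∈ l.primeFactors, ((κ : ℝ) / p * (1 - (κ : ℝ) / p)⁻¹) := by
  have hlt : ∀ p : ℕ, p.Prime → ¬ p ∣ H → (κ:ℝ)/p < 1 := by
    intro p hp hpH
    have h0 : (0:ℝ) < p := by exact_mod_cast hp.pos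
    rw [div_lt_one h0]
    exact_mod_cast hH p hp hpH
  have hP0 : P ≠ 0 := by
    rw [hP, Finset.prod_ne_zero_iff]
    intro p hp
    exact (mem_filter.1 hp).2.1.ne_zero
  have hsub : ∑ n ∈ Icc 1 R, cmf κ H n = ∑ n ∈ Icc 1 R with Nat.Coprime n H, cmf κ H n := by
    rw [sum_filter]
    refine sum_congr rfl fun n _ => ?_
    split_ifs with h
    · rfl
    · rw [cmf_apply, if_neg h]
  rw [hsub]
  let rad : ℕ → ℕ := fun n => ∏ p ∈ n.primeFactors, p
  have hradpf : ∀ n, (rad n).primeFactors = n.primeFactors := fun n =>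
    Nat.primeFactors_prod (fun p hp => Nat.prime_of_mem_primeFactors hp)
  have hraddvd : ∀ n, rad n ∣ n := fun n => Nat.prod_primeFactors_dvd n
  have hmaps : ∀ n ∈ (Icc 1 R).filter (fun n => Nat.Coprime n H),
      rad n ∈ P.divisors.filter (fun l => l ≤ R) := by
    intro n hn
    simp only [mem_filter, Finset.mem_Icc] at hn
    simp only [mem_filter, Nat.mem_divisors]
    refine ⟨⟨?_, hP0⟩, (Nat.le_of_dvd hn.1.1 (hraddvd n)).trans hn.1.2⟩
    rw [hP]
    apply Finset.prod_dvd_prod_of_subset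
    intro p hp
    have hp' := Nat.mem_primeFactors.1 hp
    simp only [mem_filter, Finset.mem_Icc]
    refine ⟨⟨hp'.1.pos, (Nat.le_of_dvd hn.1.1 hp'.2.1).trans hn.1.2⟩, hp'.1, fun h => ?_⟩
    exact Nat.Prime.not_coprime_iff_dvd.2 ⟨p, hp'.1, hp'.2.1, h⟩ hn.2
  rw [← sum_fiberwise_of_maps_to hmaps]
  refine sum_le_sum fun l hl => ?_
  simp only [mem_filter, Nat.mem_divisors] at hl
  have hl0 : l ≠ 0 := fun h => hP0 (by have := hl.1.1; rw [h] at this; simpa using this)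
  have hlpos : 0 < l := Nat.pos_of_ne_zero hl0
  have hlprime : ∀ p ∈ l.primeFactors, p.Prime ∧ ¬ p ∣ H := by
    intro p hp
    have hp' := Nat.mem_primeFactors.1 hp
    have h1 : p ∣ P := hp'.2.1.trans hl.1.1
    rw [hP, hp'.1.prime.dvd_finsetProd_iff] at h1
    obtain ⟨q, hq, hpq⟩ := h1
    have hq' := (mem_filter.1 hq).2
    rw [(Nat.prime_dvd_prime_iff_eq hp'.1 hq'.1).1 hpq]
    exact hq'
  have hnorm : ∀ {p : ℕ}, p.Prime → ‖cmf κ H p‖ < 1 := by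
    intro p hp
    rw [cmf_prime κ H p hp]
    split_ifs with h
    · simp
    · rw [Real.norm_of_nonneg (by positivity)]
      exact hlt p hp h
  have hsum := (EulerProduct.summable_and_hasSum_factoredNumbers_prod_filter_prime_geometric
    (f := cmf κ H) hnorm l.primeFactors).2
  replace hsum := (hasSum_subtype_iff_indicator (f := fun m => cmf κ H m)).1 hsum
  have hfin := sum_le_hasSum (((Icc 1 R).filter (fun n => Nat.Coprime n H)).filter
      (fun n => rad n = l) |>.image (fun n => n / l)) (fun m _ => by
        apply Set.indicator_nonneg; intro m _; exact cmf_nonneg κ H m) hsum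
  by_cases hlsq : rad l = l
  swap
  · have : (((Icc 1 R).filter (fun n => Nat.Coprime n H)).filter (fun n => rad n = l)) = ∅ := by
      rw [filter_eq_empty_iff]
      intro n _ hn
      apply hlsq
      have : rad (rad n) = rad n := by
        simp only [rad]; rw [show (∏ p ∈ n.primeFactors, p).primeFactors = n.primeFactors from hradpf n]
      rw [← hn]; exact this
    rw [this, sum_empty]
    apply prod_nonneg
    intro p hp
    have := hlt p (hlprime p hp).1 (hlprime p hp).2
    exact mul_nonneg (by positivity) (inv_nonneg.2 (by linarith))
  have hfl : cmf κ H l = ∏ p ∈ l.primeFactors, ((κ : ℝ) / p) := by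
    conv_lhs => rw [← hlsq]
    simp only [rad]
    rw [map_prod]
    refine prod_congr rfl fun p hp => ?_
    rw [cmf_prime κ H p (hlprime p hp).1, if_neg (hlprime p hp).2]
  have hprod : (∏ p ∈ l.primeFactors with p.Prime, (1 - cmf κ H p)⁻¹) =
      ∏ p ∈ l.primeFactors, (1 - (κ : ℝ) / p)⁻¹ := by
    rw [filter_true_of_mem (fun p hp => (hlprime p hp).1)]
    refine prod_congr rfl fun p hp => ?_
    rw [cmf_prime κ H p (hlprime p hp).1, if_neg (hlprime p hp).2]
  rw [prod_mul_distrib, ← hfl, ← hprod]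
  refine le_trans ?_ (mul_le_mul_of_nonneg_left hfin (cmf_nonneg κ H l))
  rw [sum_image, mul_sum]
  · refine sum_le_sum fun n hn => ?_
    simp only [mem_filter, Finset.mem_Icc] at hn
    obtain ⟨m, hm⟩ : l ∣ n := hn.2 ▸ hraddvd n
    have hnm : n / l = m := by rw [hm, Nat.mul_div_cancel_left _ hlpos]
    have hm0 : m ≠ 0 := by rintro rfl; simp at hm; omega
    rw [hnm, Set.indicator_of_mem]
    · rw [hm, map_mul]
    · apply Nat.mem_factoredNumbers_of_primeFactors_subset hm0
      have h1 : l.primeFactors = n.primeFactors := by rw [← hn.2]; exact hradpf n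
      rw [h1]
      exact Nat.primeFactors_mono ⟨l, by rw [hm, mul_comm]⟩ (by omega)
  · intro a ha b hb hab
    simp only [Finset.coe_filter, Set.mem_setOf_eq, mem_filter] at ha hb
    have h1 : l ∣ a := ha.2 ▸ hraddvd a
    have h2 : l ∣ b := hb.2 ▸ hraddvd b
    exact Nat.div_left_inj h1 h2 |>.1 hab

theorem card_divisors_le_two_pow (n : ℕ) (hn : n ≠ 0) : n.divisors.card ≤ 2 ^ (cardFactors n) := by
  rw [Nat.card_divisors hn, cardFactors_eq_sum_factorization, Finsupp.sum, Nat.support_factorization,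
    ← prod_pow_eq_pow_sum]
  apply Finset.prod_le_prod'
  intro p _
  exact Nat.lt_two_pow_self

theorem sum_two_pow_ge (H r : ℕ) :
    (∑ n ∈ Icc 1 r with Nat.Coprime n H, (n:ℝ)⁻¹) ^ 2 ≤ ∑ n ∈ Icc 1 (r^2), cmf 2 H n := by
  rw [sq, sum_mul_sum, ← sum_product']
  set T := ((Icc 1 r).filter (fun n => Nat.Coprime n H)) with hT
  have hmaps : ∀ x ∈ T ×ˢ T, x.1 * x.2 ∈ Icc 1 (r^2) := by
    intro x hx
    simp only [hT, mem_product, mem_filter, Finset.mem_Icc] at hx ⊢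
    constructor
    · exact Nat.mul_pos hx.1.1.1 hx.2.1.1
    · rw [sq]; exact Nat.mul_le_mul hx.1.1.2 hx.2.1.2
  rw [← sum_fiberwise_of_maps_to hmaps]
  refine sum_le_sum fun n hn => ?_
  have hn1 := (Finset.mem_Icc.1 hn).1
  have h1 : ∀ x ∈ (T ×ˢ T).filter (fun x => x.1 * x.2 = n), (x.1:ℝ)⁻¹ * (x.2:ℝ)⁻¹ = (n:ℝ)⁻¹ := by
    intro x hx
    rw [← (mem_filter.1 hx).2]; push_cast; rw [mul_inv]
  rw [sum_congr rfl h1, sum_const, nsmul_eq_mul]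
  by_cases hc : Nat.Coprime n H
  · rw [cmf_apply, if_pos hc, div_eq_mul_inv]
    gcongr
    have h2 : ((T ×ˢ T).filter (fun x => x.1 * x.2 = n)).card ≤ n.divisors.card := by
      apply card_le_card_of_injOn (fun x => x.1)
      · intro x hx
        have hx' := mem_filter.1 hx
        simp only [Finset.mem_coe, Nat.mem_divisors]
        exact ⟨⟨x.2, hx'.2.symm⟩, by omega⟩
      · intro x hx y hy hxy
        have hx' := mem_filter.1 hx
        have hy' := mem_filter.1 hy
        have hxy' : x.1 = y.1 := hxy
        have h0 : 0 < x.1 := by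
          rcases Nat.eq_zero_or_pos x.1 with h | h
          · have := hx'.2; rw [h] at this; simp at this; omega
          · exact h
        refine Prod.ext hxy' ?_
        have := hx'.2.trans hy'.2.symm
        rw [← hxy'] at this
        exact Nat.eq_of_mul_eq_mul_left h0 this
    exact_mod_cast h2.trans (card_divisors_le_two_pow n (by omega))
  · have : (T ×ˢ T).filter (fun x => x.1 * x.2 = n) = ∅ := by
      rw [filter_eq_empty_iff]
      intro x hx hxn
      simp only [hT, mem_product, mem_filter] at hx
      exact hc (hxn ▸ Nat.Coprime.mul_left hx.1.2 hx.2.2)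
    rw [this]
    simp [cmf_nonneg]

end SievePart

section SieveConcrete
open Finset ArithmeticFunction

theorem count_class (N d c : ℕ) (hd : 0 < d) :
    |(((range N).filter (fun j => j ≡ c [MOD d])).card : ℝ) - (N:ℝ) / d| ≤ 1 := by
  have h := Nat.count_modEq_card N hd c
  rw [Nat.count_eq_card_filter_range] at h
  rw [h]
  have hd' : (0:ℝ) < d := by exact_mod_cast hd
  have h1 : (N:ℝ) = d * ((N / d : ℕ):ℝ) + ((N % d : ℕ):ℝ) := by
    exact_mod_cast (Nat.div_add_mod N d).symm
  have h2 : ((N % d : ℕ):ℝ) < d := by exact_mod_cast Nat.mod_lt N hd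
  have h3 : (N:ℝ)/d = ((N / d : ℕ):ℝ) + ((N % d : ℕ):ℝ) / d := by
    nth_rewrite 1 [h1]; field_simp
  have h4 : ((N % d : ℕ):ℝ) / d ≤ 1 := by rw [div_le_one hd']; exact h2.le
  have h5 : 0 ≤ ((N % d : ℕ):ℝ) / d := by positivity
  rw [h3, abs_le]
  split_ifs <;> push_cast <;> constructor <;> linarith

theorem exists_class_one (d α β : ℕ) (hd : 0 < d) (h : Nat.Coprime α d) :
    ∃ c, ∀ j, d ∣ α * j + β ↔ j ≡ c [MOD d] := by
  have : NeZero d := ⟨hd.ne'⟩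
  let u := ZMod.unitOfCoprime α h
  refine ⟨((↑(u⁻¹) : ZMod d) * (-(β : ZMod d))).val, fun j => ?_⟩
  rw [← ZMod.natCast_eq_natCast_iff, ZMod.natCast_val, ZMod.cast_id, ← ZMod.natCast_eq_zero_iff,
    Units.eq_inv_mul_iff_mul_eq, ZMod.coe_unitOfCoprime]
  push_cast
  rw [eq_neg_iff_add_eq_zero]

theorem exists_class_two (d e α β γ δ : ℕ) (hd : 0 < d) (he : 0 < e) (hde : Nat.Coprime d e)
    (h : Nat.Coprime α d) (h' : Nat.Coprime γ e) :
    ∃ c, ∀ j, (d ∣ α * j + β ∧ e ∣ γ * j + δ) ↔ j ≡ c [MOD (d * e)] := by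
  obtain ⟨c1, h1⟩ := exists_class_one d α β hd h
  obtain ⟨c2, h2⟩ := exists_class_one e γ δ he h'
  obtain ⟨c, hc1, hc2⟩ := Nat.chineseRemainder hde c1 c2
  refine ⟨c, fun j => ?_⟩
  rw [h1, h2, ← Nat.modEq_and_modEq_iff_modEq_mul hde]
  constructor
  · rintro ⟨a, b⟩; exact ⟨a.trans hc1.symm, b.trans hc2.symm⟩
  · rintro ⟨a, b⟩; exact ⟨a.trans hc1, b.trans hc2⟩

theorem sieveP_facts (H R P : ℕ) (hP : P = ∏ p ∈ Icc 1 R with (p.Prime ∧ ¬ p ∣ H), p) :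
    Squarefree P ∧ (∀ p : ℕ, p.Prime → p ∣ P → p ≤ R ∧ ¬ p ∣ H) ∧ Nat.Coprime P H := by
  have h2 : ∀ p : ℕ, p.Prime → p ∣ P → p ≤ R ∧ ¬ p ∣ H := by
    intro p hp h1
    rw [hP, hp.prime.dvd_finsetProd_iff] at h1
    obtain ⟨q, hq, hpq⟩ := h1
    have hq' := (mem_filter.1 hq)
    rw [(Nat.prime_dvd_prime_iff_eq hp hq'.2.1).1 hpq]
    exact ⟨(Finset.mem_Icc.1 hq'.1).2, hq'.2.2⟩
  refine ⟨?_, h2, ?_⟩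
  · rw [hP]
    apply Finset.squarefree_prod_of_pairwise_isCoprime
    · intro p hp q hq hpq
      have hp' := (mem_filter.1 hp).2.1
      have hq' := (mem_filter.1 hq).2.1
      rw [Function.onFun, ← Nat.coprime_iff_isRelPrime]
      exact (Nat.coprime_primes hp' hq').2 hpq
    · intro p hp
      exact (mem_filter.1 hp).2.1.prime.squarefree
  · by_contra hc
    obtain ⟨p, hp, h3, h4⟩ := Nat.Prime.not_coprime_iff_dvd.1 hc
    exact (h2 p hp h3).2 h4

theorem card_small (N R α β : ℕ) (hα : 1 ≤ α) (hR : 2 ≤ R) :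
    (((range N).filter (fun j => α * j + β ≤ R)).card : ℝ) ≤ (R:ℝ)^6 := by
  have h1 : ((range N).filter (fun j => α * j + β ≤ R)) ⊆ range (R+1) := by
    intro j hj
    have := (mem_filter.1 hj).2
    rw [mem_range]
    nlinarith
  have h2 := card_le_card h1
  rw [card_range] at h2
  have h3 : R + 1 ≤ R^6 := by
    have : R^6 = R * R^5 := by ring
    have h5 : 2 ≤ R^5 := le_trans hR (Nat.le_self_pow (by norm_num) R)
    nlinarith
  exact_mod_cast h2.trans h3

theorem coprime_of_prime_gt (P R q : ℕ) (h : ∀ p : ℕ, p.Prime → p ∣ P → p ≤ R) (hq : q.Prime)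
    (hqR : R < q) : Nat.Coprime P q := by
  rw [Nat.coprime_comm, hq.coprime_iff_not_dvd]
  intro hd
  have := h q hq hd
  omega

theorem sieve_one (N R α β : ℕ) (hR : 2 ≤ R) (hα : 1 ≤ α) :
    (((range N).filter (fun j => (α * j + β).Prime)).card : ℝ) ≤
      N * ((α : ℝ) / α.totient) / Real.log R + 2 * (R:ℝ)^6 := by
  obtain ⟨P, hP⟩ : ∃ P, P = ∏ p ∈ Icc 1 R with (p.Prime ∧ ¬ p ∣ α), p := ⟨_, rfl⟩
  obtain ⟨hsq, hpR, hcop⟩ := sieveP_facts α R P hP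
  have hP0 := hsq.ne_zero
  have hA : ∀ d, d ∣ P → |(((range N).filter (fun j => d ∣ α * j + β)).card : ℝ)
      - (∏ p ∈ d.primeFactors, ((1:ℕ) : ℝ) / p) * N| ≤ d := by
    intro d hd
    have hd0 : 0 < d := Nat.pos_of_dvd_of_pos hd (Nat.pos_of_ne_zero hP0)
    have hdsq := hsq.squarefree_of_dvd hd
    obtain ⟨c, hc⟩ := exists_class_one d α β hd0 (Nat.Coprime.coprime_dvd_left hd hcop).symm
    simp only [hc]
    have h1 : (∏ p ∈ d.primeFactors, ((1:ℕ) : ℝ) / p) = 1 / d := by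
      rw [prod_div_distrib, ← Nat.cast_prod (fun p => p) d.primeFactors, Nat.prod_primeFactors_of_squarefree hdsq]
      simp
    rw [h1, one_div_mul_eq_div]
    have h2 : (1:ℝ) ≤ d := by exact_mod_cast hd0
    exact (count_class N d c hd0).trans h2
  have hmain := sieve_count N R (by omega) (fun j => α * j + β) P 1 hsq le_rfl
    (fun p hp _ => hp.one_lt) hA
  have hS := selberg_sum_ge 1 α R (fun p hp _ => hp.one_lt) P hP
  have hS2 : ∑ n ∈ Icc 1 R, cmf 1 α n = ∑ n ∈ Icc 1 R with Nat.Coprime n α, (n:ℝ)⁻¹ := by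
    rw [sum_filter]
    refine sum_congr rfl fun n _ => ?_
    rw [cmf_apply]; simp
  rw [hS2] at hS
  have hS3 := (sum_inv_coprime α (by omega) R (by omega)).trans hS
  have hlog : 0 < Real.log R := Real.log_pos (by exact_mod_cast hR)
  have hα' : (0:ℝ) < α := by exact_mod_cast hα
  have hφ : (0:ℝ) < α.totient := by exact_mod_cast Nat.totient_pos.2 hα
  have hpos : 0 < (α.totient : ℝ) / α * Real.log R := by positivity
  have hb : (N:ℝ) / (∑ l ∈ P.divisors with l ≤ R, ∏ p ∈ l.primeFactors,
      (((1:ℕ) : ℝ) / p * (1 - ((1:ℕ) : ℝ) / p)⁻¹)) ≤ N * ((α : ℝ) / α.totient) / Real.log R := by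
    calc _ ≤ (N:ℝ) / ((α.totient : ℝ) / α * Real.log R) :=
          div_le_div_of_nonneg_left (by positivity) hpos hS3
      _ = _ := by field_simp
  have hsub : ((range N).filter (fun j => (α * j + β).Prime)) ⊆
      ((range N).filter (fun j => Nat.Coprime P (α * j + β))) ∪
      ((range N).filter (fun j => α * j + β ≤ R)) := by
    intro j hj
    have hj' := mem_filter.1 hj
    rw [mem_union, mem_filter, mem_filter]
    rcases Nat.lt_or_ge R (α * j + β) with h | h
    · exact Or.inl ⟨hj'.1, coprime_of_prime_gt P R _ (fun p hp h => (hpR p hp h).1) hj'.2 h⟩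
    · exact Or.inr ⟨hj'.1, h⟩
  have hcard := (card_le_card hsub).trans (card_union_le _ _)
  replace hcard := (Nat.cast_le (α := ℝ)).2 hcard
  have hsm := card_small N R α β hα hR
  push_cast at hcard
  linarith

theorem count_two (N d α β γ δ H : ℕ) (hH : H = 2 * α * γ * Int.natAbs ((α:ℤ) * δ - β * γ))
    (hd : Squarefree d) (hc : Nat.Coprime d H) :
    |(((range N).filter (fun j => d ∣ (α * j + β) * (γ * j + δ))).card : ℝ)
      - (∏ p ∈ d.primeFactors, ((2:ℕ) : ℝ) / p) * N| ≤ d := by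
  have hd0 : 0 < d := Nat.pos_of_ne_zero hd.ne_zero
  have hd0' : (0:ℝ) < d := by exact_mod_cast hd0
  have hnp : ∀ p : ℕ, p.Prime → p ∣ d → ∀ j, ¬ (p ∣ α * j + β ∧ p ∣ γ * j + δ) := by
    rintro p hp hpd j ⟨h1, h2⟩
    have h3 : (p:ℤ) ∣ (α:ℤ) * δ - β * γ := by
      have a1 : (p:ℤ) ∣ (α * j + β : ℤ) := by exact_mod_cast h1
      have a2 : (p:ℤ) ∣ (γ * j + δ : ℤ) := by exact_mod_cast h2
      have : (α:ℤ) * δ - β * γ = α * (γ * j + δ) - γ * (α * j + β) := by ring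
      rw [this]
      exact dvd_sub (a2.mul_left _) (a1.mul_left _)
    have h4 : p ∣ H := by rw [hH]; exact (Int.natCast_dvd.1 h3).mul_left _
    exact Nat.Prime.not_coprime_iff_dvd.2 ⟨p, hp, hpd, h4⟩ hc
  have hα : Nat.Coprime d α := hc.coprime_dvd_right (by rw [hH]; exact dvd_mul_of_dvd_left (dvd_mul_of_dvd_left (dvd_mul_left _ _) _) _)
  have hγ : Nat.Coprime d γ := hc.coprime_dvd_right (by rw [hH]; exact dvd_mul_of_dvd_left (dvd_mul_left _ _) _)
  have hcard := Finset.card_eq_sum_card_fiberwise (f := fun j => Nat.gcd d (α * j + β))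
    (s := (range N).filter (fun j => d ∣ (α * j + β) * (γ * j + δ))) (t := d.divisors) (by
      intro j _
      exact Finset.mem_coe.2 (Nat.mem_divisors.2 ⟨Nat.gcd_dvd_left _ _, hd0.ne'⟩))
  have hfib : ∀ e ∈ d.divisors, ∃ c, (((range N).filter (fun j => d ∣ (α * j + β) * (γ * j + δ))).filter
      (fun j => Nat.gcd d (α * j + β) = e)) = (range N).filter (fun j => j ≡ c [MOD d]) := by
    intro e he
    obtain ⟨f, hf⟩ := (Nat.mem_divisors.1 he).1
    have hef : Nat.Coprime e f := by
      rw [hf] at hd; exact Nat.coprime_of_squarefree_mul hd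
    have he0 : 0 < e := Nat.pos_of_ne_zero (by rintro rfl; simp at hf; omega)
    have hf0 : 0 < f := Nat.pos_of_ne_zero (by rintro rfl; simp at hf; omega)
    obtain ⟨c, hc⟩ := exists_class_two e f α β γ δ he0 hf0 hef
      (hα.coprime_dvd_left ⟨f, hf⟩).symm (hγ.coprime_dvd_left ⟨e, by rw [hf, mul_comm]⟩).symm
    refine ⟨c, ?_⟩
    rw [filter_filter]
    refine filter_congr fun j _ => ?_
    rw [hf, ← hc j]
    constructor
    · rintro ⟨h1, h2⟩
      have h3 : e ∣ α * j + β := h2 ▸ Nat.gcd_dvd_right _ _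
      refine ⟨h3, ?_⟩
      obtain ⟨g, hg⟩ := h3
      rw [hg] at h1 h2
      rw [Nat.gcd_mul_left] at h2
      have h4 : Nat.gcd f g = 1 := Nat.eq_of_mul_eq_mul_left he0 (by rw [h2, mul_one])
      rw [mul_assoc] at h1
      exact Nat.Coprime.dvd_of_dvd_mul_left h4 (Nat.dvd_of_mul_dvd_mul_left he0 h1)
    · rintro ⟨h1, h2⟩
      refine ⟨mul_dvd_mul h1 h2, ?_⟩
      have h3 : Nat.Coprime f (α * j + β) := by
        by_contra hc
        obtain ⟨p, hp, h3, h4⟩ := Nat.Prime.not_coprime_iff_dvd.1 hc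
        exact hnp p hp (h3.trans ⟨e, by rw [hf, mul_comm]⟩) j ⟨h4, h3.trans h2⟩
      rw [Nat.Coprime.gcd_mul_right_cancel _ h3]
      exact Nat.gcd_eq_left h1
  have h1 : (∏ p ∈ d.primeFactors, ((2:ℕ) : ℝ) / p) * N = ∑ e ∈ d.divisors, (N:ℝ) / d := by
    rw [prod_div_distrib, ← Nat.cast_prod (fun p => p) d.primeFactors,
      Nat.prod_primeFactors_of_squarefree hd, sum_const, nsmul_eq_mul, Nat.card_divisors hd0.ne']
    have : ∏ x ∈ d.primeFactors, (d.factorization x + 1) = ∏ x ∈ d.primeFactors, 2 := by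
      refine prod_congr rfl fun p hp => ?_
      have h1 := hd.natFactorization_le_one p
      have h2 := (Nat.mem_primeFactors.1 hp)
      have h3 := h2.1.factorization_pos_of_dvd h2.2.2 h2.2.1
      omega
    rw [this]
    push_cast
    ring
  rw [h1, hcard]
  push_cast
  rw [← sum_sub_distrib]
  refine (abs_sum_le_sum_abs _ _).trans ?_
  calc _ ≤ ∑ e ∈ d.divisors, (1:ℝ) := by
        refine sum_le_sum fun e he => ?_
        obtain ⟨c, hc⟩ := hfib e he
        rw [hc]
        exact count_class N d c hd0
    _ = d.divisors.card := by simp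
    _ ≤ d := by exact_mod_cast Nat.card_divisors_le_self d

theorem sieve_two (N r α β γ δ H : ℕ) (hr : 2 ≤ r)
    (hH : H = 2 * α * γ * Int.natAbs ((α:ℤ) * δ - β * γ)) (hH0 : H ≠ 0) :
    (((range N).filter (fun j => (α * j + β).Prime ∧ (γ * j + δ).Prime)).card : ℝ) ≤
      N * ((H : ℝ) / H.totient) ^ 2 / (Real.log r) ^ 2 + 3 * (r:ℝ)^12 := by
  have hα : 1 ≤ α := Nat.pos_of_ne_zero (by rintro rfl; simp at hH; exact hH0 hH)
  have hγ : 1 ≤ γ := Nat.pos_of_ne_zero (by rintro rfl; simp at hH; exact hH0 hH)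
  have h2H : 2 ∣ H := by rw [hH]; exact dvd_mul_of_dvd_left (dvd_mul_of_dvd_left (dvd_mul_right _ _) _) _
  obtain ⟨R, hRr⟩ : ∃ R, R = r ^ 2 := ⟨_, rfl⟩
  have hR : 2 ≤ R := by rw [hRr]; nlinarith
  obtain ⟨P, hP⟩ : ∃ P, P = ∏ p ∈ Icc 1 R with (p.Prime ∧ ¬ p ∣ H), p := ⟨_, rfl⟩
  obtain ⟨hsq, hpR, hcop⟩ := sieveP_facts H R P hP
  have h2p : ∀ p : ℕ, p.Prime → ¬ p ∣ H → 2 < p := by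
    intro p hp hpH
    have := hp.two_le
    rcases this.lt_or_eq with h | h
    · exact h
    · exact absurd h2H (h ▸ hpH)
  have hA : ∀ d, d ∣ P → _ := fun d hd => count_two N d α β γ δ H hH
    (hsq.squarefree_of_dvd hd) (hcop.coprime_dvd_left hd)
  have hmain := sieve_count N R (by omega) (fun j => (α * j + β) * (γ * j + δ)) P 2 hsq (by norm_num)
    (fun p hp h => h2p p hp (hpR p hp h).2) hA
  have hS := selberg_sum_ge 2 H R h2p P hP
  have hS2 := sum_two_pow_ge H r
  rw [← hRr] at hS2
  have hlog : 0 < Real.log r := Real.log_pos (by exact_mod_cast hr)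
  have hHp : (0:ℝ) < H := by exact_mod_cast Nat.pos_of_ne_zero hH0
  have hφ : (0:ℝ) < H.totient := by exact_mod_cast Nat.totient_pos.2 (Nat.pos_of_ne_zero hH0)
  have hS3 : ((H.totient : ℝ) / H * Real.log r)^2 ≤ _ :=
    (pow_le_pow_left₀ (by positivity) (sum_inv_coprime H hH0 r (by omega)) 2).trans (hS2.trans hS)
  have hpos : 0 < ((H.totient : ℝ) / H * Real.log r)^2 := by positivity
  have hb : (N:ℝ) / (∑ l ∈ P.divisors with l ≤ R, ∏ p ∈ l.primeFactors,
      (((2:ℕ) : ℝ) / p * (1 - ((2:ℕ) : ℝ) / p)⁻¹)) ≤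
      N * ((H : ℝ) / H.totient) ^ 2 / (Real.log r) ^ 2 := by
    calc _ ≤ (N:ℝ) / ((H.totient : ℝ) / H * Real.log r) ^ 2 :=
          div_le_div_of_nonneg_left (by positivity) hpos hS3
      _ = _ := by field_simp
  have hsub : ((range N).filter (fun j => (α * j + β).Prime ∧ (γ * j + δ).Prime)) ⊆
      ((range N).filter (fun j => Nat.Coprime P ((α * j + β) * (γ * j + δ)))) ∪
      (((range N).filter (fun j => α * j + β ≤ R)) ∪ ((range N).filter (fun j => γ * j + δ ≤ R))) := by
    intro j hj
    have hj' := mem_filter.1 hj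
    rw [mem_union, mem_union, mem_filter, mem_filter, mem_filter]
    rcases Nat.lt_or_ge R (α * j + β) with h | h
    · rcases Nat.lt_or_ge R (γ * j + δ) with h' | h'
      · refine Or.inl ⟨hj'.1, Nat.Coprime.mul_right ?_ ?_⟩
        · exact coprime_of_prime_gt P R _ (fun p hp h => (hpR p hp h).1) hj'.2.1 h
        · exact coprime_of_prime_gt P R _ (fun p hp h => (hpR p hp h).1) hj'.2.2 h'
      · exact Or.inr (Or.inr ⟨hj'.1, h'⟩)
    · exact Or.inr (Or.inl ⟨hj'.1, h⟩)
  have hcard := (card_le_card hsub).trans ((card_union_le _ _).trans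
      (Nat.add_le_add_left (card_union_le _ _) _))
  replace hcard := (Nat.cast_le (α := ℝ)).2 hcard
  have hsm := card_small N R α β hα hR
  have hsm' := card_small N R γ δ hγ hR
  have hRr' : (R:ℝ)^6 = (r:ℝ)^12 := by rw [hRr]; push_cast; ring
  push_cast at hcard
  rw [hRr'] at hmain hsm hsm'
  linarith

end SieveConcrete

section Structure
open Finset

/-- twin condition -/
def Tw (n0 t : ℕ) : Prop :=
  ∃ d ∈ n0.divisors, ∃ d' ∈ n0.divisors, d ≠ d' ∧ (d * t + 1).Prime ∧ (d' * t + 1).Prime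

theorem exists_Tw (n0 t : ℕ) (hn0 : 0 < n0) (hno : ∀ n : ℕ, 0 < n → omegaStar n ≠ omegaStar n0 + 1)
    (ht : 1 < t) (hq : (n0 * t + 1).Prime) : ∃ t', t' ∣ t ∧ 1 < t' ∧ Tw n0 t' := by
  classical
  let D : ℕ → Finset ℕ := fun n => n.divisors.filter (fun d => Nat.Prime (d + 1))
  have hD : ∀ n, omegaStar n = (D n).card := fun n => rfl
  have hsub : ∀ s, 0 < s → D n0 ⊆ D (n0 * s) := by
    intro s hs
    apply Finset.filter_subset_filter
    exact Nat.divisors_subset_of_dvd (by positivity) (dvd_mul_right _ _)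
  have hex : ∃ s, 0 < s ∧ s ∣ t ∧ omegaStar n0 < omegaStar (n0 * s) := by
    refine ⟨t, by omega, dvd_rfl, ?_⟩
    rw [hD, hD]
    apply card_lt_card
    rw [Finset.ssubset_iff_of_subset (hsub t (by omega))]
    refine ⟨n0 * t, ?_, ?_⟩
    · simp only [D, mem_filter, Nat.mem_divisors]
      exact ⟨⟨dvd_rfl, by positivity⟩, hq⟩
    · simp only [D, mem_filter, Nat.mem_divisors]
      rintro ⟨⟨h, _⟩, _⟩
      have := Nat.le_of_dvd hn0 h
      nlinarith
  obtain ⟨h0, hdvd, hlt⟩ := Nat.find_spec hex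
  have hmin := fun s (hs : s < Nat.find hex) => Nat.find_min hex hs
  set t' := Nat.find hex
  refine ⟨t', hdvd, ?_, ?_⟩
  · rcases Nat.lt_or_ge 1 t' with h | h
    · exact h
    · have : t' = 1 := by omega
      rw [this] at hlt; simp at hlt
  · have hsubs : D (n0 * t') ⊆ D n0 ∪
        (n0.divisors.filter (fun d => (d * t' + 1).Prime)).image (fun d => d * t') := by
      intro e he
      have he' := he
      simp only [D, mem_filter, Nat.mem_divisors] at he
      obtain ⟨d, s, hd, hs, rfl⟩ := (Nat.dvd_mul.1 he.1.1)
      rw [mem_union]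
      rcases (Nat.le_of_dvd h0 hs).lt_or_eq with h | h
      · left
        have hs0 : 0 < s := Nat.pos_of_dvd_of_pos hs h0
        have := hmin s h
        have hle : omegaStar (n0 * s) ≤ omegaStar n0 := by
          by_contra hc
          exact this ⟨hs0, hs.trans hdvd, by omega⟩
        rw [hD, hD] at hle
        rw [Finset.eq_of_subset_of_card_le (hsub s hs0) hle]
        simp only [D, mem_filter, Nat.mem_divisors]
        exact ⟨⟨Nat.mul_dvd_mul_right hd s, by positivity⟩, he.2⟩
      · right
        rw [h] at he ⊢
        refine mem_image.2 ⟨d, mem_filter.2 ⟨Nat.mem_divisors.2 ⟨hd, hn0.ne'⟩, he.2⟩, rfl⟩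
    have h1 := (card_le_card hsubs).trans (card_union_le _ _)
    have h2 := hno (n0 * t') (by positivity)
    rw [← hD, ← hD] at h1
    have h3 : 1 < (n0.divisors.filter (fun d => (d * t' + 1).Prime)).card := by
      have := Finset.card_image_le (s := n0.divisors.filter (fun d => (d * t' + 1).Prime))
        (f := fun d => d * t')
      omega
    obtain ⟨d, hd, d', hd', hne⟩ := Finset.one_lt_card.1 h3
    exact ⟨d, (mem_filter.1 hd).1, d', (mem_filter.1 hd').1, hne, (mem_filter.1 hd).2, (mem_filter.1 hd').2⟩

end Structure

section Convergence
open Finset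

theorem prod_odd_le (S : Finset ℕ) : (∀ p ∈ S, 3 ≤ p ∧ p % 2 = 1) →
    ∏ p ∈ S, ((p:ℝ) / (p - 2)) ≤ 2 * S.card + 1 := by
  induction S using Finset.induction_on_max with
  | empty => simp
  | insert a S hmax ih =>
    intro h
    have hna : a ∉ S := fun h => lt_irrefl _ (hmax a h)
    have ha := h a (mem_insert_self _ _)
    have ih' := ih (fun p hp => h p (mem_insert_of_mem hp))
    rw [prod_insert hna, card_insert_of_notMem hna]
    have hcard : S.card ≤ (Ico 1 (a / 2)).card := by
      apply card_le_card_of_injOn (fun x => x / 2)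
      · intro x hx
        have h1 := h x (mem_insert_of_mem hx)
        have h2 := hmax x hx
        simp only [coe_Ico, Set.mem_Ico]
        omega
      · intro x hx y hy hxy
        have h1 := h x (mem_insert_of_mem hx)
        have h2 := h y (mem_insert_of_mem hy)
        simp only at hxy
        omega
    rw [Nat.card_Ico] at hcard
    have h3 : 2 * S.card + 3 ≤ a := by omega
    have h3' : (2:ℝ) * S.card + 3 ≤ a := by exact_mod_cast h3
    have hpos : (0:ℝ) < a - 2 := by
      have : (0:ℝ) ≤ S.card := by positivity
      linarith
    calc (a:ℝ) / (a - 2) * ∏ p ∈ S, ((p:ℝ) / (p - 2)) ≤ a / (a - 2) * (2 * S.card + 1) := by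
          gcongr
      _ ≤ _ := by
          rw [div_mul_eq_mul_div, div_le_iff₀ hpos]
          push_cast
          nlinarith

theorem div_totient_sq_le (t : ℕ) (ht : t ≠ 0) :
    ((t:ℝ) / t.totient) ^ 2 ≤ 4 * (2 * t.primeFactors.card + 1) := by
  have h1 : (t:ℝ) / t.totient = ∏ p ∈ t.primeFactors, ((p:ℝ) / (p - 1)) := by
    rw [← inv_div, ← totient_div_eq t ht, ← prod_inv_distrib]
    refine prod_congr rfl fun p hp => ?_
    have hp' := (Nat.prime_of_mem_primeFactors hp)
    have h0 : (p:ℝ) ≠ 0 := by exact_mod_cast hp'.ne_zero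
    have h1 : (1:ℝ) < p := by exact_mod_cast hp'.one_lt
    have h2 : (p:ℝ) - 1 ≠ 0 := by linarith
    rw [inv_eq_iff_eq_inv, inv_div]; field_simp
  rw [h1, ← prod_pow]
  have hnn : ∀ p ∈ t.primeFactors.erase 2, 3 ≤ p ∧ p % 2 = 1 := by
    intro p hp
    have hp1 := mem_erase.1 hp
    have hp2 := Nat.prime_of_mem_primeFactors hp1.2
    rcases hp2.eq_two_or_odd with h | h
    · exact absurd h hp1.1
    · have := hp2.two_le; omega
  have h2 : ∏ p ∈ t.primeFactors.erase 2, ((p:ℝ) / (p - 1))^2 ≤ 2 * (t.primeFactors.card : ℝ) + 1 := by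
    calc _ ≤ ∏ p ∈ t.primeFactors.erase 2, ((p:ℝ) / (p - 2)) := by
          refine Finset.prod_le_prod (fun p _ => by positivity) fun p hp => ?_
          have h3 : (3:ℝ) ≤ p := by exact_mod_cast (hnn p hp).1
          rw [div_pow, div_le_div_iff₀ (by nlinarith) (by linarith)]
          nlinarith
      _ ≤ 2 * ((t.primeFactors.erase 2).card : ℝ) + 1 := prod_odd_le _ hnn
      _ ≤ _ := by
          have := card_le_card (erase_subset 2 t.primeFactors)
          have : ((t.primeFactors.erase 2).card : ℝ) ≤ t.primeFactors.card := by exact_mod_cast this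
          linarith
  have hnn2 : 0 ≤ ∏ p ∈ t.primeFactors.erase 2, ((p:ℝ) / (p - 1))^2 :=
    prod_nonneg fun p _ => by positivity
  by_cases h : 2 ∈ t.primeFactors
  · rw [← mul_prod_erase _ _ h]
    norm_num
    linarith
  · rw [erase_eq_of_notMem h] at h2 hnn2
    linarith

theorem card_primeFactors_le (t i : ℕ) (ht : t ≠ 0) (hi : t < 2 ^ (i+1)) :
    t.primeFactors.card ≤ i := by
  have h1 : 2 ^ t.primeFactors.card ≤ t := by
    calc 2 ^ t.primeFactors.card ≤ ∏ p ∈ t.primeFactors, p :=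
          Finset.pow_card_le_prod _ _ _ fun p hp => (Nat.prime_of_mem_primeFactors hp).two_le
      _ ≤ t := Nat.le_of_dvd (Nat.pos_of_ne_zero ht) (Nat.prod_primeFactors_dvd t)
  have := (Nat.pow_lt_pow_iff_right (by norm_num : 1 < 2)).1 (h1.trans_lt hi)
  omega

theorem inv_totient_le (t i : ℕ) (h1 : 2 ^ i ≤ t) (h2 : t < 2 ^ (i+1)) :
    (t.totient : ℝ)⁻¹ ≤ 3 * √((i:ℝ)+1) / 2 ^ i := by
  have ht : 0 < t := lt_of_lt_of_le (by positivity) h1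
  have ht' : (0:ℝ) < t := by exact_mod_cast ht
  have hφ : (0:ℝ) < t.totient := by exact_mod_cast Nat.totient_pos.2 ht
  have h3 := div_totient_sq_le t ht.ne'
  have h4 : ((t.primeFactors.card : ℕ) : ℝ) ≤ i := by exact_mod_cast card_primeFactors_le t i ht.ne' h2
  have h5 : (t:ℝ) / t.totient ≤ 3 * √((i:ℝ)+1) := by
    refine (sq_le_sq₀ (by positivity) (by positivity)).1 ?_
    rw [mul_pow, Real.sq_sqrt (by positivity)]
    have : (0:ℝ) ≤ i := by positivity
    linarith
  have h6 : (2:ℝ)^i ≤ t := by exact_mod_cast h1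
  rw [le_div_iff₀ (by positivity)]
  calc _ ≤ (t.totient : ℝ)⁻¹ * t := by gcongr
    _ = (t:ℝ) / t.totient := by rw [mul_comm, div_eq_mul_inv]
    _ ≤ _ := h5

theorem sum_dyadic_s5 (f : ℕ → ℝ) (n : ℕ) :
    ∑ t ∈ range (2 ^ n), f t = f 0 + ∑ i ∈ range n, ∑ t ∈ Ico (2^i) (2^(i+1)), f t := by
  induction n with
  | zero => simp
  | succ n ih =>
    rw [sum_range_succ, ← add_assoc, ← ih]
    exact (Finset.sum_range_add_sum_Ico f (Nat.pow_le_pow_right (by norm_num) (by omega))).symm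

open Classical in
theorem Tw_count (n0 : ℕ) : ∃ C : ℝ, 0 ≤ C ∧ ∀ i : ℕ,
    (((range (2^(i+1))).filter (fun t => Tw n0 t)).card : ℝ) ≤ C * 2^i / ((i:ℝ)+1)^2 := by
  let Hf : ℕ × ℕ → ℕ := fun x => 2 * x.1 * x.2 * Int.natAbs ((x.1:ℤ) * (1:ℕ) - (1:ℕ) * x.2)
  let K : ℕ × ℕ → ℝ := fun x => 2 * ((Hf x : ℝ) / (Hf x).totient)^2 / (Real.log 2)^2 + 3 * 2^24
  have hlog2 : 0 < Real.log 2 := Real.log_pos (by norm_num)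
  have hK : ∀ x, 0 ≤ K x := fun x => by positivity
  refine ⟨576 * ∑ x ∈ n0.divisors ×ˢ n0.divisors, K x, by
    have := sum_nonneg (s := n0.divisors ×ˢ n0.divisors) fun x _ => hK x
    positivity, fun i => ?_⟩
  set m := i / 24 + 1 with hm
  have hm1 : 24 * m ≤ i + 24 := by omega
  have hm2 : i + 1 ≤ 24 * m := by omega
  have hm2' : (i:ℝ) + 1 ≤ 24 * m := by exact_mod_cast hm2
  have hm0 : (0:ℝ) < m := by positivity
  have hpair : ∀ x ∈ (n0.divisors ×ˢ n0.divisors), x.1 ≠ x.2 →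
      (((range (2^(i+1))).filter (fun t => (x.1 * t + 1).Prime ∧ (x.2 * t + 1).Prime)).card : ℝ) ≤
      K x * 2 ^ i / m^2 := by
    intro x hx hne
    have hx' := mem_product.1 hx
    have h1 : x.1 ≠ 0 := (Nat.pos_of_mem_divisors hx'.1).ne'
    have h2 : x.2 ≠ 0 := (Nat.pos_of_mem_divisors hx'.2).ne'
    have hH0 : Hf x ≠ 0 := by
      simp only [Hf]
      refine mul_ne_zero (mul_ne_zero (mul_ne_zero two_ne_zero h1) h2) ?_
      rw [Int.natAbs_ne_zero]
      push_cast
      intro h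
      apply hne
      have : (x.1:ℤ) = x.2 := by linarith
      exact_mod_cast this
    have := sieve_two (2^(i+1)) (2^m) x.1 1 x.2 1 (Hf x)
      (Nat.le_self_pow (by omega) 2) rfl hH0
    refine this.trans ?_
    push_cast
    rw [Real.log_pow]
    have h3 : ((2:ℝ)^m)^12 * m^2 ≤ 2^24 * 2^i := by
      have a1 : (m:ℝ) ≤ 2^m := by exact_mod_cast (Nat.lt_two_pow_self (n := m)).le
      calc ((2:ℝ)^m)^12 * m^2 ≤ ((2:ℝ)^m)^12 * (2^m)^2 := by gcongr
        _ = 2 ^ (14 * m) := by rw [← pow_add, ← pow_mul]; ring_nf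
        _ ≤ 2 ^ (i + 24) := pow_le_pow_right₀ (by norm_num) (by omega)
        _ = _ := by rw [pow_add]; ring
    rw [le_div_iff₀ (by positivity)]
    have h4 : ((2:ℝ)^(i+1) * ((Hf x : ℝ) / (Hf x).totient)^2 / (m * Real.log 2)^2) * m^2 =
        (2 * ((Hf x : ℝ) / (Hf x).totient)^2 / (Real.log 2)^2) * 2^i := by
      rw [pow_succ (2:ℝ) i]
      field_simp
    rw [add_mul, h4]
    simp only [K]
    linarith
  have hsub : ((range (2^(i+1))).filter (fun t => Tw n0 t)) ⊆
      ((n0.divisors ×ˢ n0.divisors).filter (fun x => x.1 ≠ x.2)).biUnion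
      (fun x => (range (2^(i+1))).filter (fun t => (x.1 * t + 1).Prime ∧ (x.2 * t + 1).Prime)) := by
    intro t ht
    obtain ⟨ht1, d, hd, d', hd', hne, hp, hp'⟩ := mem_filter.1 ht
    exact mem_biUnion.2 ⟨(d, d'), mem_filter.2 ⟨mem_product.2 ⟨hd, hd'⟩, hne⟩,
      mem_filter.2 ⟨ht1, hp, hp'⟩⟩
  have hcard := (Nat.cast_le (α := ℝ)).2 ((card_le_card hsub).trans card_biUnion_le)
  refine hcard.trans ?_
  push_cast
  calc _ ≤ ∑ x ∈ (n0.divisors ×ˢ n0.divisors).filter (fun x => x.1 ≠ x.2), K x * 2 ^ i / m^2 :=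
        sum_le_sum fun x hx => hpair x (mem_filter.1 hx).1 (mem_filter.1 hx).2
    _ ≤ ∑ x ∈ (n0.divisors ×ˢ n0.divisors), K x * 2 ^ i / m^2 :=
        sum_le_sum_of_subset_of_nonneg (filter_subset _ _) fun x _ _ => by
          have := hK x; positivity
    _ = (∑ x ∈ (n0.divisors ×ˢ n0.divisors), K x) * 2 ^ i / m^2 := by
        rw [← sum_div, ← sum_mul]
    _ ≤ _ := by
        have hS := sum_nonneg (s := n0.divisors ×ˢ n0.divisors) fun x _ => hK x
        rw [div_le_div_iff₀ (by positivity) (by positivity)]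
        have : ((i:ℝ)+1)^2 ≤ 576 * m^2 := by
          have : ((i:ℝ)+1)^2 ≤ (24 * m)^2 := by gcongr
          linarith [this]
        calc _ ≤ (∑ x ∈ (n0.divisors ×ˢ n0.divisors), K x) * 2 ^ i * (576 * m^2) := by gcongr
          _ = _ := by ring

open Classical in
theorem Tw_summable (n0 : ℕ) : Summable (fun t : ℕ => if Tw n0 t then (t.totient : ℝ)⁻¹ else 0) := by
  obtain ⟨C, hC, hcount⟩ := Tw_count n0
  set f : ℕ → ℝ := fun t : ℕ => if Tw n0 t then (t.totient : ℝ)⁻¹ else 0 with hf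
  have hf0 : ∀ t, 0 ≤ f t := fun t => by simp only [hf]; split_ifs <;> positivity
  have hg : Summable (fun i : ℕ => 3 * C * ((i + 1 : ℕ) : ℝ) ^ (-(3/2) : ℝ)) := by
    apply Summable.mul_left
    exact (summable_nat_add_iff 1).2 (Real.summable_nat_rpow.2 (by norm_num))
  have hblock : ∀ i : ℕ, ∑ t ∈ Ico (2^i) (2^(i+1)), f t ≤ 3 * C * ((i + 1 : ℕ) : ℝ) ^ (-(3/2) : ℝ) := by
    intro i
    have hi : (0:ℝ) < i + 1 := by positivity
    calc ∑ t ∈ Ico (2^i) (2^(i+1)), f t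
        = ∑ t ∈ (Ico (2^i) (2^(i+1))).filter (fun t => Tw n0 t), (t.totient : ℝ)⁻¹ := by
          rw [sum_filter]
      _ ≤ ∑ t ∈ (Ico (2^i) (2^(i+1))).filter (fun t => Tw n0 t), 3 * √((i:ℝ)+1) / 2 ^ i := by
          refine sum_le_sum fun t ht => ?_
          have := Finset.mem_Ico.1 (mem_filter.1 ht).1
          exact inv_totient_le t i this.1 this.2
      _ = ((Ico (2^i) (2^(i+1))).filter (fun t => Tw n0 t)).card * (3 * √((i:ℝ)+1) / 2 ^ i) := by
          rw [sum_const, nsmul_eq_mul]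
      _ ≤ (C * 2^i / ((i:ℝ)+1)^2) * (3 * √((i:ℝ)+1) / 2 ^ i) := by
          gcongr
          refine le_trans ?_ (hcount i)
          apply Nat.cast_le.2 (card_le_card (filter_subset_filter _ _))
          intro t ht
          exact mem_range.2 (Finset.mem_Ico.1 ht).2
      _ = _ := by
          push_cast
          rw [show (-(3/2) : ℝ) = 1/2 - 2 by norm_num, Real.rpow_sub hi, ← Real.sqrt_eq_rpow,
            Real.rpow_two]
          field_simp
  apply summable_of_sum_range_le (c := f 0 + ∑' i : ℕ, 3 * C * ((i + 1 : ℕ) : ℝ) ^ (-(3/2) : ℝ)) hf0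
  intro n
  calc ∑ t ∈ range n, f t ≤ ∑ t ∈ range (2^n), f t :=
        sum_le_sum_of_subset_of_nonneg (range_subset_range.2 Nat.lt_two_pow_self.le) fun t _ _ => hf0 t
    _ = f 0 + ∑ i ∈ range n, ∑ t ∈ Ico (2^i) (2^(i+1)), f t := sum_dyadic_s5 f n
    _ ≤ f 0 + ∑ i ∈ range n, 3 * C * ((i + 1 : ℕ) : ℝ) ^ (-(3/2) : ℝ) := by
        gcongr with i _; exact hblock i
    _ ≤ _ := by
        gcongr
        exact hg.sum_le_tsum _ fun i _ => by positivity

end Convergence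

section Ranges
open Finset

theorem exists_class_mul (Q t c : ℕ) (hQ : 0 < Q) (h : Nat.Coprime t Q) :
    ∃ c' < Q, ∀ b, t * b ≡ c [MOD Q] ↔ b ≡ c' [MOD Q] := by
  have : NeZero Q := ⟨hQ.ne'⟩
  let u := ZMod.unitOfCoprime t h
  refine ⟨((↑(u⁻¹) : ZMod Q) * (c : ZMod Q)).val, ZMod.val_lt _, fun j => ?_⟩
  rw [← ZMod.natCast_eq_natCast_iff, ← ZMod.natCast_eq_natCast_iff, ZMod.natCast_val, ZMod.cast_id,
    Units.eq_inv_mul_iff_mul_eq, ZMod.coe_unitOfCoprime]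
  push_cast
  rfl

theorem exists_quot (Q b c' : ℕ) (hc : c' < Q) (h : b ≡ c' [MOD Q]) : b = Q * (b / Q) + c' := by
  have h1 := Nat.div_add_mod b Q
  have h2 : b % Q = c' := by rw [h, Nat.mod_eq_of_lt hc]
  rw [h2] at h1
  exact h1.symm

theorem div_totient_congr (H Q : ℕ) (hH : H ≠ 0) (hQ : Q ≠ 0) (h : H.primeFactors = Q.primeFactors) :
    (H:ℝ) / H.totient = (Q:ℝ) / Q.totient := by
  rw [← inv_div, ← inv_div (Q.totient : ℝ), ← totient_div_eq H hH, ← totient_div_eq Q hQ, h]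

open Classical in
theorem rangeA_one (n0 Q c t x R : ℕ) (hn0 : 0 < n0) (hQ : 0 < Q) (hn0Q : n0 ∣ Q) (ht : 0 < t)
    (htQ : Nat.Coprime t Q) (hx : n0 * Q * t ≤ x) (hR : 2 ≤ R) :
    (((range x).filter (fun q => q.Prime ∧ ∃ b, q = n0 * (t * b) + 1 ∧ t * b ≡ c [MOD Q])).card : ℝ)
      ≤ 2 * x / (((n0 * Q).totient : ℝ) * Real.log R) * (t.totient : ℝ)⁻¹ + 2 * (R:ℝ)^6 := by
  obtain ⟨c', hc', hcl⟩ := exists_class_mul Q t c hQ htQ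
  set α := n0 * Q * t with hα
  have hα0 : 0 < α := by positivity
  have hα0' : (0:ℝ) < α := by exact_mod_cast hα0
  set N := x / α + 1 with hN
  have hsub : ((range x).filter (fun q => q.Prime ∧ ∃ b, q = n0 * (t * b) + 1 ∧ t * b ≡ c [MOD Q])) ⊆
      ((range N).filter (fun j => (α * j + (n0 * t * c' + 1)).Prime)).image
        (fun j => α * j + (n0 * t * c' + 1)) := by
    intro q hq
    obtain ⟨hqx, hqp, b, rfl, hb⟩ := mem_filter.1 hq
    rw [hcl] at hb
    have hbq := exists_quot Q b c' hc' hb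
    have heq : n0 * (t * b) + 1 = α * (b / Q) + (n0 * t * c' + 1) := by
      conv_lhs => rw [hbq]
      rw [hα]; ring
    rw [mem_image]
    refine ⟨b / Q, mem_filter.2 ⟨?_, heq ▸ hqp⟩, heq.symm⟩
    rw [mem_range] at hqx ⊢
    rw [heq] at hqx
    rw [hN, Nat.lt_succ_iff, Nat.le_div_iff_mul_le hα0, mul_comm]
    omega
  have hcard := (Nat.cast_le (α := ℝ)).2 ((card_le_card hsub).trans card_image_le)
  refine hcard.trans ((sieve_one N R α _ hR hα0).trans ?_)
  have hlog : 0 < Real.log R := Real.log_pos (by exact_mod_cast hR)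
  have hφ : α.totient = (n0 * Q).totient * t.totient :=
    Nat.totient_mul (Nat.Coprime.mul_left (htQ.coprime_dvd_right hn0Q).symm htQ.symm)
  have hφ1 : (0:ℝ) < (n0 * Q).totient := by exact_mod_cast Nat.totient_pos.2 (by positivity)
  have hφ2 : (0:ℝ) < t.totient := by exact_mod_cast Nat.totient_pos.2 ht
  have hNle : (N:ℝ) * α ≤ 2 * x := by
    have : x / α * α ≤ x := Nat.div_mul_le_self x α
    have h2 : N * α ≤ 2 * x := by rw [hN, add_mul]; omega
    exact_mod_cast h2
  rw [hφ]
  push_cast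
  gcongr
  calc (N:ℝ) * (α / (((n0 * Q).totient : ℝ) * t.totient)) / Real.log R
      = (N * α) / (((n0 * Q).totient : ℝ) * Real.log R) * (t.totient : ℝ)⁻¹ := by field_simp
    _ ≤ _ := by gcongr

open Classical in
theorem rangeB_one (n0 Q c b x r : ℕ) (hn0 : 0 < n0) (hQ : 0 < Q) (hdQ : ∀ d, 0 < d → d ≤ n0 → d ∣ Q)
    (h2Q : 2 ∣ Q) (hb : 0 < b) (hbQ : Nat.Coprime b Q) (hx : b * Q ≤ x) (hr : 2 ≤ r) :
    (((range x).filter (fun q => ∃ t, q = n0 * (b * t) + 1 ∧ b * t ≡ c [MOD Q] ∧ Tw n0 t)).card : ℝ)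
      ≤ n0 ^ 2 * (2 * x / Q * ((Q:ℝ) / Q.totient)^2 / (Real.log r)^2 * (b:ℝ)⁻¹ + 3 * (r:ℝ)^12) := by
  obtain ⟨c', hc', hcl⟩ := exists_class_mul Q b c hQ hbQ
  have hlog : 0 < Real.log r := Real.log_pos (by exact_mod_cast hr)
  have hQ' : (0:ℝ) < Q := by exact_mod_cast hQ
  have hb' : (0:ℝ) < b := by exact_mod_cast hb
  set N := x / (b * Q) + 1 with hN
  have hNle : (N:ℝ) * (b * Q) ≤ 2 * x := by
    have : x / (b * Q) * (b * Q) ≤ x := Nat.div_mul_le_self x _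
    have h2 : N * (b * Q) ≤ 2 * x := by rw [hN, add_mul]; omega
    exact_mod_cast h2
  set G : ℕ × ℕ → Finset ℕ := fun y => (range N).filter (fun j =>
    (y.1 * Q * j + (y.1 * c' + 1)).Prime ∧ (y.2 * Q * j + (y.2 * c' + 1)).Prime) with hG
  have hpair : ∀ y ∈ (n0.divisors ×ˢ n0.divisors).filter (fun x => x.1 ≠ x.2), ((G y).card : ℝ) ≤
      2 * x / Q * ((Q:ℝ) / Q.totient)^2 / (Real.log r)^2 * (b:ℝ)⁻¹ + 3 * (r:ℝ)^12 := by
    rintro ⟨d, e⟩ hy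
    obtain ⟨hy1, hne⟩ := mem_filter.1 hy
    obtain ⟨hd, he⟩ := mem_product.1 hy1
    have hd0 := Nat.pos_of_mem_divisors hd
    have he0 := Nat.pos_of_mem_divisors he
    have hdn := Nat.divisor_le hd
    have hen := Nat.divisor_le he
    simp only at hne hd he hd0 he0 hdn hen
    obtain ⟨H, hH⟩ : ∃ H, H = 2 * (d * Q) * (e * Q) *
        Int.natAbs (((d * Q : ℕ):ℤ) * ((e * c' + 1 : ℕ)) - ((d * c' + 1 : ℕ)) * ((e * Q : ℕ))) := ⟨_, rfl⟩
    have hdiff : Int.natAbs (((d * Q : ℕ):ℤ) * ((e * c' + 1 : ℕ)) - ((d * c' + 1 : ℕ)) * ((e * Q : ℕ)))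
        = Q * Int.natAbs ((d:ℤ) - e) := by
      rw [← Int.natAbs_natCast Q, ← Int.natAbs_mul]
      congr 1
      push_cast
      rw [abs_of_nonneg (by positivity)]
      ring
    have hw0 : 0 < Int.natAbs ((d:ℤ) - e) := by omega
    have hwn : Int.natAbs ((d:ℤ) - e) ≤ n0 := by omega
    have hH' : H = 2 * (d * Q) * (e * Q) * (Q * Int.natAbs ((d:ℤ) - e)) := by rw [hH, hdiff]
    have hH0 : H ≠ 0 := by rw [hH']; positivity
    have hpf : H.primeFactors = Q.primeFactors := by
      apply Finset.Subset.antisymm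
      · intro p hp
        have hp' := Nat.mem_primeFactors.1 hp
        have hpp := hp'.1
        rw [Nat.mem_primeFactors]
        refine ⟨hpp, ?_, hQ.ne'⟩
        have h1 := hp'.2.1
        rw [hH'] at h1
        have k1 := hdQ d hd0 hdn
        have k2 := hdQ e he0 hen
        have k3 := hdQ _ hw0 hwn
        rcases hpp.dvd_mul.1 h1 with h | h
        · rcases hpp.dvd_mul.1 h with h | h
          · rcases hpp.dvd_mul.1 h with h | h
            · exact h.trans h2Q
            · rcases hpp.dvd_mul.1 h with h | h
              · exact h.trans k1
              · exact h
          · rcases hpp.dvd_mul.1 h with h | h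
            · exact h.trans k2
            · exact h
        · rcases hpp.dvd_mul.1 h with h | h
          · exact h
          · exact h.trans k3
      · apply Nat.primeFactors_mono _ hH0
        rw [hH']
        exact dvd_mul_of_dvd_right (dvd_mul_right _ _) _
    have := sieve_two N r (d * Q) (d * c' + 1) (e * Q) (e * c' + 1) H hr hH hH0
    refine this.trans ?_
    rw [div_totient_congr H Q hH0 hQ.ne' hpf]
    gcongr
    have hN2 : (N:ℝ) ≤ 2 * x / Q * (b:ℝ)⁻¹ := by
      rw [← div_eq_mul_inv, div_div, le_div_iff₀ (by positivity)]
      linarith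
    calc _ ≤ 2 * x / Q * (b:ℝ)⁻¹ * ((Q:ℝ) / Q.totient)^2 / (Real.log r)^2 := by gcongr
      _ = _ := by ring
  have hsub : ((range x).filter (fun q => ∃ t, q = n0 * (b * t) + 1 ∧ b * t ≡ c [MOD Q] ∧ Tw n0 t)) ⊆
      (((n0.divisors ×ˢ n0.divisors).filter (fun x => x.1 ≠ x.2)).biUnion G).image
        (fun j => n0 * (b * (Q * j + c')) + 1) := by
    intro q hq
    obtain ⟨hqx, t, rfl, ht, d, hd, e, he, hne, hp1, hp2⟩ := mem_filter.1 hq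
    rw [hcl] at ht
    have htq := exists_quot Q t c' hc' ht
    rw [mem_image]
    refine ⟨t / Q, ?_, by rw [← htq]⟩
    rw [mem_biUnion]
    refine ⟨(d, e), mem_filter.2 ⟨mem_product.2 ⟨hd, he⟩, hne⟩, ?_⟩
    rw [hG, mem_filter]
    refine ⟨?_, ?_, ?_⟩
    · rw [mem_range] at hqx ⊢
      rw [hN, Nat.lt_succ_iff, Nat.le_div_iff_mul_le (by positivity)]
      have h1 : t / Q * (b * Q) ≤ b * t := by
        calc t / Q * (b * Q) = b * (t / Q * Q) := by ring
          _ ≤ b * t := Nat.mul_le_mul_left _ (Nat.div_mul_le_self _ _)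
      have h2 : b * t ≤ n0 * (b * t) := Nat.le_mul_of_pos_left _ hn0
      omega
    · have : d * Q * (t / Q) + (d * c' + 1) = d * t + 1 := by
        conv_rhs => rw [htq]
        ring
      simp only; rw [this]; exact hp1
    · have : e * Q * (t / Q) + (e * c' + 1) = e * t + 1 := by
        conv_rhs => rw [htq]
        ring
      simp only; rw [this]; exact hp2
  have hcard := (Nat.cast_le (α := ℝ)).2 ((card_le_card hsub).trans
    (card_image_le.trans card_biUnion_le))
  refine hcard.trans ?_
  push_cast
  refine (sum_le_sum hpair).trans ?_
  rw [sum_const, nsmul_eq_mul]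
  gcongr
  have h1 : ((n0.divisors ×ˢ n0.divisors).filter (fun x => x.1 ≠ x.2)).card ≤ n0 ^ 2 := by
    refine (card_filter_le _ _).trans ?_
    rw [card_product, sq]
    exact Nat.mul_le_mul (Nat.card_divisors_le_self _) (Nat.card_divisors_le_self _)
  exact_mod_cast h1

theorem harmonic_coprime (Q K : ℕ) (hQ : 0 < Q) :
    ∑ b ∈ range (2^K) with Nat.Coprime b Q, (b:ℝ)⁻¹ ≤ K * ((Q.totient : ℝ) / Q) + 2 * Q.totient := by
  have hQ' : (0:ℝ) < Q := by exact_mod_cast hQ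
  rw [sum_filter, sum_dyadic_s5]
  have hblock : ∀ k ∈ range K, ∑ t ∈ Ico (2^k) (2^(k+1)), (if Nat.Coprime t Q then (t:ℝ)⁻¹ else 0) ≤
      (Q.totient : ℝ) / Q + Q.totient * (1/2)^k := by
    intro k _
    rw [← sum_filter]
    have h1 := Nat.Ico_filter_coprime_le (a := Q) (2^k) (2^k) hQ.ne'
    have h2 : ((Ico (2^k) (2^(k+1))).filter (fun t => Nat.Coprime t Q)).card ≤
        Q.totient * (2^k / Q + 1) := by
      refine le_trans (le_of_eq ?_) h1
      congr 1
      rw [pow_succ, mul_two]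
      exact filter_congr fun t _ => Nat.coprime_comm
    have h3 : (((Ico (2^k) (2^(k+1))).filter (fun t => Nat.Coprime t Q)).card : ℝ) ≤
        Q.totient * (2^k / Q + 1) := by
      refine (Nat.cast_le (α := ℝ)).2 h2 |>.trans ?_
      push_cast
      gcongr
      have := Nat.cast_div_le (α := ℝ) (m := 2^k) (n := Q)
      push_cast at this
      exact this
    calc _ ≤ ∑ t ∈ (Ico (2^k) (2^(k+1))).filter (fun t => Nat.Coprime t Q), ((2:ℝ)^k)⁻¹ := by
          refine sum_le_sum fun t ht => ?_
          have := (Finset.mem_Ico.1 (mem_filter.1 ht).1).1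
          have : (2:ℝ)^k ≤ t := by exact_mod_cast this
          gcongr
      _ = ((Ico (2^k) (2^(k+1))).filter (fun t => Nat.Coprime t Q)).card * ((2:ℝ)^k)⁻¹ := by
          rw [sum_const, nsmul_eq_mul]
      _ ≤ (Q.totient * (2^k / Q + 1)) * ((2:ℝ)^k)⁻¹ := by gcongr
      _ = _ := by
          rw [one_div, inv_pow]
          field_simp
  have hz : (if Nat.Coprime 0 Q then ((0:ℕ):ℝ)⁻¹ else 0) = 0 := by simp
  rw [hz, zero_add]
  refine (sum_le_sum hblock).trans ?_
  rw [sum_add_distrib, sum_const, card_range, nsmul_eq_mul, ← mul_sum]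
  have hg : ∑ i ∈ range K, ((1:ℝ)/2)^i ≤ 2 := sum_geometric_two_le K
  nlinarith [hg, (Nat.cast_nonneg Q.totient : (0:ℝ) ≤ Q.totient)]

end Ranges

section MainCount
open Finset

theorem gt_of_coprime_factorial (T t : ℕ) (ht : 1 < t) (h : Nat.Coprime t (Nat.factorial T)) : T < t := by
  by_contra hc
  have h1 : t ∣ Nat.factorial T := Nat.dvd_factorial (by omega) (by omega)
  have := Nat.Coprime.eq_one_of_dvd h h1
  omega

open Classical in
theorem main_cover (n0 T Q c x z : ℕ) (hn0 : 0 < n0) (hQ : Q = Nat.factorial T)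
    (hc : Nat.Coprime c Q) (hno : ∀ n : ℕ, 0 < n → omegaStar n ≠ omegaStar n0 + 1)
    (hz : 0 < z) (s : Finset ℕ) (hs : ∀ q ∈ s, n0 + 1 < q ∧ q < x ∧ q.Prime ∧ q ≡ n0 * c + 1 [MOD n0 * Q]) :
    s ⊆ (((Icc 1 (x / z)).filter (fun t => T < t ∧ Tw n0 t ∧ Nat.Coprime t Q)).biUnion
        (fun t => (range x).filter (fun q => q.Prime ∧ ∃ b, q = n0 * (t * b) + 1 ∧ t * b ≡ c [MOD Q]))) ∪
      (((range z).filter (fun b => Nat.Coprime b Q ∧ 0 < b)).biUnion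
        (fun b => (range x).filter (fun q => ∃ t, q = n0 * (b * t) + 1 ∧ b * t ≡ c [MOD Q] ∧ Tw n0 t))) := by
  intro q hq
  obtain ⟨hq1, hqx, hqp, hqm⟩ := hs q hq
  have h1 : q - 1 ≡ n0 * c [MOD n0 * Q] := by
    have : (q - 1) + 1 ≡ n0 * c + 1 [MOD n0 * Q] := by rwa [Nat.sub_add_cancel (by omega)]
    exact Nat.ModEq.add_right_cancel' 1 this
  have h2 : n0 ∣ q - 1 := by
    have h3 : q - 1 ≡ n0 * c [MOD n0] := h1.of_mul_right Q
    exact (Nat.modEq_zero_iff_dvd.1 (h3.trans (Nat.modEq_zero_iff_dvd.2 (dvd_mul_right _ _))))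
  obtain ⟨t0, ht0⟩ := h2
  have hq2 : q = n0 * t0 + 1 := by omega
  have h3 : t0 ≡ c [MOD Q] := by
    rw [ht0] at h1
    exact Nat.ModEq.mul_left_cancel' hn0.ne' h1
  have ht01 : 1 < t0 := by
    rcases Nat.lt_or_ge 1 t0 with h | h
    · exact h
    · have : n0 * t0 ≤ n0 * 1 := Nat.mul_le_mul_left _ h
      omega
  have ht0Q : Nat.Coprime t0 Q := by
    have := h3.gcd_eq
    rw [Nat.Coprime, this]; exact hc
  obtain ⟨t, ⟨b, htb⟩, ht1, htw⟩ := exists_Tw n0 t0 hn0 hno ht01 (hq2 ▸ hqp)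
  have htQ : Nat.Coprime t Q := ht0Q.coprime_dvd_left ⟨b, htb⟩
  have hbQ : Nat.Coprime b Q := ht0Q.coprime_dvd_left ⟨t, by rw [htb, mul_comm]⟩
  have hb0 : 0 < b := Nat.pos_of_ne_zero (by rintro rfl; simp at htb; omega)
  have hTt : T < t := gt_of_coprime_factorial T t ht1 (hQ ▸ htQ)
  rw [mem_union]
  rcases Nat.lt_or_ge (x / z) t with h | h
  · right
    rw [mem_biUnion]
    refine ⟨b, mem_filter.2 ⟨?_, hbQ, hb0⟩, mem_filter.2 ⟨mem_range.2 hqx, t, ?_, ?_, htw⟩⟩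
    · rw [mem_range]
      by_contra hcb
      rw [Nat.div_lt_iff_lt_mul hz] at h
      have h4 : t * z ≤ t * b := Nat.mul_le_mul_left _ (by omega)
      have h5 : t0 ≤ n0 * t0 := Nat.le_mul_of_pos_left _ hn0
      omega
    · rw [hq2, htb, mul_comm t b]
    · rw [mul_comm b t, ← htb]; exact h3
  · left
    rw [mem_biUnion]
    refine ⟨t, mem_filter.2 ⟨Finset.mem_Icc.2 ⟨by omega, h⟩, hTt, htw, htQ⟩,
      mem_filter.2 ⟨mem_range.2 hqx, hqp, b, ?_, ?_⟩⟩
    · rw [hq2, htb]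
    · rw [← htb]; exact h3

open Classical in
theorem main_count (n0 T Q c E i u : ℕ) (τ : ℝ) (hn0 : 0 < n0) (hT : n0 ≤ T) (hT2 : 2 ≤ T)
    (hQ : Q = Nat.factorial T) (hc : Nat.Coprime c Q)
    (hno : ∀ n : ℕ, 0 < n → omegaStar n ≠ omegaStar n0 + 1)
    (hE : 28 ≤ E) (hu : u = i / E) (hu2 : 2 * n0 * Q ≤ u)
    (hτ : ∀ F : Finset ℕ, (∀ t ∈ F, T < t ∧ Tw n0 t) → ∑ t ∈ F, (t.totient : ℝ)⁻¹ ≤ τ) :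
    (((Ico (2^i) (2^(i+1))).filter (fun q => q.Prime ∧ q ≡ n0 * c + 1 [MOD n0 * Q])).card : ℝ) ≤
      (8 * E * τ / Real.log 2 + 73728 * n0^3 / (E * (Real.log 2)^2)) *
        (2^i / (i * (n0 * Q).totient)) + (4 + 3 * n0^2) * (2^i / 2^u) := by
  have hlog2 : 0 < Real.log 2 := Real.log_pos (by norm_num)
  have hQ0 : 0 < Q := hQ ▸ Nat.factorial_pos T
  have hn0Q : n0 ∣ Q := hQ ▸ Nat.dvd_factorial hn0 hT
  have hu0 : 0 < u := lt_of_lt_of_le (by positivity) hu2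
  have hEu : E * u ≤ i := by rw [hu]; exact Nat.mul_div_le i E
  have hEu2 : i < E * (u + 1) := by
    rw [hu]; exact Nat.lt_mul_div_succ i (by omega)
  have h28 : 28 * u ≤ i := le_trans (Nat.mul_le_mul_right u hE) hEu
  obtain ⟨v, hv⟩ : ∃ v, v = i / 24 := ⟨_, rfl⟩
  have hv1 : 24 * v ≤ i := by omega
  have hv2 : i ≤ 48 * v := by omega
  have hv0 : 0 < v := by omega
  have hi0 : 0 < i := by omega
  have hnQu : n0 * Q ≤ 2 ^ u := by
    have : u < 2 ^ u := Nat.lt_two_pow_self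
    have : 2 * n0 * Q = n0 * Q + n0 * Q := by ring
    omega
  have hQu : Q ≤ 2 ^ u := le_trans (Nat.le_mul_of_pos_left _ hn0) hnQu
  obtain ⟨x, hx⟩ : ∃ x, x = 2 ^ (i+1) := ⟨_, rfl⟩
  obtain ⟨z, hz⟩ : ∃ z, z = 2 ^ (7 * u) := ⟨_, rfl⟩
  have hz0 : 0 < z := by rw [hz]; positivity
  have hcov := main_cover n0 T Q c x z hn0 hQ hc hno hz0
    ((Ico (2^i) (2^(i+1))).filter (fun q => q.Prime ∧ q ≡ n0 * c + 1 [MOD n0 * Q])) (by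
      intro q hq
      obtain ⟨h1, h2, h3⟩ := mem_filter.1 hq
      rw [Finset.mem_Ico] at h1
      refine ⟨?_, hx ▸ h1.2, h2, h3⟩
      have h4 : i < 2 ^ i := Nat.lt_two_pow_self
      have h5 : n0 ≤ n0 * Q := Nat.le_mul_of_pos_right _ hQ0
      have h6 : 2 * n0 * Q = n0 * Q + n0 * Q := by ring
      omega)
  have hcard := (Nat.cast_le (α := ℝ)).2 ((card_le_card hcov).trans ((card_union_le _ _).trans
    (add_le_add card_biUnion_le card_biUnion_le)))
  refine hcard.trans ?_
  push_cast
  have hm : ((n0 * Q).totient : ℝ) = n0 * Q.totient := by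
    have hpf : (n0 * Q).primeFactors = Q.primeFactors := by
      rw [Nat.primeFactors_mul hn0.ne' hQ0.ne', Finset.union_eq_right]
      exact Nat.primeFactors_mono hn0Q hQ0.ne'
    have h1 := div_totient_congr (n0 * Q) Q (by positivity) hQ0.ne' hpf
    have h2 : (0:ℝ) < (n0 * Q).totient := by exact_mod_cast Nat.totient_pos.2 (by positivity)
    have h3 : (0:ℝ) < Q.totient := by exact_mod_cast Nat.totient_pos.2 hQ0
    have h4 : (0:ℝ) < Q := by exact_mod_cast hQ0
    rw [div_eq_div_iff h2.ne' h3.ne'] at h1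
    push_cast at h1
    nlinarith
  have hφQ : (0:ℝ) < Q.totient := by exact_mod_cast Nat.totient_pos.2 hQ0
  have hφm : (0:ℝ) < (n0 * Q).totient := by exact_mod_cast Nat.totient_pos.2 (by positivity)
  have hQr : (0:ℝ) < Q := by exact_mod_cast hQ0
  have hn0r : (0:ℝ) < n0 := by exact_mod_cast hn0
  have hir : (0:ℝ) < i := by exact_mod_cast hi0
  have hur : (0:ℝ) < u := by exact_mod_cast hu0
  have hvr : (0:ℝ) < v := by exact_mod_cast hv0
  have hEr : (0:ℝ) < E := by exact_mod_cast (by omega : 0 < E)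
  have hxr : (x:ℝ) = 2 * 2^i := by rw [hx]; push_cast; ring
  have hτ0 : 0 ≤ τ := by simpa using hτ ∅ (by simp)
  -- range A
  have hA : ∑ t ∈ (Icc 1 (x / z)).filter (fun t => T < t ∧ Tw n0 t ∧ Nat.Coprime t Q),
      (((range x).filter (fun q => q.Prime ∧ ∃ b, q = n0 * (t * b) + 1 ∧ t * b ≡ c [MOD Q])).card : ℝ)
      ≤ 8 * E * τ / Real.log 2 * (2^i / (i * (n0 * Q).totient)) + 4 * (2^i / 2^u) := by
    have h1 : ∀ t ∈ (Icc 1 (x / z)).filter (fun t => T < t ∧ Tw n0 t ∧ Nat.Coprime t Q),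
      (((range x).filter (fun q => q.Prime ∧ ∃ b, q = n0 * (t * b) + 1 ∧ t * b ≡ c [MOD Q])).card : ℝ)
      ≤ 2 * x / (((n0 * Q).totient : ℝ) * Real.log (2^u : ℕ)) * (t.totient : ℝ)⁻¹
        + 2 * ((2^u : ℕ):ℝ)^6 := by
      intro t ht
      obtain ⟨ht1, ht2, ht3, ht4⟩ := mem_filter.1 ht
      rw [Finset.mem_Icc] at ht1
      refine rangeA_one n0 Q c t x (2^u) hn0 hQ0 hn0Q ht1.1 ht4 ?_ (Nat.le_self_pow (by omega) 2)
      have h2 : t * z ≤ x := (Nat.le_div_iff_mul_le hz0).1 ht1.2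
      have h3 : n0 * Q ≤ z := hnQu.trans (by rw [hz]; exact Nat.pow_le_pow_right (by norm_num) (by omega))
      calc n0 * Q * t ≤ z * t := Nat.mul_le_mul_right t h3
        _ ≤ x := by rw [mul_comm]; exact h2
    refine (sum_le_sum h1).trans ?_
    rw [sum_add_distrib, ← mul_sum, sum_const, nsmul_eq_mul]
    apply add_le_add
    · have h2 := hτ ((Icc 1 (x / z)).filter (fun t => T < t ∧ Tw n0 t ∧ Nat.Coprime t Q))
        (fun t ht => ⟨(mem_filter.1 ht).2.1, (mem_filter.1 ht).2.2.1⟩)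
      have h3 : (i:ℝ) ≤ 2 * E * u := by
        have : i ≤ 2 * E * u := by
          have : E * 1 ≤ E * u := Nat.mul_le_mul_left _ hu0
          have h' : E * (u + 1) = E * u + E := by ring
          have h'' : 2 * E * u = E * u + E * u := by ring
          omega
        exact_mod_cast this
      push_cast
      rw [Real.log_pow, hxr]
      calc 2 * (2 * 2^i) / (((n0 * Q).totient : ℝ) * (u * Real.log 2)) * _
          ≤ 2 * (2 * 2^i) / (((n0 * Q).totient : ℝ) * (u * Real.log 2)) * τ := by gcongr
        _ ≤ 2 * (2 * 2^i) / (((n0 * Q).totient : ℝ) * (i / (2 * E) * Real.log 2)) * τ := by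
            gcongr
            rw [div_le_iff₀ (by positivity)]; linarith
        _ = _ := by field_simp; ring
    · have h2 : ((Icc 1 (x / z)).filter (fun t => T < t ∧ Tw n0 t ∧ Nat.Coprime t Q)).card ≤ x / z := by
        refine (card_filter_le _ _).trans ?_
        simp
      have h3 : (((Icc 1 (x / z)).filter (fun t => T < t ∧ Tw n0 t ∧ Nat.Coprime t Q)).card : ℝ)
          ≤ x / z := ((Nat.cast_le (α := ℝ)).2 h2).trans Nat.cast_div_le
      calc _ ≤ (x:ℝ) / z * (2 * ((2^u : ℕ):ℝ)^6) := by gcongr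
        _ = _ := by
          rw [hxr, hz]
          push_cast
          rw [mul_comm 7 u, pow_mul]
          field_simp
          ring
  -- range B
  have hB : ∑ b ∈ (range z).filter (fun b => Nat.Coprime b Q ∧ 0 < b),
      (((range x).filter (fun q => ∃ t, q = n0 * (b * t) + 1 ∧ b * t ≡ c [MOD Q] ∧ Tw n0 t)).card : ℝ)
      ≤ 73728 * n0^3 / (E * (Real.log 2)^2) * (2^i / (i * (n0 * Q).totient)) + 3 * n0^2 * (2^i / 2^u) := by
    have h1 : ∀ b ∈ (range z).filter (fun b => Nat.Coprime b Q ∧ 0 < b),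
      (((range x).filter (fun q => ∃ t, q = n0 * (b * t) + 1 ∧ b * t ≡ c [MOD Q] ∧ Tw n0 t)).card : ℝ)
      ≤ n0 ^ 2 * (2 * x / Q * ((Q:ℝ) / Q.totient)^2 / (Real.log (2^v : ℕ))^2 * (b:ℝ)⁻¹
        + 3 * ((2^v : ℕ):ℝ)^12) := by
      intro b hb
      obtain ⟨hb1, hb2, hb3⟩ := mem_filter.1 hb
      rw [mem_range] at hb1
      refine rangeB_one n0 Q c b x (2^v) hn0 hQ0 (fun d h h' => ?_) ?_ hb3 hb2 ?_
        (Nat.le_self_pow (by omega) 2)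
      · rw [hQ]; exact Nat.dvd_factorial h (h'.trans hT)
      · rw [hQ]; exact Nat.dvd_factorial (by norm_num) hT2
      · calc b * Q ≤ 2 ^ (7 * u) * 2 ^ u := Nat.mul_le_mul (hz ▸ hb1.le) hQu
          _ = 2 ^ (8 * u) := by rw [← pow_add]; congr 1; ring
          _ ≤ x := by rw [hx]; exact Nat.pow_le_pow_right (by norm_num) (by omega)
    refine (sum_le_sum h1).trans ?_
    rw [← mul_sum, sum_add_distrib, ← mul_sum, sum_const, nsmul_eq_mul]
    have hS : ∑ b ∈ (range z).filter (fun b => Nat.Coprime b Q ∧ 0 < b), (b:ℝ)⁻¹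
        ≤ 8 * (i / E) * ((Q.totient : ℝ) / Q) := by
      have h2 := harmonic_coprime Q (7 * u) hQ0
      rw [← hz] at h2
      have h3 : ∑ b ∈ (range z).filter (fun b => Nat.Coprime b Q ∧ 0 < b), (b:ℝ)⁻¹ ≤
          ∑ b ∈ (range z).filter (fun b => Nat.Coprime b Q), (b:ℝ)⁻¹ := by
        apply sum_le_sum_of_subset_of_nonneg
        · intro b hb
          have := mem_filter.1 hb
          exact mem_filter.2 ⟨this.1, this.2.1⟩
        · intro b _ _; positivity
      refine h3.trans (h2.trans ?_)
      have h4 : (2:ℝ) * Q ≤ u := by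
        have : 2 * Q ≤ u := le_trans (by nlinarith) hu2
        exact_mod_cast this
      have h5 : (u:ℝ) ≤ i / E := by
        rw [le_div_iff₀ hEr, mul_comm]; exact_mod_cast hEu
      calc ((7 * u : ℕ):ℝ) * ((Q.totient : ℝ) / Q) + 2 * Q.totient
          = (7 * u + 2 * Q) * ((Q.totient : ℝ) / Q) := by push_cast; field_simp
        _ ≤ (7 * u + u) * ((Q.totient : ℝ) / Q) := by gcongr
        _ ≤ _ := by gcongr; linarith
    rw [mul_add]
    apply add_le_add
    · push_cast
      rw [Real.log_pow, hxr]
      have h3 : (i:ℝ) / 48 ≤ v := by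
        rw [div_le_iff₀ (by norm_num), mul_comm]; exact_mod_cast hv2
      calc (n0:ℝ)^2 * (2 * (2 * 2^i) / Q * ((Q:ℝ) / Q.totient)^2 / (v * Real.log 2)^2 * _)
          ≤ (n0:ℝ)^2 * (2 * (2 * 2^i) / Q * ((Q:ℝ) / Q.totient)^2 / (v * Real.log 2)^2 *
            (8 * (i / E) * ((Q.totient : ℝ) / Q))) := by gcongr
        _ ≤ (n0:ℝ)^2 * (2 * (2 * 2^i) / Q * ((Q:ℝ) / Q.totient)^2 / (i / 48 * Real.log 2)^2 *
            (8 * (i / E) * ((Q.totient : ℝ) / Q))) := by gcongr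
        _ = _ := by
            rw [hm]; field_simp; norm_num
    · have h2 : (((range z).filter (fun b => Nat.Coprime b Q ∧ 0 < b)).card : ℝ) ≤ z := by
        have : ((range z).filter (fun b => Nat.Coprime b Q ∧ 0 < b)).card ≤ z :=
          (card_filter_le _ _).trans (by simp)
        exact_mod_cast this
      calc _ ≤ (n0:ℝ)^2 * ((z:ℝ) * (3 * ((2^v : ℕ):ℝ)^12)) := by gcongr
        _ = 3 * n0^2 * 2 ^ (7 * u + 12 * v) := by
            rw [hz]; push_cast; rw [pow_add, mul_comm 12 v, pow_mul 2 v 12]; ring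
        _ ≤ 3 * n0^2 * (2^i / 2^u) := by
            gcongr
            rw [le_div_iff₀ (by positivity), ← pow_add]
            exact pow_le_pow_right₀ (by norm_num) (by omega)
  calc _ ≤ _ := add_le_add hA hB
    _ = _ := by ring

end MainCount

section Contra
open Finset

open ArithmeticFunction.vonMangoldt in
theorem density_contra (m a i0 : ℕ) (hm : 0 < m) (ha : Nat.Coprime a m)
    (h : ∀ i ≥ i0, (((Ico (2^i) (2^(i+1))).filter (fun q => q.Prime ∧ q ≡ a [MOD m])).card : ℝ) ≤
      1/8 * (2^i / (i * m.totient))) : False := by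
  have : NeZero m := ⟨hm.ne'⟩
  have hφ : (0:ℝ) < m.totient := by exact_mod_cast Nat.totient_pos.2 hm
  have hau : IsUnit (a : ZMod m) := (ZMod.isUnit_iff_coprime a m).2 ha
  obtain ⟨C, hC⟩ := LSeries_residueClass_lower_bound hau
  have hnp := summable_residueClass_non_primes_div (a : ZMod m)
  obtain ⟨C1, hC1⟩ : ∃ C1, C1 = ∑' n : ℕ, (if n.Prime then 0 else residueClass (a : ZMod m) n) / (n:ℝ) :=
    ⟨_, rfl⟩
  obtain ⟨C2, hC2⟩ : ∃ C2 : ℝ, C2 = ∑ i ∈ range (i0+1), (2:ℝ)^i * (i+1) := ⟨_, rfl⟩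
  have key : ∀ ε : ℝ, 0 < ε → ε ≤ 1 →
      ∑' n : ℕ, residueClass (a : ZMod m) n / (n:ℝ)^(1+ε) ≤ C1 + C2 + 1 / (2 * m.totient * ε) := by
    intro ε hε hε1
    have hr0 : (0:ℝ) ≤ (1/2:ℝ)^ε := by positivity
    have hr : (1/2:ℝ)^ε ≤ 1 - ε / 2 := by
      have := rpow_one_add_le_one_add_mul_self (s := -(1/2)) (p := ε) (by norm_num) hε.le hε1
      norm_num at this ⊢
      linarith
    apply Real.tsum_le_of_sum_range_le
    · intro n
      exact div_nonneg (residueClass_nonneg _ _) (by positivity)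
    intro N
    set g : ℕ → ℝ := fun n => if n.Prime ∧ n ≡ a [MOD m] then Real.log n / (n:ℝ)^(1+ε) else 0 with hg
    have hg0 : ∀ n, 0 ≤ g n := by
      intro n
      simp only [hg]
      split_ifs
      · exact div_nonneg (Real.log_natCast_nonneg n) (by positivity)
      · exact le_rfl
    have hsplit : ∀ n : ℕ, residueClass (a : ZMod m) n / (n:ℝ)^(1+ε) ≤
        g n + (if n.Prime then 0 else residueClass (a : ZMod m) n) / (n:ℝ) := by
      intro n
      have hnn := residueClass_nonneg (a : ZMod m) n
      by_cases hp : n.Prime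
      · rw [if_pos hp]
        simp only [hg]
        by_cases hna : n ≡ a [MOD m]
        · rw [if_pos ⟨hp, hna⟩, zero_div, add_zero]
          gcongr
          refine (residueClass_le _ _).trans ?_
          rw [ArithmeticFunction.vonMangoldt_apply_prime hp]
        · have : residueClass (a : ZMod m) n = 0 := by
            apply Set.indicator_of_notMem
            intro h1
            exact hna ((ZMod.natCast_eq_natCast_iff _ _ _).1 h1)
          rw [this]
          have := hg0 n
          simp only [hg] at this
          simpa using this
      · rw [if_neg hp]
        have := hg0 n
        rcases Nat.eq_zero_or_pos n with h0 | h0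
        · subst h0
          simp only [residueClass_apply_zero, zero_div, add_zero]
          exact this
        · have h1 : (n:ℝ) ≤ (n:ℝ)^(1+ε) := by
            conv_lhs => rw [← Real.rpow_one (n:ℝ)]
            exact Real.rpow_le_rpow_of_exponent_le (by exact_mod_cast h0) (by linarith)
          have h2 : (0:ℝ) < n := by exact_mod_cast h0
          have : residueClass (a : ZMod m) n / (n:ℝ)^(1+ε) ≤ residueClass (a : ZMod m) n / (n:ℝ) := by
            gcongr
          linarith
    have hgblock : ∀ i : ℕ, ∀ n ∈ Ico (2^i) (2^(i+1)), g n ≤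
        if n.Prime ∧ n ≡ a [MOD m] then ((i:ℝ)+1) * (2^i)⁻¹ * ((1/2:ℝ)^ε)^i else 0 := by
      intro i n hn
      rw [Finset.mem_Ico] at hn
      simp only [hg]
      split_ifs with hh
      · have h1 : (2:ℝ)^i ≤ n := by exact_mod_cast hn.1
        have h2 : (n:ℝ) ≤ 2^(i+1) := by exact_mod_cast hn.2.le
        have h0 : (0:ℝ) < n := lt_of_lt_of_le (by positivity) h1
        have h3 : Real.log n ≤ i + 1 := by
          calc Real.log n ≤ Real.log (2^(i+1)) := Real.log_le_log h0 h2
            _ = (i+1) * Real.log 2 := by rw [Real.log_pow]; push_cast; ring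
            _ ≤ (i+1) * 1 := by
              gcongr
              have := Real.log_two_lt_d9
              linarith
            _ = _ := by ring
        have h4 : ((2:ℝ)^i)^(1+ε) ≤ (n:ℝ)^(1+ε) := Real.rpow_le_rpow (by positivity) h1 (by linarith)
        have h5 : (((2:ℝ)^i)^(1+ε))⁻¹ = (2^i)⁻¹ * ((1/2:ℝ)^ε)^i := by
          rw [Real.rpow_add (by positivity), Real.rpow_one, mul_inv]
          congr 1
          rw [← Real.rpow_natCast ((1/2:ℝ)^ε) i, ← Real.rpow_mul (by norm_num), mul_comm ε,
            Real.rpow_mul (by norm_num), Real.rpow_natCast, ← Real.inv_rpow (by positivity)]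
          congr 1
          rw [one_div, inv_pow]
        rw [mul_assoc, ← h5, ← div_eq_mul_inv]
        gcongr
      · exact le_rfl
    have hblock : ∀ i : ℕ, ∑ n ∈ Ico (2^i) (2^(i+1)), g n ≤
        (if i < i0 + 1 then (2:ℝ)^i * (i+1) else 0) + 1 / (4 * m.totient) * ((1/2:ℝ)^ε)^i := by
      intro i
      have h1 : ∑ n ∈ Ico (2^i) (2^(i+1)), g n ≤
          ((Ico (2^i) (2^(i+1))).filter (fun q => q.Prime ∧ q ≡ a [MOD m])).card *
          (((i:ℝ)+1) * (2^i)⁻¹ * ((1/2:ℝ)^ε)^i) := by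
        refine (sum_le_sum (hgblock i)).trans ?_
        rw [← sum_filter, sum_const, nsmul_eq_mul]
      refine h1.trans ?_
      have hri : 0 ≤ ((1/2:ℝ)^ε)^i := by positivity
      by_cases hi : i < i0 + 1
      · rw [if_pos hi]
        have h2 : (((Ico (2^i) (2^(i+1))).filter (fun q => q.Prime ∧ q ≡ a [MOD m])).card : ℝ) ≤ 2^i := by
          have : ((Ico (2^i) (2^(i+1))).filter (fun q => q.Prime ∧ q ≡ a [MOD m])).card ≤ 2^i := by
            refine (card_filter_le _ _).trans ?_
            rw [Nat.card_Ico, pow_succ]; omega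
          exact_mod_cast this
        have h3 : ((1/2:ℝ)^ε)^i ≤ 1 := pow_le_one₀ hr0 (by linarith)
        have h4 : ((2:ℝ)^i)⁻¹ ≤ 1 := inv_le_one_of_one_le₀ (one_le_pow₀ (by norm_num))
        calc _ ≤ (2:ℝ)^i * (((i:ℝ)+1) * 1 * 1) := by gcongr
          _ = (2:ℝ)^i * (i+1) := by ring
          _ ≤ _ := le_add_of_nonneg_right (by positivity)
      · rw [if_neg hi, zero_add]
        have h2 := h i (by omega)
        have hi1 : (1:ℝ) ≤ i := by exact_mod_cast (by omega : 1 ≤ i)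
        calc _ ≤ (1/8 * ((2:ℝ)^i / (i * m.totient))) * (((i:ℝ)+1) * (2^i)⁻¹ * ((1/2:ℝ)^ε)^i) := by gcongr
          _ ≤ (1/8 * ((2:ℝ)^i / (i * m.totient))) * (((i:ℝ)+i) * (2^i)⁻¹ * ((1/2:ℝ)^ε)^i) := by gcongr
          _ = _ := by
            have : (i:ℝ) ≠ 0 := by linarith
            field_simp
            ring
    have hgsum : ∑ n ∈ range (2^N), g n ≤ C2 + 1 / (2 * m.totient * ε) := by
      rw [sum_dyadic_s5]
      have hgz : g 0 = 0 := by simp [hg]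
      rw [hgz, zero_add]
      refine (sum_le_sum fun i _ => hblock i).trans ?_
      rw [sum_add_distrib, ← mul_sum]
      apply add_le_add
      · rw [← sum_filter, hC2]
        apply sum_le_sum_of_subset_of_nonneg
        · intro i hi; exact mem_range.2 (mem_filter.1 hi).2
        · intro i _ _; positivity
      · have hlt : (1/2:ℝ)^ε < 1 := by linarith
        have h1 : ∑ i ∈ range N, ((1/2:ℝ)^ε)^i ≤ (1 - (1/2:ℝ)^ε)⁻¹ := by
          rw [← tsum_geometric_of_lt_one hr0 hlt]
          exact (summable_geometric_of_lt_one hr0 hlt).sum_le_tsum _ fun i _ => by positivity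
        have h2 : (1 - (1/2:ℝ)^ε)⁻¹ ≤ (ε/2)⁻¹ := by
          gcongr
          linarith
        calc _ ≤ 1 / (4 * m.totient) * (ε/2)⁻¹ := by gcongr; exact h1.trans h2
          _ = _ := by field_simp; norm_num
    calc ∑ n ∈ range N, residueClass (a : ZMod m) n / (n:ℝ)^(1+ε)
        ≤ ∑ n ∈ range (2^N), residueClass (a : ZMod m) n / (n:ℝ)^(1+ε) :=
          sum_le_sum_of_subset_of_nonneg (range_subset_range.2 Nat.lt_two_pow_self.le) fun n _ _ =>
            div_nonneg (residueClass_nonneg _ _) (by positivity)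
      _ ≤ ∑ n ∈ range (2^N), (g n + (if n.Prime then 0 else residueClass (a : ZMod m) n) / (n:ℝ)) :=
          sum_le_sum fun n _ => hsplit n
      _ = ∑ n ∈ range (2^N), g n +
          ∑ n ∈ range (2^N), (if n.Prime then 0 else residueClass (a : ZMod m) n) / (n:ℝ) :=
          sum_add_distrib
      _ ≤ (C2 + 1 / (2 * m.totient * ε)) + C1 := by
          apply add_le_add hgsum
          rw [hC1]
          refine hnp.sum_le_tsum _ fun n _ => ?_
          have := residueClass_nonneg (a : ZMod m) n
          split_ifs <;> positivity
      _ = _ := by ring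
  set B := |C + C1 + C2| + 1 with hB
  have hB1 : 1 ≤ B := by rw [hB]; linarith [abs_nonneg (C + C1 + C2)]
  have hφ1 : (1:ℝ) ≤ m.totient := by exact_mod_cast Nat.totient_pos.2 hm
  set ε := 1 / (2 * m.totient * B) with hε
  have hden : 1 ≤ 2 * (m.totient:ℝ) * B := by nlinarith
  have hε0 : 0 < ε := by positivity
  have hε1 : ε ≤ 1 := by rw [hε, div_le_one (by positivity)]; exact hden
  have k1 := key ε hε0 hε1
  have k2 := hC (x := 1 + ε) ⟨by linarith, by linarith⟩
  have k3 : (m.totient : ℝ)⁻¹ / (1 + ε - 1) = 2 * B := by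
    rw [hε]; field_simp; ring
  have k4 : 1 / (2 * m.totient * ε) = B := by
    rw [hε]; field_simp
  rw [k3] at k2
  rw [k4] at k1
  have := le_abs_self (C + C1 + C2)
  linarith

theorem exists_c (n0 T : ℕ) (hev : 2 ∣ n0) : ∃ c, Nat.Coprime c (Nat.factorial T) ∧
    Nat.Coprime (n0 * c + 1) (Nat.factorial T) := by
  obtain ⟨B, hB⟩ : ∃ B, B = ∏ p ∈ Icc 1 T with (p.Prime ∧ ¬ p ∣ (n0+1)), p := ⟨_, rfl⟩
  have hcop : Nat.Coprime (n0+1) B := (sieveP_facts (n0+1) T B hB).2.2.symm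
  obtain ⟨c, hc1, hc2⟩ := Nat.chineseRemainder hcop n0 1
  have hp : ∀ p : ℕ, p.Prime → p ≤ T → ¬ p ∣ c ∧ ¬ p ∣ n0 * c + 1 := by
    intro p hp hpT
    by_cases h : p ∣ n0 + 1
    · have hne : p ≠ 2 := by rintro rfl; omega
      have h1 : (c : ZMod p) = n0 := (ZMod.natCast_eq_natCast_iff _ _ _).2 (hc1.of_dvd h)
      have h2 : (n0 : ZMod p) + 1 = 0 := by
        have := (ZMod.natCast_eq_zero_iff (n0+1) p).2 h
        push_cast at this; exact this
      have h3 : (n0 : ZMod p) = -1 := eq_neg_of_add_eq_zero_left h2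
      have : Fact p.Prime := ⟨hp⟩
      constructor
      · intro hd
        rw [← ZMod.natCast_eq_zero_iff, h1, h3] at hd
        simp at hd
      · intro hd
        rw [← ZMod.natCast_eq_zero_iff] at hd
        push_cast at hd
        rw [h1, h3] at hd
        have h4 : ((2:ℕ) : ZMod p) = 0 := by push_cast; rw [← hd]; ring
        rw [ZMod.natCast_eq_zero_iff] at h4
        exact hne ((Nat.prime_dvd_prime_iff_eq hp Nat.prime_two).1 h4)
    · have hpB : p ∣ B := by
        rw [hB]
        exact Finset.dvd_prod_of_mem _ (mem_filter.2 ⟨Finset.mem_Icc.2 ⟨hp.pos, hpT⟩, hp, h⟩)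
      have h1 : (c : ZMod p) = (1:ℕ) := (ZMod.natCast_eq_natCast_iff _ _ _).2 (hc2.of_dvd hpB)
      have : Fact p.Prime := ⟨hp⟩
      constructor
      · intro hd
        rw [← ZMod.natCast_eq_zero_iff, h1] at hd
        simp at hd
      · intro hd
        apply h
        rw [← ZMod.natCast_eq_zero_iff] at hd ⊢
        push_cast at hd ⊢
        rw [h1] at hd
        simpa using hd
  refine ⟨c, ?_, ?_⟩
  · by_contra hc
    obtain ⟨p, hpp, h1, h2⟩ := Nat.Prime.not_coprime_iff_dvd.1 hc
    exact (hp p hpp ((hpp.dvd_factorial).1 h2)).1 h1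
  · by_contra hc
    obtain ⟨p, hpp, h1, h2⟩ := Nat.Prime.not_coprime_iff_dvd.1 hc
    exact (hp p hpp ((hpp.dvd_factorial).1 h2)).2 h1

open Classical in
theorem exists_tail (n0 : ℕ) (τ : ℝ) (hτ : 0 < τ) : ∃ T, n0 ≤ T ∧ 2 ≤ T ∧
    ∀ F : Finset ℕ, (∀ t ∈ F, T < t ∧ Tw n0 t) → ∑ t ∈ F, (t.totient : ℝ)⁻¹ ≤ τ := by
  obtain ⟨s, hs⟩ := summable_iff_vanishing_norm.1 (Tw_summable n0) τ hτ
  refine ⟨max (s.sup id) (max n0 2), by simp, by simp, fun F hF => ?_⟩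
  have hd : Disjoint F s := by
    rw [Finset.disjoint_left]
    intro t ht hts
    have h1 := (hF t ht).1
    have h2 : t ≤ s.sup id := Finset.le_sup (f := id) hts
    have := le_max_left (s.sup id) (max n0 2)
    omega
  have := hs F hd
  rw [sum_congr rfl fun t ht => if_pos (hF t ht).2] at this
  exact (le_abs_self _).trans this.le

theorem step (n0 : ℕ) (hn0 : 0 < n0) (hev : 2 ∣ n0) :
    ∃ n : ℕ, 0 < n ∧ omegaStar n = omegaStar n0 + 1 := by
  by_contra hcon
  have hno : ∀ n : ℕ, 0 < n → omegaStar n ≠ omegaStar n0 + 1 := by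
    intro n hn h; exact hcon ⟨n, hn, h⟩
  have hlog2 : 0 < Real.log 2 := Real.log_pos (by norm_num)
  obtain ⟨E0, hE0⟩ := exists_nat_gt (73728 * (n0:ℝ)^3 * 32 / (Real.log 2)^2)
  obtain ⟨E, hE⟩ : ∃ E, E = max E0 28 := ⟨_, rfl⟩
  have hE28 : 28 ≤ E := hE ▸ le_max_right _ _
  have hE1 : 73728 * (n0:ℝ)^3 * 32 / (Real.log 2)^2 < E :=
    lt_of_lt_of_le hE0 (by exact_mod_cast hE ▸ le_max_left _ _)
  have hEr : (0:ℝ) < E := by exact_mod_cast (by omega : 0 < E)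
  obtain ⟨T, hT, hT2, hτ⟩ := exists_tail n0 (Real.log 2 / (256 * E)) (by positivity)
  obtain ⟨c, hc, hac⟩ := exists_c n0 T hev
  obtain ⟨Q, hQ⟩ : ∃ Q, Q = Nat.factorial T := ⟨_, rfl⟩
  have hQ0 : 0 < Q := hQ ▸ Nat.factorial_pos T
  rw [← hQ] at hc hac
  have ham : Nat.Coprime (n0 * c + 1) (n0 * Q) := by
    refine Nat.Coprime.mul_right ?_ hac
    simp
  have hφ : (0:ℝ) < (n0 * Q).totient := by exact_mod_cast Nat.totient_pos.2 (by positivity)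
  have hlim : Tendsto (fun i : ℕ => ((i / E : ℕ):ℝ)^1 / (2:ℝ)^(i / E)) atTop (nhds 0) :=
    (tendsto_pow_const_div_const_pow_of_one_lt 1 (by norm_num : (1:ℝ) < 2)).comp
      (Nat.tendsto_div_const_atTop (by omega : E ≠ 0))
  have hκ : (0:ℝ) < 1 / (32 * E * (4 + 3 * n0^2) * (n0 * Q).totient) := by positivity
  have hev1 := hlim.eventually (gt_mem_nhds hκ)
  have hev2 := (Nat.tendsto_div_const_atTop (by omega : E ≠ 0)).eventually (eventually_ge_atTop (2 * n0 * Q))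
  obtain ⟨i0, hi0⟩ := (hev1.and hev2).exists_forall_of_atTop
  refine density_contra (n0 * Q) (n0 * c + 1) i0 (by positivity) ham fun i hi => ?_
  obtain ⟨h1, h2⟩ := hi0 i hi
  refine (main_count n0 T Q c E i (i / E) _ hn0 hT hT2 hQ hc hno hE28 rfl h2 hτ).trans ?_
  have hu0 : 0 < i / E := lt_of_lt_of_le (by positivity) h2
  have hi0 : 0 < i := Nat.pos_of_ne_zero (by rintro rfl; simp at hu0)
  have hir : (0:ℝ) < i := by exact_mod_cast hi0
  have hiu : (i:ℝ) ≤ 2 * E * (i / E : ℕ) := by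
    have h3 : i < E * (i / E + 1) := Nat.lt_mul_div_succ i (by omega)
    have h4 : E * 1 ≤ E * (i / E) := Nat.mul_le_mul_left _ hu0
    have h5 : E * (i / E + 1) = E * (i / E) + E := by ring
    have h6 : 2 * E * (i / E) = E * (i / E) + E * (i / E) := by ring
    have : i ≤ 2 * E * (i / E) := by omega
    exact_mod_cast this
  generalize i / E = u at *
  have e1 : 8 * (E:ℝ) * (Real.log 2 / (256 * E)) / Real.log 2 = 1/32 := by field_simp; norm_num
  have e2 : 73728 * (n0:ℝ)^3 / (E * (Real.log 2)^2) ≤ 1/32 := by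
    rw [div_lt_iff₀ (by positivity)] at hE1
    rw [div_le_div_iff₀ (by positivity) (by norm_num)]
    linarith
  have e3 : (4 + 3 * (n0:ℝ)^2) * (2^i / 2^u) ≤ 1/16 * (2^i / (i * (n0 * Q).totient)) := by
    rw [pow_one, div_lt_div_iff₀ (by positivity) (by positivity)] at h1
    rw [← mul_div_assoc, ← mul_div_assoc, div_le_div_iff₀ (by positivity) (by positivity)]
    have h3 : (i:ℝ) * (16 * (4 + 3 * (n0:ℝ)^2) * (n0 * Q).totient) ≤ 2^u := by
      calc _ ≤ (2 * E * u) * (16 * (4 + 3 * (n0:ℝ)^2) * (n0 * Q).totient) := by gcongr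
        _ = u * (32 * E * (4 + 3 * n0^2) * (n0 * Q).totient) := by ring
        _ ≤ _ := by linarith
    calc (4 + 3 * (n0:ℝ)^2) * 2^i * (i * (n0 * Q).totient)
        = 1/16 * 2^i * ((i:ℝ) * (16 * (4 + 3 * (n0:ℝ)^2) * (n0 * Q).totient)) := by ring
      _ ≤ _ := by gcongr
  rw [e1]
  have hpos : (0:ℝ) < 2^i / (i * (n0 * Q).totient) := by positivity
  nlinarith

theorem omegaStar_odd (n : ℕ) (hn : ¬ 2 ∣ n) : omegaStar n ≤ 1 := by
  unfold omegaStar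
  have : n.divisors.filter (fun d => Nat.Prime (d + 1)) ⊆ {1} := by
    intro d hd
    rw [mem_filter, Nat.mem_divisors] at hd
    rw [mem_singleton]
    rcases hd.2.eq_two_or_odd with h | h
    · omega
    · exact absurd ((Nat.dvd_of_mod_eq_zero (by omega : d % 2 = 0)).trans hd.1.1) hn
  simpa using card_le_card this

end Contra

theorem level_set_nonempty (k : ℕ) (hk : 0 < k) :
    ∃ n : ℕ, 0 < n ∧ omegaStar n = k := by
  induction k with
  | zero => omega
  | succ k ih =>
    rcases Nat.lt_or_ge 1 k with h | h
    · obtain ⟨n, hn, hnk⟩ := ih (by omega)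
      have hev : 2 ∣ n := by
        by_contra hc
        have := omegaStar_odd n hc
        omega
      obtain ⟨n', h1, h2⟩ := step n hn hev
      exact ⟨n', h1, by rw [h2, hnk]⟩
    · interval_cases k
      · exact ⟨1, by norm_num, by decide⟩
      · exact ⟨2, by norm_num, by decide⟩
end
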